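/- arXiv:1306.3841 — 3 statements merged into one kernel-verified Lean document; each statement's English description precedes it below -/
import Mathlib

section
/- Let d ≥ 2 and let E⁽¹⁾,…,E⁽ᵈ⁾ be independent one-dimensional fractal percolations with common scale M ≥ 2 and probabilities p₁,…,p_d satisfying p_i > M^{-1} for all i and p₁·p₂·⋯·p_d > M^{-(d−1)}. Then for every vector a = (a₁,…,a_d) ∈ ℝ^d with a_i ≠ 0 for all i, the algebraic sum a₁E⁽¹⁾ + a₂E⁽²⁾ + ⋯ + a_dE⁽ᵈ⁾ = { Σ_{i=1}^d a_i e_i : e_i ∈ E⁽ⁱ⁾ } contains a nonempty open interval, almost surely conditioned on the event that all E⁽ⁱ⁾ are nonempty. -/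
open MeasureTheory Set ENNReal ProbabilityTheory Real

noncomputable section

/-- The alphabet indexing the `M^d` subcubes of a cube in `[0,1]^d`. -/
abbrev Alpha (d M : ℕ) : Type := Fin d → Fin M

/-- Finite nonempty words over the alphabet; they index `M`-adic cubes. -/
abbrev Word (d M : ℕ) : Type := {w : List (Alpha d M) // w ≠ []}

/-- The sample space: `{0,1}`-labelings of all finite nonempty words. -/
abbrev PercSpace (d M : ℕ) : Type := Word d M → Bool

/-- `P` is the product measure making the labels i.i.d. Bernoulli(`p`). -/
def IsBernoulliPerc (d M : ℕ) (p : ℝ) (P : Measure (PercSpace d M)) : Prop :=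
  IsProbabilityMeasure P ∧
    ∀ (S : Finset (Word d M)) (b : Word d M → Bool),
      P {ω | ∀ w ∈ S, ω w = b w} =
        ∏ w ∈ S, if b w then ENNReal.ofReal p else ENNReal.ofReal (1 - p)

/-- A level-`w.length` cube is retained iff its word and every nonempty prefix
of its word carry label 1. -/
def Retained (d M : ℕ) (ω : PercSpace d M) (w : List (Alpha d M)) : Prop :=
  ∀ (u : List (Alpha d M)) (hu : u ≠ []), u <+: w → ω ⟨u, hu⟩ = true

/-- The `i`-th coordinate of the lower-left corner of the cube indexed by `w`. -/
def wordBase (d M : ℕ) (w : List (Alpha d M)) (i : Fin d) : ℝ :=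
  ∑ j : Fin w.length, ((w.get j) i : ℝ) * (M : ℝ) ^ (-(j : ℤ) - 1)

/-- The closed `M`-adic cube of level `w.length` indexed by the word `w`. -/
def wordCube (d M : ℕ) (w : List (Alpha d M)) : Set (EuclideanSpace ℝ (Fin d)) :=
  {x | ∀ i, wordBase d M w i ≤ x i ∧ x i ≤ wordBase d M w i + (M : ℝ) ^ (-(w.length : ℤ))}

/-- `E_n`, the union of the retained level-`n` cubes. -/
def approx (d M : ℕ) (ω : PercSpace d M) (n : ℕ) : Set (EuclideanSpace ℝ (Fin d)) :=
  ⋃ w ∈ {w : List (Alpha d M) | w.length = n ∧ Retained d M ω w}, wordCube d M w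

/-- The fractal percolation set `E = ⋂_{n ≥ 1} E_n`. -/
def percLimit (d M : ℕ) (ω : PercSpace d M) : Set (EuclideanSpace ℝ (Fin d)) :=
  ⋂ n ∈ {n : ℕ | 1 ≤ n}, approx d M ω n

/-- Words indexing `M`-adic subintervals of `[0,1]`. -/
abbrev Word1 (M : ℕ) : Type := {w : List (Fin M) // w ≠ []}

/-- Sample space of a one-dimensional fractal percolation. -/
abbrev Perc1 (M : ℕ) : Type := Word1 M → Bool

/-- `P` is the joint distribution of `d` independent one-dimensional fractal
percolations with probabilities `p i`: all labels are independent, and the labels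
of the `i`-th percolation are Bernoulli(`p i`). -/
def IsIndepBernoulli1 (d M : ℕ) (p : Fin d → ℝ) (P : Measure (Fin d → Perc1 M)) : Prop :=
  IsProbabilityMeasure P ∧
    ∀ (S : Finset (Fin d × Word1 M)) (b : Fin d × Word1 M → Bool),
      P {ω | ∀ q ∈ S, ω q.1 q.2 = b q} =
        ∏ q ∈ S, if b q then ENNReal.ofReal (p q.1) else ENNReal.ofReal (1 - p q.1)

/-- A level-`w.length` interval is retained iff its word and every nonempty
prefix of its word carry label 1. -/
def Retained1 (M : ℕ) (ω : Perc1 M) (w : List (Fin M)) : Prop :=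
  ∀ (u : List (Fin M)) (hu : u ≠ []), u <+: w → ω ⟨u, hu⟩ = true

/-- Left endpoint of the `M`-adic interval indexed by the word `w`. -/
def base1 (M : ℕ) (w : List (Fin M)) : ℝ :=
  ∑ j : Fin w.length, (w.get j : ℝ) * (M : ℝ) ^ (-(j : ℤ) - 1)

/-- The closed `M`-adic interval of level `w.length` indexed by `w`. -/
def interval1 (M : ℕ) (w : List (Fin M)) : Set ℝ :=
  Icc (base1 M w) (base1 M w + (M : ℝ) ^ (-(w.length : ℤ)))

/-- `E_n`, the union of the retained level-`n` intervals. -/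
def approx1 (M : ℕ) (ω : Perc1 M) (n : ℕ) : Set ℝ :=
  ⋃ w ∈ {w : List (Fin M) | w.length = n ∧ Retained1 M ω w}, interval1 M w

/-- The one-dimensional fractal percolation set `E = ⋂_{n ≥ 1} E_n`. -/
def limit1 (M : ℕ) (ω : Perc1 M) : Set ℝ :=
  ⋂ n ∈ {n : ℕ | 1 ≤ n}, approx1 M ω n

/-!
The function `p⁻ⁿ` on the retained intervals of level `n` is a random density on the line, and the
convolution `fₙ` of these densities, dilated by the `a i`, vanishes off the weighted sum of the
`n`-th approximations. So it suffices to find an interval on which `fₙ ≠ 0` for all large `n`: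
compactness of the approximations then puts it inside the weighted sum of the limit sets.

Pass from stage `n` to stage `n + 1` one percolation at a time. At a given point, the change in the
value of the convolution is a sum of independent centred labels of level `n + 1`, the `i`-th
percolation's, with weights that depend on the other labels only; the squares of the weights add up
to at most a constant times `(p i * M)⁻ⁿ` times `fₙ` times the supremum of the convolution of the
other factors. Hoeffding's inequality and a union bound over an exponentially fine grid, with a
Lipschitz estimate between grid points, bound the change uniformly. Induction on the number of
summands shows that the supremum of `fₙ` is `O(ρⁿ)` for every `ρ > 1` with `ρ * ∏ i, p i * M > M`,
so under the assumption on the product, `fₙ` converges uniformly at a geometric rate.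

The mass of `fₙ` is a constant times the product of the normalized population sizes of the
percolations. Each of these has a limit, which is almost surely positive on survival: the
probability that it vanishes and the extinction probability are bounded above and below by the
same limit, that of the iterates of the map `x ↦ 1 - (1 - p x) ^ M`. Hence the uniform limit of
`fₙ` is not the zero function, and `fₙ` is eventually positive near a point where it is positive.
-/

namespace FractalPercolation

theorem dependsOn_piecewise_eq {ι : Type*} {X : ι → Type*} {β : Type*} {f : (∀ i, X i) → β}
    {T : Finset ι} [∀ i, Decidable (i ∈ T)] (hf : DependsOn f (T : Set ι)ᶜ) (ω' ω : ∀ i, X i) :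
    f (T.piecewise ω' ω) = f ω :=
  hf fun _ hi => Finset.piecewise_eq_of_notMem T _ _ hi

section ProductMeasure

variable {ι : Type*} {X : ι → Type*} [∀ i, MeasurableSpace (X i)]
  (μ : ∀ i, Measure (X i)) [∀ i, IsProbabilityMeasure (μ i)]

theorem measurePreserving_piecewise_infinitePi (T : Finset ι) [∀ i, Decidable (i ∈ T)] :
    MeasurePreserving (fun z : (∀ i, X i) × (∀ i, X i) => T.piecewise z.1 z.2)
      ((Measure.infinitePi μ).prod (Measure.infinitePi μ)) (Measure.infinitePi μ) := by
  classical
  have hmeas : Measurable fun z : (∀ i, X i) × (∀ i, X i) => T.piecewise z.1 z.2 := by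
    refine measurable_pi_lambda _ fun i => ?_
    by_cases hi : i ∈ T <;> simp only [Finset.piecewise, hi, if_true, if_false] <;> fun_prop
  refine ⟨hmeas, Measure.eq_infinitePi μ fun S t ht => ?_⟩
  have hbox : (fun z : (∀ i, X i) × (∀ i, X i) => T.piecewise z.1 z.2) ⁻¹' (S : Set ι).pi t =
      ((S ∩ T : Finset ι) : Set ι).pi t ×ˢ ((S \ T : Finset ι) : Set ι).pi t := by
    ext z
    simp only [mem_preimage, Set.mem_pi, Finset.mem_coe, Finset.piecewise, mem_prod,
      Finset.mem_inter, Finset.mem_sdiff]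
    grind
  rw [Measure.map_apply hmeas (.pi S.countable_toSet fun i _ => ht i), hbox, Measure.prod_prod,
    Measure.infinitePi_pi _ fun i _ => ht i, Measure.infinitePi_pi _ fun i _ => ht i,
    Finset.prod_inter_mul_prod_sdiff]

/-- Conditioning on the coordinates outside `T`: they stay `ω`, those in `T` are resampled. -/
theorem lintegral_infinitePi_eq_lintegral_piecewise (T : Finset ι) [∀ i, Decidable (i ∈ T)]
    {F : (∀ i, X i) → ℝ≥0∞} (hF : Measurable F) :
    ∫⁻ ω, F ω ∂Measure.infinitePi μ =
      ∫⁻ ω, ∫⁻ ω', F (T.piecewise ω' ω) ∂Measure.infinitePi μ ∂Measure.infinitePi μ := by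
  have hT := measurePreserving_piecewise_infinitePi μ T
  exact (hT.lintegral_comp hF).symm.trans (lintegral_prod_symm' _ (hF.comp hT.measurable))

theorem lintegral_infinitePi_prod_eq (T : Finset ι) (F : ∀ i, X i → (∀ i, X i) → ℝ≥0∞)
    (hF : ∀ i, Measurable fun z : X i × (∀ i, X i) => F i z.1 z.2)
    (hdep : ∀ i ∈ T, ∀ x, DependsOn (F i x) (T : Set ι)ᶜ) :
    ∫⁻ ω, ∏ i ∈ T, F i (ω i) ω ∂Measure.infinitePi μ =
      ∫⁻ ω, ∏ i ∈ T, ∫⁻ x, F i x ω ∂μ i ∂Measure.infinitePi μ := by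
  classical
  have hmeas : Measurable fun ω : ∀ i, X i => ∏ i ∈ T, F i (ω i) ω :=
    Finset.measurable_prod _ fun i _ => (hF i).comp ((measurable_pi_apply i).prodMk measurable_id)
  rw [lintegral_infinitePi_eq_lintegral_piecewise μ T hmeas]
  refine lintegral_congr fun ω => ?_
  have hsection : ∀ i, Measurable fun x => F i x ω := fun i =>
    (hF i).comp (measurable_id.prodMk measurable_const)
  calc ∫⁻ ω', ∏ i ∈ T, F i (T.piecewise ω' ω i) (T.piecewise ω' ω) ∂Measure.infinitePi μ
      = ∫⁻ ω', ∏ i ∈ T, F i (ω' i) ω ∂Measure.infinitePi μ := by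
        refine lintegral_congr fun ω' => Finset.prod_congr rfl fun i hi => ?_
        rw [dependsOn_piecewise_eq (hdep i hi _), Finset.piecewise_eq_of_mem _ _ _ hi]
    _ = ∏ i ∈ T, ∫⁻ ω', F i (ω' i) ω ∂Measure.infinitePi μ :=
        lintegral_prod_eq_prod_lintegral_of_indepFun T _ (iIndepFun_infinitePi hsection)
          fun i => (hsection i).comp (measurable_pi_apply i)
    _ = ∏ i ∈ T, ∫⁻ x, F i x ω ∂μ i := Finset.prod_congr rfl fun i _ =>
        (measurePreserving_eval_infinitePi μ i).lintegral_comp (hsection i)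

end ProductMeasure

section Deviation

theorem measure_ge_le_exp_of_hasSubgaussianMGF {Ω : Type*} [MeasurableSpace Ω] {P : Measure Ω}
    [IsFiniteMeasure P] {Y : Ω → ℝ} {v : NNReal} (hY : HasSubgaussianMGF Y v P) {lam : ℝ}
    (hlam : 0 ≤ lam) (s : ℝ) : P.real {ω | lam * v / 2 + s ≤ Y ω} ≤ exp (-(lam * s)) :=
  calc P.real {ω | lam * v / 2 + s ≤ Y ω}
      ≤ exp (-lam * (lam * v / 2 + s)) * mgf Y P lam :=
        measure_ge_le_exp_mul_mgf _ hlam (hY.integrable_exp_mul lam)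
    _ ≤ exp (-lam * (lam * v / 2 + s)) * exp (v * lam ^ 2 / 2) := by
        gcongr; exact hY.mgf_le lam
    _ = exp (-(lam * s)) := by rw [← exp_add]; ring_nf

theorem measure_abs_ge_le_exp_of_hasSubgaussianMGF {Ω : Type*} [MeasurableSpace Ω]
    {P : Measure Ω} [IsFiniteMeasure P] {Y : Ω → ℝ} {v : NNReal} (hY : HasSubgaussianMGF Y v P)
    {lam : ℝ} (hlam : 0 ≤ lam) (s : ℝ) :
    P {ω | lam * v / 2 + s ≤ |Y ω|} ≤ 2 * ENNReal.ofReal (exp (-(lam * s))) := by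
  have hone : ∀ {Y' : Ω → ℝ}, HasSubgaussianMGF Y' v P →
      P {ω | lam * v / 2 + s ≤ Y' ω} ≤ ENNReal.ofReal (exp (-(lam * s))) := fun h => by
    rw [← ofReal_measureReal]
    exact ENNReal.ofReal_le_ofReal (measure_ge_le_exp_of_hasSubgaussianMGF h hlam s)
  calc P {ω | lam * v / 2 + s ≤ |Y ω|}
      ≤ P ({ω | lam * v / 2 + s ≤ Y ω} ∪ {ω | lam * v / 2 + s ≤ (-Y) ω}) :=
        measure_mono fun ω (hω : _ ≤ |Y ω|) => le_abs.1 hω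
    _ ≤ _ := (measure_union_le _ _).trans
        ((add_le_add (hone hY) (hone hY.neg)).trans_eq (two_mul _).symm)

variable {ι : Type*} {X : ι → Type*} [∀ i, MeasurableSpace (X i)]
  {μ : ∀ i, Measure (X i)} [∀ i, IsProbabilityMeasure (μ i)] {η : ∀ i, X i → ℝ} {a : ι → ℝ} {K : ℝ}

theorem measure_abs_sum_const_mul_ge_le (hη : ∀ i, Measurable (η i))
    (hbdd : ∀ i x, η i x ∈ Icc (a i) (a i + K)) (hmean : ∀ i, ∫ x, η i x ∂μ i = 0) (T : Finset ι)
    (c : ι → ℝ) {lam : ℝ} (hlam : 0 ≤ lam) (s : ℝ) :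
    Measure.infinitePi μ {ω | lam * K ^ 2 / 8 * ∑ i ∈ T, c i ^ 2 + s ≤
      |∑ i ∈ T, c i * η i (ω i)|} ≤ 2 * ENNReal.ofReal (exp (-(lam * s))) := by
  have hlabel : ∀ i, HasSubgaussianMGF (fun ω : ∀ i, X i => η i (ω i)) ((‖K‖₊ / 2) ^ 2)
      (Measure.infinitePi μ) := fun i => by
    have hmean' : ∫ ω, η i (ω i) ∂Measure.infinitePi μ = 0 := by
      rw [← hmean i, ← (measurePreserving_eval_infinitePi μ i).map_eq]
      exact (integral_map (measurable_pi_apply i).aemeasurable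
        (hη i).aestronglyMeasurable).symm
    simpa [Function.comp_def] using hasSubgaussianMGF_of_mem_Icc_of_integral_eq_zero
      ((hη i).comp (measurable_pi_apply i)).aemeasurable
      (ae_of_all (Measure.infinitePi μ) fun ω => hbdd i (ω i)) hmean'
  have hterm : ∀ i, HasSubgaussianMGF (fun ω : ∀ i, X i => c i * η i (ω i))
      ((‖c i‖₊ * (‖K‖₊ / 2)) ^ 2) (Measure.infinitePi μ) := fun i => by
    convert (hlabel i).const_mul (c i) using 1
    rw [mul_pow]
    congr 1
    exact NNReal.eq (sq_abs _)
  have hsum := HasSubgaussianMGF.sum_of_iIndepFun (s := T)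
    (iIndepFun_infinitePi (P := μ) (X := fun i x => c i * η i x) fun i => (hη i).const_mul _)
    fun i _ => hterm i
  convert measure_abs_ge_le_exp_of_hasSubgaussianMGF hsum hlam s using 5
  simp only [NNReal.coe_sum, NNReal.coe_pow, NNReal.coe_mul, NNReal.coe_div, NNReal.coe_ofNat,
    coe_nnnorm, norm_eq_abs, mul_pow, div_pow, sq_abs, ← Finset.sum_mul]
  ring

/-- The weights of the labels in `T` only depend on the labels outside `T`, so they are constants
once the latter are fixed. -/
theorem measure_abs_sum_mul_ge_le (hη : ∀ i, Measurable (η i))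
    (hbdd : ∀ i x, η i x ∈ Icc (a i) (a i + K)) (hmean : ∀ i, ∫ x, η i x ∂μ i = 0) (T : Finset ι)
    {c : ι → (∀ i, X i) → ℝ} (hc : ∀ i ∈ T, Measurable (c i))
    (hdep : ∀ i ∈ T, DependsOn (c i) (T : Set ι)ᶜ) {lam : ℝ} (hlam : 0 ≤ lam) (s : ℝ) :
    Measure.infinitePi μ {ω | lam * K ^ 2 / 8 * ∑ i ∈ T, c i ω ^ 2 + s ≤
      |∑ i ∈ T, c i ω * η i (ω i)|} ≤ 2 * ENNReal.ofReal (exp (-(lam * s))) := by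
  classical
  set A := {ω | lam * K ^ 2 / 8 * ∑ i ∈ T, c i ω ^ 2 + s ≤ |∑ i ∈ T, c i ω * η i (ω i)|} with hAdef
  have hA : MeasurableSet A := measurableSet_le
    (((Finset.measurable_fun_sum T fun i hi => (hc i hi).pow_const 2).const_mul _).add_const s)
    (measurable_abs.comp <| Finset.measurable_fun_sum T fun i hi =>
      (hc i hi).mul ((hη i).comp (measurable_pi_apply i)))
  have hfreeze : ∀ ω, {ω' | T.piecewise ω' ω ∈ A} = {ω' | lam * K ^ 2 / 8 * ∑ i ∈ T, c i ω ^ 2 + s ≤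
      |∑ i ∈ T, c i ω * η i (ω' i)|} := fun ω => by
    ext ω'
    have hweight : ∀ i ∈ T, c i (T.piecewise ω' ω) = c i ω := fun i hi =>
      dependsOn_piecewise_eq (hdep i hi) ω' ω
    have hlabel : ∀ i ∈ T, T.piecewise ω' ω i = ω' i := fun i hi =>
      Finset.piecewise_eq_of_mem _ _ _ hi
    simp only [hAdef, mem_ofPred_eq]
    rw [Finset.sum_congr rfl fun i hi => by rw [hweight i hi],
      Finset.sum_congr (f := fun i => _ * η i _) rfl fun i hi => by rw [hweight i hi, hlabel i hi]]
  calc Measure.infinitePi μ A = ∫⁻ ω, A.indicator 1 ω ∂Measure.infinitePi μ :=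
        (lintegral_indicator_one hA).symm
    _ = ∫⁻ ω, Measure.infinitePi μ {ω' | T.piecewise ω' ω ∈ A} ∂Measure.infinitePi μ := by
        rw [lintegral_infinitePi_eq_lintegral_piecewise μ T (measurable_one.indicator hA)]
        refine lintegral_congr fun ω => ?_
        exact lintegral_indicator_one (hA.preimage
          ((measurePreserving_piecewise_infinitePi μ T).measurable.comp
            (measurable_id.prodMk measurable_const)))
    _ ≤ ∫⁻ _, 2 * ENNReal.ofReal (exp (-(lam * s))) ∂Measure.infinitePi μ :=
        lintegral_mono fun ω => by
          rw [hfreeze]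
          exact measure_abs_sum_const_mul_ge_le hη hbdd hmean T (fun i => c i ω) hlam s
    _ = 2 * ENNReal.ofReal (exp (-(lam * s))) := by simp

theorem summable_pow_mul_exp_neg_pow {r : ℝ} (hr : 1 < r) {κ : ℝ} (hκ : 0 < κ) :
    Summable fun n : ℕ => κ ^ n * exp (-(r ^ n)) := by
  have : 0 < r := by linarith
  obtain ⟨j, hj⟩ := pow_unbounded_of_one_lt (2 * κ) hr
  have hratio : κ / r ^ j ≤ 1 / 2 := by
    rw [div_le_div_iff₀ (by positivity) two_pos]
    linarith
  refine .of_nonneg_of_le (fun n => by positivity) (fun n => ?_)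
    (summable_geometric_two.mul_left (j.factorial : ℝ))
  calc κ ^ n * exp (-(r ^ n)) ≤ κ ^ n * (j.factorial / (r ^ n) ^ j) := by
        gcongr
        rw [exp_neg, ← inv_div]
        exact inv_anti₀ (by positivity) (pow_div_factorial_le_exp (r ^ n) (by positivity) j)
    _ = j.factorial * (κ / r ^ j) ^ n := by
        rw [div_pow, ← pow_mul, ← pow_mul, mul_comm n j]; ring
    _ ≤ j.factorial * (1 / 2) ^ n := by gcongr

theorem ae_eventually_abs_sum_mul_le {κ' : Type*} (hη : ∀ i, Measurable (η i))
    (hbdd : ∀ i x, η i x ∈ Icc (a i) (a i + K)) (hmean : ∀ i, ∫ x, η i x ∂μ i = 0)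
    (T : ℕ → Finset ι) (J : ℕ → Finset κ') {c : ℕ → κ' → ι → (∀ i, X i) → ℝ}
    (hc : ∀ n k, ∀ i ∈ T n, Measurable (c n k i))
    (hdep : ∀ n k, ∀ i ∈ T n, DependsOn (c n k i) (T n : Set ι)ᶜ)
    {θ r κ C : ℝ} (hθ : 0 < θ) (hr : 1 < r) (hκ : 0 < κ)
    (hJ : ∀ n, ((J n).card : ℝ) ≤ C * κ ^ n) :
    ∀ᵐ ω ∂Measure.infinitePi μ, ∀ᶠ n in Filter.atTop, ∀ k ∈ J n,
      |∑ i ∈ T n, c n k i ω * η i (ω i)| ≤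
        ((θ * r)⁻¹) ^ n * K ^ 2 / 8 * ∑ i ∈ T n, c n k i ω ^ 2 + (θ * r ^ 2) ^ n := by
  have : 0 < r := by linarith
  set B : ℕ → κ' → Set (∀ i, X i) := fun n k => {ω | ((θ * r)⁻¹) ^ n * K ^ 2 / 8 *
    ∑ i ∈ T n, c n k i ω ^ 2 + (θ * r ^ 2) ^ n ≤ |∑ i ∈ T n, c n k i ω * η i (ω i)|}
  have hexponent : ∀ n : ℕ, (θ * r)⁻¹ ^ n * (θ * r ^ 2) ^ n = r ^ n := fun n => by
    rw [← mul_pow]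
    congr 1
    field_simp
  have hbad : ∀ n, Measure.infinitePi μ (⋃ k ∈ J n, B n k) ≤
      ENNReal.ofReal (2 * C * (κ ^ n * exp (-(r ^ n)))) := fun n =>
    calc Measure.infinitePi μ (⋃ k ∈ J n, B n k)
        ≤ ∑ k ∈ J n, Measure.infinitePi μ (B n k) := measure_biUnion_finset_le _ _
      _ ≤ ∑ k ∈ J n, 2 * ENNReal.ofReal (exp (-(r ^ n))) := Finset.sum_le_sum fun k _ => by
          rw [← hexponent]
          exact measure_abs_sum_mul_ge_le hη hbdd hmean (T n) (hc n k) (hdep n k)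
            (by positivity) _
      _ = ENNReal.ofReal ((J n).card * (2 * exp (-(r ^ n)))) := by
          rw [Finset.sum_const, nsmul_eq_mul, ENNReal.ofReal_mul (Nat.cast_nonneg _),
            ENNReal.ofReal_mul zero_le_two, ENNReal.ofReal_natCast, ENNReal.ofReal_ofNat]
      _ ≤ ENNReal.ofReal (2 * C * (κ ^ n * exp (-(r ^ n)))) := by
          refine ENNReal.ofReal_le_ofReal
            ((mul_le_mul_of_nonneg_right (hJ n) (by positivity)).trans_eq ?_)
          ring
  have hsummable : ∑' n, Measure.infinitePi μ (⋃ k ∈ J n, B n k) ≠ ∞ :=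
    ne_top_of_le_ne_top
      ((summable_pow_mul_exp_neg_pow hr hκ).mul_left (2 * C)).tsum_ofReal_ne_top
      (ENNReal.tsum_le_tsum hbad)
  filter_upwards [ae_eventually_notMem hsummable] with ω hω
  filter_upwards [hω] with n hn k hk
  by_contra hlt
  exact hn (mem_biUnion hk (not_le.1 hlt).le)

end Deviation

section Words

variable {M : ℕ}

/-- The word `wj`, as the index of a label. -/
def child (w : List (Fin M)) (j : Fin M) : Word1 M := ⟨w ++ [j], by simp⟩

theorem child_injective :
    Function.Injective fun q : List (Fin M) × Fin M => child q.1 q.2 := fun q q' h => by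
  simpa [Prod.ext_iff] using List.append_inj' (Subtype.ext_iff.1 h) rfl

/-- The words of length `n`; they index the `M`-adic intervals of level `n`. -/
def levelWords (M : ℕ) : ℕ → Finset (List (Fin M))
  | 0 => {[]}
  | n + 1 => ((levelWords M n ×ˢ Finset.univ).map ⟨_, child_injective⟩).map (.subtype _)

/-- The labels of generation `n + 1`, as words of length `n + 1`. -/
def generation (M n : ℕ) : Finset (Word1 M) :=
  (levelWords M n ×ˢ Finset.univ).map ⟨_, child_injective⟩

theorem sum_generation {β : Type*} [AddCommMonoid β] (n : ℕ) (F : Word1 M → β) :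
    ∑ v ∈ generation M n, F v = ∑ w ∈ levelWords M n, ∑ j, F (child w j) := by
  rw [generation, Finset.sum_map, Finset.sum_product]
  rfl

theorem sum_levelWords_succ {β : Type*} [AddCommMonoid β] (n : ℕ) (F : List (Fin M) → β) :
    ∑ w ∈ levelWords M (n + 1), F w = ∑ w ∈ levelWords M n, ∑ j, F (w ++ [j]) := by
  rw [levelWords, Finset.sum_map]
  exact sum_generation n fun v => F v.1

@[simp]
theorem mem_levelWords {n : ℕ} {w : List (Fin M)} : w ∈ levelWords M n ↔ w.length = n := by
  induction n generalizing w with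
  | zero => simp [levelWords]
  | succ n ih =>
    rcases List.eq_nil_or_concat w with rfl | ⟨u, j, rfl⟩ <;>
      simp [levelWords, ih, ← Subtype.val_inj, child, ← and_assoc]

theorem card_levelWords (n : ℕ) : (levelWords M n).card = M ^ n := by
  induction n with
  | zero => simp [levelWords]
  | succ n ih => simp [levelWords, ih, pow_succ]

theorem mem_generation {n : ℕ} {v : Word1 M} : v ∈ generation M n ↔ v.1.length = n + 1 := by
  rw [← mem_levelWords, levelWords, Finset.mem_map]
  exact ⟨fun h => ⟨v, h, rfl⟩, fun ⟨v', h, hv⟩ => Subtype.val_injective hv ▸ h⟩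

end Words

section Cells

theorem sum_range_indicator_Ico {β : Type*} [AddCommMonoid β] {u : ℕ → ℝ} (hu : Monotone u)
    (F : ℝ → β) (m : ℕ) (x : ℝ) :
    ∑ j ∈ Finset.range m, (Ico (u j) (u (j + 1))).indicator F x =
      (Ico (u 0) (u m)).indicator F x := by
  induction m with
  | zero => simp
  | succ m ih =>
    rw [Finset.sum_range_succ, ih,
      ← Ico_union_Ico_eq_Ico (hu (Nat.zero_le m)) (hu (Nat.le_succ m)),
      indicator_union_of_disjoint (Ico_disjoint_Ico.2 (by simp))]

theorem volume_Ico_diff_Ico_add_le (u v h : ℝ) :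
    volume (Ico u v \ Ico (u + h) (v + h)) ≤ ENNReal.ofReal |h| := by
  have hsub : Ico u v \ Ico (u + h) (v + h) ⊆ Ico u (u + h) ∪ Ico (v + h) v := fun x hx => by
    simp only [mem_sdiff, mem_Ico, mem_union] at hx ⊢
    grind
  refine (measure_mono hsub).trans ((measure_union_le _ _).trans_eq ?_)
  rw [volume_Ico, volume_Ico]
  rcases le_total 0 h with h0 | h0 <;> simp [h0, abs_of_nonneg, abs_of_nonpos]

variable {M : ℕ}

/-- The half-open `M`-adic interval indexed by the word `w`; those of a given level partition
`[0, 1)`. -/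
def cell (M : ℕ) (w : List (Fin M)) : Set ℝ :=
  Ico (base1 M w) (base1 M w + (M : ℝ) ^ (-(w.length : ℤ)))

theorem cell_subset_interval1 (w : List (Fin M)) : cell M w ⊆ interval1 M w :=
  Ico_subset_Icc_self

theorem measurableSet_cell (w : List (Fin M)) : MeasurableSet (cell M w) := measurableSet_Ico

theorem volume_cell (w : List (Fin M)) :
    volume (cell M w) = ENNReal.ofReal (M : ℝ)⁻¹ ^ w.length := by
  rw [cell, volume_Ico, add_sub_cancel_left, zpow_neg, zpow_natCast, ← inv_pow,
    ENNReal.ofReal_pow (by positivity)]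

theorem base1_append (w : List (Fin M)) (j : Fin M) :
    base1 M (w ++ [j]) = base1 M w + j * (M : ℝ) ^ (-(w.length : ℤ) - 1) := by
  have hbase : ∀ u : List (Fin M), base1 M u = ∑ k ∈ Finset.range u.length,
      ((u[k]?.map Fin.val).getD 0 : ℝ) * (M : ℝ) ^ (-(k : ℤ) - 1) := fun u => by
    simp [base1, Finset.sum_range]
  rw [hbase, hbase, List.length_append, List.length_singleton, Finset.sum_range_succ]
  congr 1
  · refine Finset.sum_congr rfl fun k hk => ?_
    rw [List.getElem?_append_left (Finset.mem_range.1 hk)]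
  · simp

theorem zpow_neg_eq_mul_zpow_sub_one [NeZero M] (n : ℤ) :
    (M : ℝ) ^ (-n) = M * (M : ℝ) ^ (-n - 1) := by
  have hM : (M : ℝ) ≠ 0 := NeZero.ne _
  rw [zpow_sub₀ hM, zpow_one, mul_div_cancel₀ _ hM]

theorem interval1_append_subset [NeZero M] (w : List (Fin M)) (j : Fin M) :
    interval1 M (w ++ [j]) ⊆ interval1 M w := by
  have hj : ((j : ℕ) + 1 : ℝ) ≤ M := by exact_mod_cast j.2
  have hj' := mul_le_mul_of_nonneg_right hj
    (by positivity : 0 ≤ (M : ℝ) ^ (-(w.length : ℤ) - 1))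
  refine Icc_subset_Icc ?_ ?_
  · rw [base1_append]
    exact le_add_of_nonneg_right (by positivity)
  · rw [base1_append, List.length_append, List.length_singleton, Nat.cast_add, Nat.cast_one,
      neg_add, ← sub_eq_add_neg, zpow_neg_eq_mul_zpow_sub_one (w.length : ℤ)]
    linarith

theorem sum_indicator_cell_append [NeZero M] (w : List (Fin M)) (x : ℝ) :
    ∑ j, (cell M (w ++ [j])).indicator (1 : ℝ → ℝ≥0∞) x = (cell M w).indicator 1 x := by
  set h : ℝ := (M : ℝ) ^ (-(w.length : ℤ) - 1) with hh
  have hmono : Monotone fun j : ℕ => base1 M w + j * h := fun i j hij => by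
    dsimp only
    gcongr
  have hlength : (M : ℝ) ^ (-(w.length : ℤ)) = M * h := zpow_neg_eq_mul_zpow_sub_one _
  have hchild : ∀ j : Fin M, cell M (w ++ [j]) =
      Ico (base1 M w + (j : ℕ) * h) (base1 M w + ((j : ℕ) + 1 : ℕ) * h) := fun j => by
    rw [cell, base1_append, List.length_append, List.length_singleton, Nat.cast_add, Nat.cast_one,
      neg_add, ← sub_eq_add_neg, ← hh]
    push_cast
    ring_nf
  calc ∑ j, (cell M (w ++ [j])).indicator (1 : ℝ → ℝ≥0∞) x
      = ∑ j ∈ Finset.range M,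
          (Ico (base1 M w + j * h) (base1 M w + (j + 1 : ℕ) * h)).indicator 1 x := by
        simp only [hchild, Finset.sum_range]
    _ = (Ico (base1 M w + (0 : ℕ) * h) (base1 M w + M * h)).indicator 1 x :=
        sum_range_indicator_Ico hmono 1 M x
    _ = (cell M w).indicator 1 x := by rw [cell, hlength, Nat.cast_zero, zero_mul, add_zero]

end Cells

section Density

variable {M : ℕ} {ω ω' : Perc1 M} {n : ℕ} {p : ℝ} {x : ℝ}

theorem retained1_append_iff {w : List (Fin M)} {j : Fin M} :
    Retained1 M ω (w ++ [j]) ↔ Retained1 M ω w ∧ ω (child w j) = true := by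
  simp only [Retained1, List.prefix_concat_iff, child]
  refine ⟨fun h => ⟨fun u hu hw => h u hu (.inr hw), h _ _ (.inl rfl)⟩, ?_⟩
  rintro ⟨h, hj⟩ u hu (rfl | hw)
  exacts [hj, h u hu hw]

theorem retained1_congr {w : List (Fin M)} (h : ∀ v : Word1 M, v.1.length ≤ w.length → ω v = ω' v) :
    Retained1 M ω w ↔ Retained1 M ω' w :=
  forall_congr' fun u => forall_congr' fun hu => forall_congr' fun hw => by
    rw [h ⟨u, hu⟩ hw.length_le]

open Classical in
/-- The words indexing the retained intervals of level `n`. -/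
def alive (ω : Perc1 M) (n : ℕ) : Finset (List (Fin M)) :=
  {w ∈ levelWords M n | Retained1 M ω w}

theorem mem_alive {w : List (Fin M)} : w ∈ alive ω n ↔ w.length = n ∧ Retained1 M ω w := by
  simp [alive]

theorem alive_congr (h : ∀ v : Word1 M, v.1.length ≤ n → ω v = ω' v) : alive ω n = alive ω' n := by
  ext w
  simp only [mem_alive]
  exact and_congr_right fun hw => retained1_congr (hw ▸ h)

open Classical in
theorem sum_alive {β : Type*} [AddCommMonoid β] (F : List (Fin M) → β) :
    ∑ w ∈ alive ω n, F w = ∑ w ∈ levelWords M n, if Retained1 M ω w then F w else 0 :=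
  Finset.sum_filter _ _

theorem sum_alive_succ {β : Type*} [AddCommMonoid β] (F : List (Fin M) → β) :
    ∑ w ∈ alive ω (n + 1), F w =
      ∑ w ∈ alive ω n, ∑ j, if ω (child w j) then F (w ++ [j]) else 0 := by
  classical
  simp only [sum_alive, sum_levelWords_succ, retained1_append_iff, ite_and]
  refine Finset.sum_congr rfl fun w _ => ?_
  split_ifs <;> simp

/-- A label divided by its mean `p`. -/
def normLabel (p : ℝ) (b : Bool) : ℝ≥0∞ := if b then ENNReal.ofReal p⁻¹ else 0

theorem normLabel_le (p : ℝ) (b : Bool) : normLabel p b ≤ ENNReal.ofReal p⁻¹ := by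
  unfold normLabel
  split_ifs <;> simp

/-- The density of the `n`-th stage of the percolation: `p⁻ⁿ` on the retained intervals of level
`n`, which makes it a martingale in `n`. -/
def density (p : ℝ) (ω : Perc1 M) (n : ℕ) (x : ℝ) : ℝ≥0∞ :=
  ∑ w ∈ alive ω n, ENNReal.ofReal p⁻¹ ^ n * (cell M w).indicator 1 x

open Classical in
/-- The part of `density p ω n` carried by the cell of level `n + 1` indexed by `v`. -/
def childDensity (p : ℝ) (ω : Perc1 M) (n : ℕ) (v : Word1 M) (x : ℝ) : ℝ≥0∞ :=
  if Retained1 M ω v.1.dropLast then ENNReal.ofReal p⁻¹ ^ n * (cell M v.1).indicator 1 x else 0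

theorem density_congr (h : ∀ v : Word1 M, v.1.length ≤ n → ω v = ω' v) :
    density p ω n = density p ω' n := by
  unfold density
  rw [alive_congr h]

theorem childDensity_congr (h : ∀ v : Word1 M, v.1.length ≤ n → ω v = ω' v) {v : Word1 M}
    (hv : v ∈ generation M n) : childDensity p ω n v = childDensity p ω' n v := by
  have hlength : v.1.dropLast.length = n := by simp [mem_generation.1 hv]
  have hret : Retained1 M ω v.1.dropLast ↔ Retained1 M ω' v.1.dropLast :=
    retained1_congr (hlength.symm ▸ h)
  classical exact funext fun x => if_congr hret rfl rfl

theorem measurable_density : Measurable (density p ω n) :=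
  Finset.measurable_fun_sum _ fun w _ =>
    (measurable_one.indicator (measurableSet_cell w)).const_mul _

theorem measurable_childDensity {v : Word1 M} : Measurable (childDensity p ω n v) := by
  unfold childDensity
  split_ifs
  · exact (measurable_one.indicator (measurableSet_cell v.1)).const_mul _
  · exact measurable_const

theorem sum_alive_sum_child {β : Type*} [AddCommMonoid β] (F : Word1 M → β) :
    ∑ w ∈ alive ω n, ∑ j, F (child w j) =
      ∑ v ∈ generation M n, open Classical in if Retained1 M ω v.1.dropLast then F v else 0 := by
  classical
  rw [sum_alive, sum_generation]
  refine Finset.sum_congr rfl fun w _ => ?_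
  simp only [child, List.dropLast_concat]
  split_ifs <;> simp

theorem density_eq_sum_childDensity [NeZero M] :
    density p ω n x = ∑ v ∈ generation M n, childDensity p ω n v x := by
  simp only [density, childDensity, ← sum_alive_sum_child]
  refine Finset.sum_congr rfl fun w _ => ?_
  rw [← sum_indicator_cell_append, Finset.mul_sum]
  rfl

theorem density_succ_eq_sum_childDensity :
    density p ω (n + 1) x =
      ∑ v ∈ generation M n, normLabel p (ω v) * childDensity p ω n v x := by
  simp only [density, childDensity, sum_alive_succ, mul_ite, mul_zero, ← sum_alive_sum_child]
  refine Finset.sum_congr rfl fun w _ => Finset.sum_congr rfl fun j _ => ?_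
  rw [normLabel, pow_succ', ite_mul, zero_mul, mul_assoc]
  rfl

theorem density_succ_le [NeZero M] :
    density p ω (n + 1) x ≤ ENNReal.ofReal p⁻¹ * density p ω n x := by
  rw [density_succ_eq_sum_childDensity, density_eq_sum_childDensity, Finset.mul_sum]
  gcongr
  exact normLabel_le _ _

theorem density_zero : density p ω 0 x = (Ico 0 1).indicator 1 x := by
  have : Retained1 M ω [] := fun u hu hnil => absurd (List.prefix_nil.1 hnil) hu
  simp [density, sum_alive, levelWords, this, cell, base1]

theorem density_le [NeZero M] (p : ℝ) (ω : Perc1 M) (n : ℕ) (x : ℝ) :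
    density p ω n x ≤ ENNReal.ofReal p⁻¹ ^ n := by
  induction n with
  | zero =>
    rw [density_zero, pow_zero]
    exact indicator_le_self' (fun _ _ => zero_le) x
  | succ n ih => exact density_succ_le.trans (by rw [pow_succ']; gcongr)

theorem mem_approx1_of_density_ne_zero (h : density p ω n x ≠ 0) : x ∈ approx1 M ω n := by
  obtain ⟨w, hw, hx⟩ := Finset.exists_ne_zero_of_sum_ne_zero h
  exact mem_biUnion (mem_alive.1 hw) <|
    cell_subset_interval1 w (mem_of_indicator_ne_zero (right_ne_zero_of_mul hx))

theorem approx1_antitone [NeZero M] : Antitone (approx1 M ω) := by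
  refine antitone_nat_of_succ_le fun n => iUnion₂_subset fun v hv => ?_
  obtain ⟨w, j, rfl⟩ : ∃ w j, v = w ++ [j] := by
    rcases List.eq_nil_or_concat v with rfl | ⟨w, j, rfl⟩
    exacts [absurd hv.1 (by simp), ⟨w, j, List.concat_eq_append⟩]
  have hw : w.length = n ∧ Retained1 M ω w :=
    ⟨by simpa using hv.1, (retained1_append_iff.1 hv.2).1⟩
  exact (interval1_append_subset w j).trans (subset_biUnion_of_mem hw)

/-- The population of generation `n`, divided by its mean. -/
def normPopulation (p : ℝ) (ω : Perc1 M) (n : ℕ) : ℝ := (alive ω n).card / (p * M) ^ n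

theorem lintegral_density (hp : 0 ≤ p) :
    ∫⁻ x, density p ω n x = ENNReal.ofReal (normPopulation p ω n) := by
  have hcell : ∀ w ∈ alive ω n, ∫⁻ x, ENNReal.ofReal p⁻¹ ^ n * (cell M w).indicator 1 x =
      ENNReal.ofReal ((p * M) ^ n)⁻¹ := fun w hw => by
    rw [lintegral_const_mul _ (measurable_one.indicator (measurableSet_cell w)),
      lintegral_indicator_one (measurableSet_cell w), volume_cell, (mem_alive.1 hw).1, ← mul_pow,
      ← ENNReal.ofReal_mul (by positivity), ← ENNReal.ofReal_pow (by positivity), ← mul_inv,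
      inv_pow]
  unfold density
  rw [lintegral_finsetSum _ fun w _ =>
      (measurable_one.indicator (measurableSet_cell w)).const_mul _, Finset.sum_congr rfl hcell,
    Finset.sum_const, nsmul_eq_mul, normPopulation, div_eq_mul_inv,
    ENNReal.ofReal_mul (Nat.cast_nonneg _), ENNReal.ofReal_natCast]

theorem lintegral_childDensity_le (p : ℝ) (ω : Perc1 M) (n : ℕ) (v : Word1 M) :
    ∫⁻ x, childDensity p ω n v x ≤
      ENNReal.ofReal p⁻¹ ^ n * ENNReal.ofReal (M : ℝ)⁻¹ ^ v.1.length := by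
  unfold childDensity
  split_ifs
  · rw [lintegral_const_mul _ (measurable_one.indicator (measurableSet_cell _)),
      lintegral_indicator_one (measurableSet_cell _), volume_cell]
  · simp

theorem lintegral_indicator_cell_sub_le (w : List (Fin M)) (h : ℝ) :
    ∫⁻ x, ((cell M w).indicator (1 : ℝ → ℝ≥0∞) x - (cell M w).indicator 1 (x + h)) ≤
      ENNReal.ofReal |h| := by
  have hsub : ∀ x, (cell M w).indicator (1 : ℝ → ℝ≥0∞) x - (cell M w).indicator 1 (x + h) ≤
      (cell M w \ (· + h) ⁻¹' cell M w).indicator 1 x := fun x => by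
    by_cases hx : x ∈ cell M w <;> by_cases hx' : x + h ∈ cell M w <;> simp [hx, hx']
  refine (lintegral_mono hsub).trans ?_
  rw [lintegral_indicator_one ((measurableSet_cell w).diff
    ((measurableSet_cell w).preimage (measurable_add_const h))), cell, preimage_add_const_Ico]
  simpa [sub_eq_add_neg] using volume_Ico_diff_Ico_add_le _ _ (-h)

theorem lintegral_density_sub_le (p : ℝ) (ω : Perc1 M) (n : ℕ) (h : ℝ) :
    ∫⁻ x, (density p ω n x - density p ω n (x + h)) ≤
      (ENNReal.ofReal p⁻¹ * M) ^ n * ENNReal.ofReal |h| := by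
  set δ : List (Fin M) → ℝ → ℝ≥0∞ := fun w x =>
    (cell M w).indicator (1 : ℝ → ℝ≥0∞) x - (cell M w).indicator 1 (x + h)
  have hδ : ∀ w, Measurable (δ w) := fun w =>
    (measurable_one.indicator (measurableSet_cell w)).sub
      ((measurable_one.indicator (measurableSet_cell w)).comp (measurable_add_const h))
  have hsub : ∀ x, density p ω n x - density p ω n (x + h) ≤
      ∑ w ∈ alive ω n, ENNReal.ofReal p⁻¹ ^ n * δ w x := fun x => by
    rw [tsub_le_iff_right, density, density, ← Finset.sum_add_distrib]
    refine Finset.sum_le_sum fun w _ => ?_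
    rw [← mul_add]
    gcongr
    exact le_tsub_add
  calc ∫⁻ x, (density p ω n x - density p ω n (x + h))
      ≤ ∑ w ∈ alive ω n, ENNReal.ofReal p⁻¹ ^ n * ∫⁻ x, δ w x := by
        refine (lintegral_mono hsub).trans_eq ?_
        rw [lintegral_finsetSum _ fun w _ => (hδ w).const_mul _]
        simp only [lintegral_const_mul _ (hδ _)]
    _ ≤ ∑ _w ∈ levelWords M n, ENNReal.ofReal p⁻¹ ^ n * ENNReal.ofReal |h| := by
        refine (Finset.sum_le_sum fun w _ => ?_).trans
          (Finset.sum_le_sum_of_subset fun w hw => by simpa using (mem_alive.1 hw).1)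
        gcongr
        exact lintegral_indicator_cell_sub_le w h
    _ = (ENNReal.ofReal p⁻¹ * M) ^ n * ENNReal.ofReal |h| := by
        rw [Finset.sum_const, card_levelWords, nsmul_eq_mul, mul_pow]
        push_cast
        ring

end Density

section SurvivalMap

variable {M : ℕ} {p m x y u : ℝ}

/-- The offspring generating function `s ↦ (1 - p + ps) ^ M` of the percolation, in the
coordinate `x = 1 - s`; its positive fixed point is the survival probability. -/
def survivalMap (M : ℕ) (p x : ℝ) : ℝ := 1 - (1 - p * x) ^ M

theorem continuous_survivalMap : Continuous (survivalMap M p) := by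
  unfold survivalMap
  fun_prop

theorem mul_mem_Icc_zero_one (hp : p ∈ Icc 0 1) (hx : x ∈ Icc 0 1) : p * x ∈ Icc 0 1 :=
  ⟨mul_nonneg hp.1 hx.1, mul_le_one₀ hp.2 hx.1 hx.2⟩

theorem survivalMap_mem_Icc (hp : p ∈ Icc 0 1) (hx : x ∈ Icc 0 1) :
    survivalMap M p x ∈ Icc 0 1 := by
  have hpx := mul_mem_Icc_zero_one hp hx
  exact ⟨sub_nonneg.2 (pow_le_one₀ (sub_nonneg.2 hpx.2) (sub_le_self _ hpx.1)),
    sub_le_self _ (pow_nonneg (sub_nonneg.2 hpx.2) M)⟩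

theorem survivalMap_mono (hp : p ∈ Icc 0 1) (hy : y ∈ Icc 0 1) (hxy : x ≤ y) :
    survivalMap M p x ≤ survivalMap M p y := by
  have := sub_nonneg.2 (mul_mem_Icc_zero_one hp hy).2
  have := hp.1
  unfold survivalMap
  gcongr

theorem iterate_survivalMap_mem_Icc (hp : p ∈ Icc 0 1) (hx : x ∈ Icc 0 1) (k : ℕ) :
    (survivalMap M p)^[k] x ∈ Icc 0 1 :=
  MapsTo.iterate (fun _ hx => survivalMap_mem_Icc hp hx) k hx

theorem iterate_survivalMap_mono (hp : p ∈ Icc 0 1) (hy : y ∈ Icc 0 1) (hxy : x ≤ y) (k : ℕ) :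
    (survivalMap M p)^[k] x ≤ (survivalMap M p)^[k] y := by
  induction k with
  | zero => exact hxy
  | succ k ih =>
    simp only [Function.iterate_succ_apply']
    exact survivalMap_mono hp (iterate_survivalMap_mem_Icc hp hy k) ih

theorem eq_of_survivalMap_eq_self (hM : 2 ≤ M) (hp : p ∈ Ioc 0 1) (hx : 0 < x) (hy : y ≤ 1)
    (hxy : x ≤ y) (hfx : survivalMap M p x = x) (hfy : survivalMap M p y = y) : x = y := by
  have hsum : ∀ z, 0 < z → survivalMap M p z = z →
      p * ∑ j ∈ Finset.range M, (1 - p * z) ^ j = 1 := fun z hz hfz => by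
    have hgeom := mul_neg_geom_sum (1 - p * z) M
    rw [← survivalMap, hfz] at hgeom
    exact mul_left_cancel₀ hz.ne' (by linarith)
  by_contra hne
  have hlt : p * x < p * y := mul_lt_mul_of_pos_left (hxy.lt_of_ne hne) hp.1
  have hpy : p * y ≤ 1 := mul_le_one₀ hp.2 (hx.le.trans hxy) hy
  have hsumlt : ∑ j ∈ Finset.range M, (1 - p * y) ^ j < ∑ j ∈ Finset.range M, (1 - p * x) ^ j :=
    Finset.sum_lt_sum (fun j _ => pow_le_pow_left₀ (by linarith) (by linarith) j)
      ⟨1, Finset.mem_range.2 hM, by simpa using hlt⟩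
  have := mul_lt_mul_of_pos_left hsumlt hp.1
  linarith [hsum x hx hfx, hsum y (hx.trans_le hxy) hfy]

theorem div_one_add_le_survivalMap (hpx : p * x ∈ Icc 0 1) :
    M * (p * x) / (1 + M * (p * x)) ≤ survivalMap M p x := by
  obtain ⟨h0, h1⟩ := hpx
  have : 0 ≤ 1 - p * x := sub_nonneg.2 h1
  have hbernoulli : (1 - p * x) ^ M * (1 + M * (p * x)) ≤ 1 :=
    calc (1 - p * x) ^ M * (1 + M * (p * x)) ≤ (1 - p * x) ^ M * (1 + p * x) ^ M := by
          gcongr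
          exact one_add_mul_le_pow (by linarith) M
      _ = (1 - (p * x) ^ 2) ^ M := by rw [← mul_pow]; ring_nf
      _ ≤ 1 := pow_le_one₀ (by nlinarith) (sub_le_self 1 (sq_nonneg _))
  rw [div_le_iff₀ (by positivity), survivalMap]
  linarith

/-- The map conjugating multiplication by `m` to the Möbius map `x ↦ m x / (1 + m x)`, which
bounds `survivalMap M p` from below for `m = p M`. -/
def moebiusCoord (m u : ℝ) : ℝ := (m - 1) * u / (m - 1 + m * u)

theorem moebiusCoord_mem_Icc (hm : 1 < m) (hu : 0 ≤ u) : moebiusCoord m u ∈ Icc 0 1 := by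
  have : 0 < m - 1 := by linarith
  have : 0 < m := by linarith
  refine ⟨by unfold moebiusCoord; positivity, (div_le_one (by positivity)).2 ?_⟩
  nlinarith

theorem moebiusCoord_one_pos (hm : 1 < m) : 0 < moebiusCoord m 1 :=
  div_pos (by linarith) (by linarith)

theorem moebiusCoord_one_le (hm : 1 < m) : moebiusCoord m 1 ≤ moebiusCoord m m := by
  unfold moebiusCoord
  rw [div_le_div_iff₀ (by linarith) (by nlinarith)]
  nlinarith [pow_pos (sub_pos.2 hm) 2, pow_pos (sub_pos.2 hm) 3]

theorem moebiusCoord_le_one_sub_exp_neg (hm : 1 < m) (hu : 0 ≤ u) :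
    moebiusCoord m u ≤ 1 - exp (-u) := by
  have : 0 < m - 1 := by linarith
  have : 0 < m := by linarith
  have hexp : exp (-u) ≤ 1 / (1 + u) := by
    rw [exp_neg, ← one_div]
    exact one_div_le_one_div_of_le (by positivity) (by linarith [add_one_le_exp u])
  have hfrac : moebiusCoord m u ≤ u / (1 + u) := by
    rw [moebiusCoord, div_le_div_iff₀ (by positivity) (by positivity)]
    nlinarith [mul_nonneg hu hu]
  have : u / (1 + u) = 1 - 1 / (1 + u) := by field_simp; ring
  linarith

theorem moebiusCoord_mul_le_survivalMap (hp : p ∈ Icc 0 1) (hm : 1 < p * M) (hu : 0 ≤ u) :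
    moebiusCoord (p * M) (p * M * u) ≤ survivalMap M p (moebiusCoord (p * M) u) := by
  refine le_of_eq_of_le ?_
    (div_one_add_le_survivalMap (mul_mem_Icc_zero_one hp (moebiusCoord_mem_Icc hm hu)))
  have : 0 < p * M - 1 := by linarith
  generalize hmdef : p * M = m at *
  have : 0 < m := by linarith
  rw [← mul_assoc, mul_comm (M : ℝ) p, hmdef]
  unfold moebiusCoord
  field_simp
  ring

theorem moebiusCoord_pow_mul_le_iterate (hp : p ∈ Icc 0 1) (hm : 1 < p * M) (hu : 0 ≤ u) (j : ℕ) :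
    moebiusCoord (p * M) ((p * M) ^ j * u) ≤ (survivalMap M p)^[j] (moebiusCoord (p * M) u) := by
  induction j with
  | zero => simp
  | succ j ih =>
    rw [Function.iterate_succ_apply', pow_succ', mul_assoc]
    refine (moebiusCoord_mul_le_survivalMap hp hm (by positivity)).trans
      (survivalMap_mono hp ?_ ih)
    exact iterate_survivalMap_mem_Icc hp (moebiusCoord_mem_Icc hm hu) j

theorem exists_tendsto_iterate_survivalMap (hp : p ∈ Icc 0 1) (hm : 1 < p * M) :
    ∃ x, Filter.Tendsto (fun k => (survivalMap M p)^[k] (moebiusCoord (p * M) 1)) Filter.atTop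
        (nhds x) ∧
      Filter.Tendsto (fun k => (survivalMap M p)^[k] 1) Filter.atTop (nhds x) := by
  have hM : 2 ≤ M := by
    by_contra! h
    have : (M : ℝ) ≤ 1 := by exact_mod_cast Nat.lt_succ_iff.1 h
    nlinarith [hp.1, hp.2]
  have hp0 : 0 < p := pos_of_mul_pos_left (zero_lt_one.trans hm) (Nat.cast_nonneg M)
  set x₀ := moebiusCoord (p * M) 1
  have hx₀ : x₀ ∈ Icc 0 1 := moebiusCoord_mem_Icc hm zero_le_one
  have h1 : (1 : ℝ) ∈ Icc 0 1 := ⟨zero_le_one, le_rfl⟩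
  have hmono : Monotone fun k => (survivalMap M p)^[k] x₀ := monotone_nat_of_le_succ fun k => by
    rw [Function.iterate_succ_apply]
    refine iterate_survivalMap_mono hp (survivalMap_mem_Icc hp hx₀) ?_ k
    simpa using (moebiusCoord_one_le hm).trans
      (by simpa using moebiusCoord_mul_le_survivalMap hp hm zero_le_one)
  have hanti : Antitone fun k => (survivalMap M p)^[k] 1 := antitone_nat_of_succ_le fun k => by
    rw [Function.iterate_succ_apply]
    exact iterate_survivalMap_mono hp h1 (survivalMap_mem_Icc hp h1).2 k
  have hlow := tendsto_atTop_ciSup hmono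
    ⟨1, forall_mem_range.2 fun k => (iterate_survivalMap_mem_Icc hp hx₀ k).2⟩
  have hhigh := tendsto_atTop_ciInf hanti
    ⟨0, forall_mem_range.2 fun k => (iterate_survivalMap_mem_Icc hp h1 k).1⟩
  have heq := eq_of_survivalMap_eq_self hM ⟨hp0, hp.2⟩
    ((moebiusCoord_one_pos hm).trans_le (hmono.ge_of_tendsto hlow 0))
    (hanti.le_of_tendsto hhigh 0)
    (le_of_tendsto_of_tendsto' hlow hhigh (iterate_survivalMap_mono hp h1 hx₀.2))
    (isFixedPt_of_tendsto_iterate hlow continuous_survivalMap.continuousAt)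
    (isFixedPt_of_tendsto_iterate hhigh continuous_survivalMap.continuousAt)
  exact ⟨_, hlow, heq ▸ hhigh⟩

end SurvivalMap

section Extinction

variable {M n : ℕ} {ω ω' : Perc1 M} {x : ℝ}

theorem measurable_of_dependsOn {ι β : Type*} [MeasurableSpace β] [Nonempty β]
    {f : (ι → Bool) → β} {s : Set ι} (hs : s.Finite) (hf : DependsOn f s) : Measurable f := by
  obtain ⟨g, rfl⟩ := dependsOn_iff_exists_comp.1 hf
  have := hs.to_subtype
  exact (measurable_of_finite g).comp (measurable_pi_iff.2 fun i => measurable_pi_apply _)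

theorem finite_length_le (M n : ℕ) : {v : Word1 M | v.1.length ≤ n}.Finite :=
  (List.finite_length_le (Fin M) n).preimage Subtype.val_injective.injOn

theorem card_alive_succ :
    (alive ω (n + 1)).card = ∑ v ∈ generation M n,
      open Classical in if Retained1 M ω v.1.dropLast then (ω v).toNat else 0 := by
  rw [Finset.card_eq_sum_ones, sum_alive_succ, ← sum_alive_sum_child fun v => (ω v).toNat]
  refine Finset.sum_congr rfl fun w _ => Finset.sum_congr rfl fun j _ => ?_
  cases ω (child w j) <;> rfl

theorem card_alive_mul :
    (alive ω n).card * M = ∑ v ∈ generation M n,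
      open Classical in if Retained1 M ω v.1.dropLast then 1 else 0 := by
  rw [← sum_alive_sum_child fun _ => 1]
  simp

theorem alive_eq_empty_of_le {k : ℕ} (hkn : k ≤ n) (hk : alive ω k = ∅) : alive ω n = ∅ := by
  induction n, hkn using Nat.le_induction with
  | base => exact hk
  | succ n _ ih => rw [← Finset.card_eq_zero, Finset.card_eq_sum_ones, sum_alive_succ, ih]; rfl

/-- The law of a one-dimensional fractal percolation with retention probability `p`. -/
def percLaw (M : ℕ) (p : unitInterval) : Measure (Perc1 M) :=
  Measure.infinitePi fun _ => bernoulliMeasure true false p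

variable (p : unitInterval)

instance : IsProbabilityMeasure (percLaw M p) :=
  inferInstanceAs (IsProbabilityMeasure (Measure.infinitePi _))

theorem coe_toNNReal_eq_ofReal (p : unitInterval) :
    (unitInterval.toNNReal p : ℝ≥0∞) = ENNReal.ofReal p :=
  (ENNReal.ofReal_eq_coe_nnreal p.2.1).symm

theorem lintegral_pow_toNat_bernoulliMeasure (hx : x ≤ 1) :
    ∫⁻ b, ENNReal.ofReal (1 - x) ^ b.toNat ∂bernoulliMeasure true false p =
      ENNReal.ofReal (1 - p * x) := by
  rw [bernoulliMeasure_def, lintegral_add_measure, lintegral_smul_measure, lintegral_smul_measure,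
    lintegral_dirac, lintegral_dirac, ENNReal.smul_def, ENNReal.smul_def,
    coe_toNNReal_eq_ofReal, coe_toNNReal_eq_ofReal, smul_eq_mul, smul_eq_mul, Bool.toNat_true,
    Bool.toNat_false, pow_one, pow_zero, mul_one,
    ← ENNReal.ofReal_mul p.2.1, ← ENNReal.ofReal_add
      (mul_nonneg p.2.1 (sub_nonneg.2 hx)) (unitInterval.symm p).2.1, unitInterval.coe_symm_eq]
  ring_nf

theorem lintegral_pow_card_alive_succ (hx : x ∈ Icc 0 1) :
    ∫⁻ ω, ENNReal.ofReal (1 - x) ^ (alive ω (n + 1)).card ∂percLaw M p =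
      ∫⁻ ω, ENNReal.ofReal (1 - survivalMap M p x) ^ (alive ω n).card ∂percLaw M p := by
  classical
  set F : Word1 M → Bool → Perc1 M → ℝ≥0∞ := fun v b ω =>
    ENNReal.ofReal (1 - x) ^ if Retained1 M ω v.1.dropLast then b.toNat else 0
  have hdep : ∀ v b, DependsOn (F v b) {u | u.1.length < v.1.length} := fun v b ω ω' h => by
    have : Retained1 M ω v.1.dropLast ↔ Retained1 M ω' v.1.dropLast :=
      retained1_congr fun u hu => h u <| hu.trans_lt <| by
        rw [List.length_dropLast]
        exact Nat.sub_lt (List.length_pos_iff.2 v.2) one_pos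
    simp only [F, this]
  have hmeas : ∀ v, Measurable fun z : Bool × Perc1 M => F v z.1 z.2 := fun v =>
    measurable_from_prod_countable_right fun b =>
      measurable_of_dependsOn (finite_length_le M v.1.length) <|
        (hdep v b).mono fun u (hu : u.1.length < v.1.length) => hu.le
  have hproduct : ∀ ω : Perc1 M, ENNReal.ofReal (1 - x) ^ (alive ω (n + 1)).card =
      ∏ v ∈ generation M n, F v (ω v) ω := fun ω => by
    rw [card_alive_succ, Finset.prod_pow_eq_pow_sum]
  have hconditional : ∀ ω : Perc1 M,
      ∏ v ∈ generation M n, ∫⁻ b, F v b ω ∂bernoulliMeasure true false p =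
        ENNReal.ofReal (1 - survivalMap M p x) ^ (alive ω n).card := fun ω => by
    have hlabel : ∀ v : Word1 M, ∫⁻ b, F v b ω ∂bernoulliMeasure true false p =
        ENNReal.ofReal (1 - p * x) ^ if Retained1 M ω v.1.dropLast then 1 else 0 := fun v => by
      split_ifs with hv <;> simp [F, hv, lintegral_pow_toNat_bernoulliMeasure p hx.2]
    simp only [hlabel]
    rw [Finset.prod_pow_eq_pow_sum, ← card_alive_mul, survivalMap, _root_.sub_sub_cancel,
      ENNReal.ofReal_pow (sub_nonneg.2 (mul_mem_Icc_zero_one p.2 hx).2), ← pow_mul, mul_comm M]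
  simp only [hproduct]
  rw [percLaw, lintegral_infinitePi_prod_eq _ _ F hmeas fun v hv b =>
    (hdep v b).mono fun u hu hmem => hu.ne <|
      (mem_generation.1 hmem).trans (mem_generation.1 hv).symm]
  simp only [hconditional]

theorem lintegral_pow_card_alive (hx : x ∈ Icc 0 1) :
    ∫⁻ ω, ENNReal.ofReal (1 - x) ^ (alive ω n).card ∂percLaw M p =
      ENNReal.ofReal (1 - (survivalMap M p)^[n] x) := by
  induction n generalizing x with
  | zero =>
    have hroot : ∀ ω : Perc1 M, (alive ω 0).card = 1 := fun ω => by
      rw [Finset.card_eq_one]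
      refine ⟨[], Finset.ext fun w => ?_⟩
      rw [mem_alive, List.length_eq_zero_iff, Finset.mem_singleton, and_iff_left_iff_imp]
      rintro rfl u hu hnil
      exact absurd (List.prefix_nil.1 hnil) hu
    simp [hroot]
  | succ n ih =>
    rw [lintegral_pow_card_alive_succ p hx, ih (survivalMap_mem_Icc p.2 hx),
      Function.iterate_succ_apply]

theorem ofReal_le_percLaw_exists_alive_eq_empty (k : ℕ) :
    ENNReal.ofReal (1 - (survivalMap M p)^[k] 1) ≤ percLaw M p {ω | ∃ n, alive ω n = ∅} := by
  have hzero : ∀ ω : Perc1 M, ENNReal.ofReal (1 - 1) ^ (alive ω k).card =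
      {ω : Perc1 M | alive ω k = ∅}.indicator 1 ω := fun ω => by
    by_cases hω : alive ω k = ∅ <;> simp [hω]
  rw [← lintegral_pow_card_alive p ⟨zero_le_one, le_rfl⟩]
  simp only [hzero]
  exact (lintegral_indicator_one_le _).trans (measure_mono fun ω hω => ⟨k, hω⟩)

theorem dependsOn_normPopulation (m : ℝ) (n : ℕ) :
    DependsOn (fun ω : Perc1 M => normPopulation m ω n) {v | v.1.length ≤ n} := fun ω ω' h => by
  simp only [normPopulation, alive_congr h]

theorem lintegral_exp_neg_normPopulation_le (hp : 1 < p * (M : ℝ)) (k j : ℕ) :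
    ∫⁻ ω, ENNReal.ofReal (exp (-((p * M) ^ k * normPopulation p ω (k + j)))) ∂percLaw M p ≤
      ENNReal.ofReal (1 - (survivalMap M p)^[k] (moebiusCoord (p * M) 1)) := by
  set u : ℝ := ((p * M) ^ j)⁻¹
  have hu : 0 ≤ u := by positivity
  have hx : 1 - exp (-u) ∈ Icc 0 1 :=
    ⟨sub_nonneg.2 (exp_le_one_iff.2 (neg_nonpos.2 hu)), sub_le_self _ (exp_pos _).le⟩
  have hpow : ∀ ω : Perc1 M, ENNReal.ofReal (exp (-((p * M) ^ k * normPopulation p ω (k + j)))) =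
      ENNReal.ofReal (1 - (1 - exp (-u))) ^ (alive ω (k + j)).card := fun ω => by
    rw [_root_.sub_sub_cancel, ← ENNReal.ofReal_pow (exp_pos _).le, ← exp_nat_mul]
    simp only [u, normPopulation, pow_add]
    congr 2
    field_simp
  simp only [hpow]
  rw [lintegral_pow_card_alive p hx, Function.iterate_add_apply]
  refine ENNReal.ofReal_le_ofReal (sub_le_sub_left
    (iterate_survivalMap_mono p.2 (iterate_survivalMap_mem_Icc p.2 hx j) ?_ k) 1)
  calc moebiusCoord (p * M) 1 = moebiusCoord (p * M) ((p * M) ^ j * u) := by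
        rw [mul_inv_cancel₀ (by positivity)]
    _ ≤ (survivalMap M p)^[j] (moebiusCoord (p * M) u) :=
        moebiusCoord_pow_mul_le_iterate p.2 hp hu j
    _ ≤ (survivalMap M p)^[j] (1 - exp (-u)) :=
        iterate_survivalMap_mono p.2 hx (moebiusCoord_le_one_sub_exp_neg hp hu) j

theorem percLaw_tendsto_normPopulation_zero_le (hp : 1 < p * (M : ℝ)) (k : ℕ) :
    percLaw M p {ω | Filter.Tendsto (normPopulation p ω) Filter.atTop (nhds 0)} ≤
      ENNReal.ofReal (1 - (survivalMap M p)^[k] (moebiusCoord (p * M) 1)) := by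
  set F : ℕ → Perc1 M → ℝ≥0∞ := fun n ω =>
    ENNReal.ofReal (exp (-((p * M) ^ k * normPopulation p ω n)))
  have hF : ∀ n, Measurable (F n) := fun n =>
    measurable_of_dependsOn (finite_length_le M n) fun ω ω' h => by
      simp only [F, dependsOn_normPopulation p n h]
  have hlaplace : ∀ n ≥ k, ∫⁻ ω, F n ω ∂percLaw M p ≤
      ENNReal.ofReal (1 - (survivalMap M p)^[k] (moebiusCoord (p * M) 1)) := fun n hn => by
    obtain ⟨j, rfl⟩ := Nat.exists_eq_add_of_le hn
    exact lintegral_exp_neg_normPopulation_le p hp k j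
  calc percLaw M p {ω | Filter.Tendsto (normPopulation p ω) Filter.atTop (nhds 0)}
      ≤ percLaw M p {ω | 1 ≤ Filter.liminf (fun n => F n ω) Filter.atTop} := by
        refine measure_mono fun ω hω => ?_
        have hlim : Filter.Tendsto (fun n => F n ω) Filter.atTop (nhds 1) := by
          simpa [F] using ENNReal.tendsto_ofReal
            ((Real.continuous_exp.tendsto _).comp (hω.const_mul ((p * M) ^ k : ℝ)).neg)
        exact hlim.liminf_eq.ge
    _ ≤ ∫⁻ ω, Filter.liminf (fun n => F n ω) Filter.atTop ∂percLaw M p := by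
        simpa using mul_meas_ge_le_lintegral₀ (Measurable.liminf hF).aemeasurable 1
    _ ≤ Filter.liminf (fun n => ∫⁻ ω, F n ω ∂percLaw M p) Filter.atTop := lintegral_liminf_le hF
    _ ≤ _ := Filter.liminf_le_of_frequently_le'
        (Filter.eventually_atTop.2 ⟨k, hlaplace⟩).frequently

theorem ae_exists_alive_eq_empty_of_tendsto_zero (hp : 1 < p * (M : ℝ)) :
    ∀ᵐ ω ∂percLaw M p, Filter.Tendsto (normPopulation p ω) Filter.atTop (nhds 0) →
      ∃ n, alive ω n = ∅ := by
  obtain ⟨x, hlow, hhigh⟩ := exists_tendsto_iterate_survivalMap p.2 hp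
  have hsubset : {ω : Perc1 M | ∃ n, alive ω n = ∅} ⊆
      {ω | Filter.Tendsto (normPopulation p ω) Filter.atTop (nhds 0)} := by
    rintro ω ⟨k, hk⟩
    refine tendsto_const_nhds.congr' ?_
    filter_upwards [Filter.eventually_ge_atTop k] with n hn
    simp [normPopulation, alive_eq_empty_of_le hn hk]
  have hmeas : MeasurableSet {ω : Perc1 M | ∃ n, alive ω n = ∅} := by
    rw [ofPred_exists]
    exact .iUnion fun n => measurableSet_setOfPred.2 <|
      measurable_of_dependsOn (finite_length_le M n) fun ω ω' h => by simp only [alive_congr h]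
  have hle : percLaw M p {ω | Filter.Tendsto (normPopulation p ω) Filter.atTop (nhds 0)} ≤
      percLaw M p {ω | ∃ n, alive ω n = ∅} :=
    (ge_of_tendsto' (ENNReal.tendsto_ofReal (hlow.const_sub 1))
      (percLaw_tendsto_normPopulation_zero_le p hp)).trans
    (le_of_tendsto' (ENNReal.tendsto_ofReal (hhigh.const_sub 1))
      (ofReal_le_percLaw_exists_alive_eq_empty p))
  filter_upwards [(ae_eq_of_subset_of_measure_ge hsubset hle hmeas.nullMeasurableSet
    (measure_ne_top _ _)).mem_iff] with ω hω h
  exact hω.2 h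

end Extinction

section GeometricIncrements

variable {x : ℕ → ℝ} {A q ρ : ℝ}

theorem exists_forall_le_mul_pow (hx : ∀ n, 0 ≤ x n) (hA : 0 ≤ A) (hq : q ∈ Ioo 0 1) (hρ : 1 < ρ)
    (h : ∀ᶠ n in Filter.atTop, x (n + 1) ≤ x n + A * (q ^ n * x n + ρ ^ n)) :
    ∃ C, ∀ n, x n ≤ C * ρ ^ n := by
  have : 0 < ρ := zero_lt_one.trans hρ
  have hslack : ∀ᶠ n in Filter.atTop, A * q ^ n ≤ (ρ - 1) / 2 := by
    refine Filter.Tendsto.eventually_le_const (v := 0) (half_pos (sub_pos.2 hρ)) ?_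
    simpa using (tendsto_pow_atTop_nhds_zero_of_lt_one hq.1.le hq.2).const_mul A
  obtain ⟨N, hN⟩ := Filter.eventually_atTop.1 (h.and hslack)
  set C : ℝ := 2 * A / (ρ - 1) + ∑ k ∈ Finset.range (N + 1), x k
  have hinitial : ∀ n ≤ N, x n ≤ C * ρ ^ n := fun n hn => by
    have hsingle : x n ≤ ∑ k ∈ Finset.range (N + 1), x k :=
      Finset.single_le_sum (fun k _ => hx k) (Finset.mem_range.2 (Nat.lt_succ_of_le hn))
    have hnonneg : 0 ≤ 2 * A / (ρ - 1) := div_nonneg (by positivity) (by linarith)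
    have hxC : x n ≤ C := by linarith
    exact hxC.trans (le_mul_of_one_le_right ((hx n).trans hxC) (one_le_pow₀ hρ.le))
  have hAC : A ≤ C * ((ρ - 1) / 2) := by
    have : 0 < ρ - 1 := by linarith
    have hsum := Finset.sum_nonneg fun k (_ : k ∈ Finset.range (N + 1)) => hx k
    calc A = 2 * A / (ρ - 1) * ((ρ - 1) / 2) := by field_simp
      _ ≤ C * ((ρ - 1) / 2) := by gcongr; exact le_add_of_nonneg_right hsum
  refine ⟨C, fun n => ?_⟩
  rcases le_total n N with hn | hn
  · exact hinitial n hn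
  induction n, hn using Nat.le_induction with
  | base => exact hinitial N le_rfl
  | succ n hn ih =>
    obtain ⟨hstep, hsmall⟩ := hN n hn
    calc x (n + 1) ≤ x n + A * (q ^ n * x n + ρ ^ n) := hstep
      _ = x n * (1 + A * q ^ n) + A * ρ ^ n := by ring
      _ ≤ C * ρ ^ n * (1 + (ρ - 1) / 2) + C * ((ρ - 1) / 2) * ρ ^ n := by
          have := (hx n).trans ih
          have : 0 ≤ q := hq.1.le
          gcongr
      _ = C * ρ ^ (n + 1) := by ring

theorem exists_forall_pow_mul_add_pow_le (hx : ∀ n, 0 ≤ x n) (hA : 0 ≤ A) (hq : q ∈ Ioo 0 1)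
    (hρ : ρ ∈ Ioo 0 1)
    (h : ∀ᶠ n in Filter.atTop, x (n + 1) ≤ x n + A * (q ^ n * x n + ρ ^ n)) :
    ∃ C, ∃ s ∈ Ioo (0 : ℝ) 1, ∀ n, q ^ n * x n + ρ ^ n ≤ C * s ^ n := by
  obtain ⟨σ, hσ1, hσq⟩ := exists_between (one_lt_inv₀ hq.1 |>.2 hq.2)
  obtain ⟨C, hC⟩ := exists_forall_le_mul_pow hx hA hq hσ1 <| h.mono fun n hn =>
    hn.trans (by have := hρ.1; gcongr; exact hρ.2.le.trans hσ1.le)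
  have hC0 : 0 ≤ C := by simpa using (hx 0).trans (hC 0)
  have hqσ : q * σ < 1 := by simpa [hq.1.ne'] using mul_lt_mul_of_pos_left hσq hq.1
  refine ⟨C + 1, max (q * σ) ρ, ⟨lt_max_of_lt_right hρ.1, max_lt hqσ hρ.2⟩, fun n => ?_⟩
  have hq0 := hq.1
  have hρ0 := hρ.1
  calc q ^ n * x n + ρ ^ n ≤ q ^ n * (C * σ ^ n) + ρ ^ n := by gcongr; exact hC n
    _ = C * (q * σ) ^ n + 1 * ρ ^ n := by ring
    _ ≤ C * max (q * σ) ρ ^ n + 1 * max (q * σ) ρ ^ n := by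
        gcongr
        exacts [le_max_left _ _, le_max_right _ _]
    _ = (C + 1) * max (q * σ) ρ ^ n := by ring

theorem exists_tendsto_of_eventually_abs_sub_le (hx : ∀ n, 0 ≤ x n)
    (hA : 0 ≤ A) (hq : q ∈ Ioo 0 1) (hρ : ρ ∈ Ioo 0 1)
    (h : ∀ᶠ n in Filter.atTop, |x (n + 1) - x n| ≤ A * (q ^ n * x n + ρ ^ n)) :
    ∃ y, Filter.Tendsto x Filter.atTop (nhds y) := by
  obtain ⟨C, s, hs, hC⟩ := exists_forall_pow_mul_add_pow_le hx hA hq hρ <|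
    h.mono fun n hn => by linarith [le_abs_self (x (n + 1) - x n)]
  have hsummable : Summable fun n => x (n + 1) - x n := by
    refine .of_norm_bounded_eventually_nat
      ((summable_geometric_of_lt_one hs.1.le hs.2).mul_left (A * C)) (h.mono fun n hn => ?_)
    calc ‖x (n + 1) - x n‖ ≤ A * (q ^ n * x n + ρ ^ n) := hn
      _ ≤ A * (C * s ^ n) := by gcongr; exact hC n
      _ = A * C * s ^ n := (mul_assoc ..).symm
  refine cauchySeq_tendsto_of_complete (cauchySeq_of_summable_dist ?_)
  simpa only [Real.dist_eq, abs_sub_comm] using hsummable.abs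

theorem exists_one_lt_div_mem_Ioo {m : ℝ} (h : 1 < m) : ∃ r, 1 < r ∧ r / m ∈ Ioo 0 1 := by
  obtain ⟨r, hr1, hr⟩ := exists_between h
  have hr0 := zero_lt_one.trans hr1
  exact ⟨r, hr1, div_pos hr0 (hr0.trans hr), (div_lt_one (hr0.trans hr)).2 hr⟩

theorem neZero_of_one_lt_mul {M : ℕ} {m : ℝ} (h : 1 < m * M) : NeZero M :=
  ⟨fun hM => by norm_num [hM] at h⟩

end GeometricIncrements

section LinearFunctional

variable {M n : ℕ} {p : ℝ} {ω : Perc1 M} {H : ℝ → ℝ≥0∞} {B : NNReal}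

/-- A normalized label minus its mean `1`. -/
def centredLabel (p : ℝ) (b : Bool) : ℝ := (normLabel p b).toReal - 1

theorem centredLabel_mem_Icc (hp : 0 ≤ p) (b : Bool) :
    centredLabel p b ∈ Icc (-1) (-1 + p⁻¹) := by
  have := inv_nonneg.2 hp
  cases b <;> simp [centredLabel, normLabel, this]

theorem integral_centredLabel {p : unitInterval} (hp : 0 < (p : ℝ)) :
    ∫ b, centredLabel p b ∂bernoulliMeasure true false p = 0 := by
  rw [integral_bernoulliMeasure]
  have hinv : (p : ℝ) * ((p : ℝ)⁻¹ - 1) = 1 - p := by rw [mul_sub, mul_inv_cancel₀ hp.ne', mul_one]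
  simp [centredLabel, normLabel, hp.le, hinv]

theorem lintegral_childDensity_mul_le (hB : ∀ x, H x ≤ B) (v : Word1 M) :
    ∫⁻ x, childDensity p ω n v x * H x ≤
      ENNReal.ofReal p⁻¹ ^ n * ENNReal.ofReal (M : ℝ)⁻¹ ^ v.1.length * B :=
  calc ∫⁻ x, childDensity p ω n v x * H x ≤ ∫⁻ x, childDensity p ω n v x * B := by
        gcongr with x
        exact hB x
    _ = (∫⁻ x, childDensity p ω n v x) * B := lintegral_mul_const _ measurable_childDensity
    _ ≤ _ := by gcongr; exact lintegral_childDensity_le p ω n v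

theorem lintegral_childDensity_mul_ne_top (hB : ∀ x, H x ≤ B) (v : Word1 M) :
    ∫⁻ x, childDensity p ω n v x * H x ≠ ∞ :=
  ne_top_of_le_ne_top (by finiteness) (lintegral_childDensity_mul_le hB v)

theorem toReal_lintegral_density_mul [NeZero M] (hH : Measurable H) (hB : ∀ x, H x ≤ B) :
    (∫⁻ x, density p ω n x * H x).toReal =
      ∑ v ∈ generation M n, (∫⁻ x, childDensity p ω n v x * H x).toReal := by
  have hmeas : ∀ v, Measurable fun x => childDensity p ω n v x * H x := fun v =>
    measurable_childDensity.mul hH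
  simp only [density_eq_sum_childDensity, Finset.sum_mul]
  rw [lintegral_finsetSum _ fun v _ => hmeas v,
    ENNReal.toReal_sum fun v _ => lintegral_childDensity_mul_ne_top hB v]

theorem toReal_lintegral_density_succ_mul_sub [NeZero M] (hH : Measurable H) (hB : ∀ x, H x ≤ B) :
    (∫⁻ x, density p ω (n + 1) x * H x).toReal - (∫⁻ x, density p ω n x * H x).toReal =
      ∑ v ∈ generation M n,
        (∫⁻ x, childDensity p ω n v x * H x).toReal * centredLabel p (ω v) := by
  have hlabel : ∀ b, normLabel p b ≠ ∞ := fun b =>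
    ne_top_of_le_ne_top ofReal_ne_top (normLabel_le p b)
  have hsucc : (∫⁻ x, density p ω (n + 1) x * H x).toReal = ∑ v ∈ generation M n,
      (normLabel p (ω v)).toReal * (∫⁻ x, childDensity p ω n v x * H x).toReal := by
    have hmeas : ∀ v, Measurable fun x => childDensity p ω n v x * H x := fun v =>
      measurable_childDensity.mul hH
    simp only [density_succ_eq_sum_childDensity, Finset.sum_mul, mul_assoc]
    rw [lintegral_finsetSum _ fun v _ => (hmeas v).const_mul _]
    simp only [lintegral_const_mul _ (hmeas _)]
    rw [ENNReal.toReal_sum fun v _ =>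
      mul_ne_top (hlabel _) (lintegral_childDensity_mul_ne_top hB v)]
    simp only [toReal_mul]
  rw [hsucc, toReal_lintegral_density_mul hH hB, ← Finset.sum_sub_distrib]
  refine Finset.sum_congr rfl fun v _ => ?_
  rw [centredLabel]
  ring

theorem sum_sq_toReal_lintegral_childDensity_mul_le [NeZero M] (hp : 0 ≤ p) (hH : Measurable H)
    (hB : ∀ x, H x ≤ B) :
    ∑ v ∈ generation M n, (∫⁻ x, childDensity p ω n v x * H x).toReal ^ 2 ≤
      B * ((p * M)⁻¹) ^ n * (∫⁻ x, density p ω n x * H x).toReal := by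
  have hM : (M : ℝ)⁻¹ ≤ 1 := Nat.cast_inv_le_one M
  have hterm : ∀ v ∈ generation M n,
      (∫⁻ x, childDensity p ω n v x * H x).toReal ≤ B * ((p * M)⁻¹) ^ n := fun v hv => by
    refine (toReal_mono (by finiteness) (lintegral_childDensity_mul_le hB v)).trans ?_
    rw [mem_generation.1 hv, pow_succ]
    simp only [toReal_mul, toReal_pow, coe_toReal, toReal_ofReal (inv_nonneg.2 hp),
      toReal_ofReal (inv_nonneg.2 (Nat.cast_nonneg M))]
    calc p⁻¹ ^ n * ((M : ℝ)⁻¹ ^ n * (M : ℝ)⁻¹) * B ≤ p⁻¹ ^ n * ((M : ℝ)⁻¹ ^ n * 1) * B := by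
          gcongr
      _ = B * ((p * M)⁻¹) ^ n := by rw [mul_inv, mul_pow]; ring
  rw [toReal_lintegral_density_mul hH hB, Finset.mul_sum]
  refine Finset.sum_le_sum fun v hv => ?_
  rw [sq]
  gcongr
  exact hterm v hv

end LinearFunctional

section JointLaw

variable {ι : Type*} {M : ℕ} {p : ι → unitInterval}

/-- The joint law of independent one-dimensional fractal percolations with retention
probabilities `p i`; the labels of the `i`-th one are `Function.curry ω i`. -/
def jointLaw (M : ℕ) (p : ι → unitInterval) : Measure (ι × Word1 M → Bool) :=
  Measure.infinitePi fun q => bernoulliMeasure true false (p q.1)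

theorem finite_index_length_le [Finite ι] (M n : ℕ) :
    {q : ι × Word1 M | q.2.1.length ≤ n}.Finite :=
  (finite_univ.prod (finite_length_le M n)).subset fun _ hq => ⟨mem_univ _, hq⟩

theorem dependsOn_toReal_lintegral_childDensity_mul {i : ι} {n : ℕ} {p : ℝ}
    {H : (ι × Word1 M → Bool) → ℝ → ℝ≥0∞}
    (hH : DependsOn H {q | q.1 ≠ i ∧ q.2.1.length ≤ n + 1}) {v : Word1 M}
    (hv : v ∈ generation M n) :
    DependsOn (fun ω => (∫⁻ x, childDensity p (Function.curry ω i) n v x * H ω x).toReal)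
      ({q | q.2.1.length ≤ n + 1} \ ((generation M n).map (Function.Embedding.sectR i _) :
        Set (ι × Word1 M))) := fun ω ω' h => by
  have hmem : ∀ q : ι × Word1 M, q.2.1.length ≤ n + 1 → (q.1 = i → q.2.1.length ≤ n) →
      ω q = ω' q := fun q hle hq => h q ⟨hle, fun hq' => by
    obtain ⟨v, hv, rfl⟩ := Finset.mem_map.1 hq'
    exact ((hq rfl).trans_lt n.lt_succ_self).ne (mem_generation.1 hv)⟩
  have hself : childDensity p (Function.curry ω i) n v = childDensity p (Function.curry ω' i) n v :=
    childDensity_congr (fun u hu => hmem (i, u) (Nat.le_succ_of_le hu) fun _ => hu) hv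
  simp only [hself, hH fun q hq => hmem q hq.2 fun h => absurd h hq.1]

theorem ae_eventually_abs_lintegral_density_succ_sub_le [Finite ι] (hp : ∀ i, 1 < p i * (M : ℝ))
    (i : ι) {κ' : Type*} (J : ℕ → Finset κ')
    {H : ℕ → κ' → (ι × Word1 M → Bool) → ℝ → ℝ≥0∞} (hH : ∀ n k ω, Measurable (H n k ω))
    (hdep : ∀ n k, DependsOn (H n k) {q | q.1 ≠ i ∧ q.2.1.length ≤ n + 1})
    {ρ r κ C : ℝ} (hρ : 0 < ρ) (hr : 1 < r) (hκ : 0 < κ) (hJ : ∀ n, ((J n).card : ℝ) ≤ C * κ ^ n) :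
    ∀ᵐ ω ∂jointLaw M p, ∀ᶠ n in Filter.atTop, ∀ k ∈ J n, ∀ B : NNReal, (∀ x, H n k ω x ≤ B) →
      |(∫⁻ x, density (p i) (Function.curry ω i) (n + 1) x * H n k ω x).toReal -
          (∫⁻ x, density (p i) (Function.curry ω i) n x * H n k ω x).toReal| ≤
        (r / (ρ * (p i * M))) ^ n * (M ^ 2 / 8 * B *
          (∫⁻ x, density (p i) (Function.curry ω i) n x * H n k ω x).toReal) + ρ ^ n := by
  have hpos : ∀ j, 0 < (p j : ℝ) := fun j =>
    pos_of_mul_pos_left (zero_lt_one.trans (hp j)) (Nat.cast_nonneg M)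
  have hinv : ∀ j, (p j : ℝ)⁻¹ ≤ M := fun j =>
    (inv_le_iff_one_le_mul₀' (hpos j)).2 (hp j).le
  have : 0 < r := zero_lt_one.trans hr
  have : NeZero M := neZero_of_one_lt_mul (hp i)
  have hweight : ∀ n k, ∀ q ∈ (generation M n).map (Function.Embedding.sectR i (Word1 M)), _ :=
    fun n k q hq => dependsOn_toReal_lintegral_childDensity_mul (p := p i) (v := q.2) (hdep n k) (by
      obtain ⟨v, hv, rfl⟩ := Finset.mem_map.1 hq
      exact hv)
  filter_upwards [ae_eventually_abs_sum_mul_le (θ := ρ / r ^ 2)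
    (η := fun q : ι × Word1 M => centredLabel (p q.1)) (fun _ => measurable_of_finite _)
    (fun q b => Icc_subset_Icc_right (add_le_add_right (hinv q.1) _)
      (centredLabel_mem_Icc (hpos q.1).le b))
    (fun q => integral_centredLabel (hpos q.1)) _ J
    (fun n k q hq => measurable_of_dependsOn
      ((finite_index_length_le M (n + 1)).subset sdiff_subset) (hweight n k q hq))
    (fun n k q hq => (hweight n k q hq).mono fun q hq => hq.2) (by positivity) hr hκ hJ] with ω hω
  filter_upwards [hω] with n hn k hk B hB
  rw [toReal_lintegral_density_succ_mul_sub (hH n k ω) hB]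
  have hsq := sum_sq_toReal_lintegral_childDensity_mul_le (n := n) (ω := Function.curry ω i)
    (hpos i).le (hH n k ω) hB
  have hbound := hn k hk
  simp only [Finset.sum_map, Function.Embedding.sectR_apply] at hbound
  refine hbound.trans ?_
  have hθ1 : (ρ / r ^ 2 * r)⁻¹ = r / ρ := by field_simp
  have hθ2 : ρ / r ^ 2 * r ^ 2 = ρ := by field_simp
  rw [hθ1, hθ2]
  refine add_le_add_left ?_ _
  calc _ ≤ (r / ρ) ^ n * M ^ 2 / 8 * _ := mul_le_mul_of_nonneg_left hsq (by positivity)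
    _ = _ := by rw [inv_pow, div_pow, div_pow, mul_pow ρ]; field_simp

end JointLaw

section PopulationLimit

variable {ι : Type*} {M : ℕ} {p : ι → unitInterval}

theorem map_curry_jointLaw [Finite ι] (i : ι) :
    (jointLaw M p).map (fun ω => Function.curry ω i) = percLaw M (p i) := by
  have hcurry := Measure.infinitePi_map_curry fun (j : ι) (_ : Word1 M) =>
    bernoulliMeasure true false (p j)
  have heval := (measurePreserving_eval_infinitePi (fun j => percLaw M (p j)) i).map_eq
  rw [← heval]
  simp only [percLaw]
  rw [← hcurry, Measure.map_map (measurable_pi_apply i) (MeasurableEquiv.measurable _)]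
  rfl

theorem ae_exists_tendsto_normPopulation [Finite ι] (hp : ∀ i, 1 < p i * (M : ℝ)) (i : ι) :
    ∀ᵐ ω ∂jointLaw M p, ∃ z,
      Filter.Tendsto (normPopulation (p i) (Function.curry ω i)) Filter.atTop (nhds z) := by
  have hpM0 : 0 < p i * (M : ℝ) := zero_lt_one.trans (hp i)
  obtain ⟨ρ, hρinv, hρ1⟩ := exists_between (inv_lt_one_of_one_lt₀ (hp i))
  have hρ0 : 0 < ρ := (inv_pos.2 hpM0).trans hρinv
  obtain ⟨r, hr1, hq⟩ := exists_one_lt_div_mem_Ioo ((inv_lt_iff_one_lt_mul₀ hpM0).1 hρinv)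
  have hnonneg : ∀ ω : Perc1 M, ∀ n, 0 ≤ normPopulation (p i) ω n := fun ω n =>
    div_nonneg (Nat.cast_nonneg _) (pow_nonneg hpM0.le n)
  have hmass : ∀ (ω : Perc1 M) n,
      (∫⁻ x, density (p i) ω n x).toReal = normPopulation (p i) ω n := fun ω n => by
    rw [lintegral_density (p i).2.1, toReal_ofReal (hnonneg ω n)]
  filter_upwards [ae_eventually_abs_lintegral_density_succ_sub_le hp i
    (fun _ => ({()} : Finset Unit)) (H := fun _ _ _ _ => 1) (fun _ _ _ => measurable_const)
    (fun _ _ _ _ _ => rfl) hρ0 hr1 one_pos (C := 1) (fun n => by simp)] with ω hω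
  refine exists_tendsto_of_eventually_abs_sub_le (A := M ^ 2 / 8 + 1) (hnonneg _) (by positivity) hq
    ⟨hρ0, hρ1⟩ (hω.mono fun n hn => ?_)
  have hbound := hn () (Finset.mem_singleton_self _) 1 fun _ => le_rfl
  simp only [mul_one, hmass, NNReal.coe_one] at hbound
  have := pow_nonneg hq.1.le n
  have := hnonneg (Function.curry ω i) n
  have := hρ0.le
  calc _ ≤ (r / (ρ * (p i * M))) ^ n * (M ^ 2 / 8 * normPopulation (p i) (Function.curry ω i) n) +
        ρ ^ n := hbound
    _ ≤ _ := by
        rw [mul_add, mul_left_comm]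
        gcongr
        · linarith
        · exact le_mul_of_one_le_left (by positivity) (by linarith [sq_nonneg (M : ℝ)])

theorem ae_exists_pos_tendsto_normPopulation [Finite ι] (hp : ∀ i, 1 < p i * (M : ℝ)) (i : ι) :
    ∀ᵐ ω ∂jointLaw M p, (∀ n, (alive (Function.curry ω i) n).Nonempty) →
      ∃ z > 0,
        Filter.Tendsto (normPopulation (p i) (Function.curry ω i)) Filter.atTop (nhds z) := by
  have hmeas : Measurable fun (ω : ι × Word1 M → Bool) => Function.curry ω i :=
    measurable_pi_lambda _ fun v => measurable_pi_apply (i, v)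
  have hextinct := ae_of_ae_map hmeas.aemeasurable <|
    (map_curry_jointLaw (p := p) i).symm ▸ ae_exists_alive_eq_empty_of_tendsto_zero (p i) (hp i)
  filter_upwards [ae_exists_tendsto_normPopulation hp i, hextinct] with ω ⟨z, hz⟩ hzero halive
  have hz0 : 0 ≤ z := ge_of_tendsto' hz fun n =>
    div_nonneg (Nat.cast_nonneg _) (pow_nonneg (zero_lt_one.trans (hp i)).le n)
  refine ⟨z, hz0.lt_of_ne' fun h => ?_, hz⟩
  obtain ⟨n, hn⟩ := hzero (h ▸ hz)
  exact (halive n).ne_empty hn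

end PopulationLimit

section ListConvolution

variable {ι G : Type*} [AddCommGroup G] [MeasurableSpace G] {μ : Measure G} {f g : ι → G → ℝ≥0∞}
  {i : ι} {l l' : List ι}

/-- The convolution of the functions `f i` for `i` running through a list. For the empty list,
where it should be a Dirac mass, it is given the junk value `0`. -/
def listConv (μ : Measure G) (f : ι → G → ℝ≥0∞) : List ι → G → ℝ≥0∞
  | [] => 0
  | [i] => f i
  | i :: j :: l => f i ⋆ₗ[μ] listConv μ f (j :: l)

theorem listConv_cons (hl : l ≠ []) : listConv μ f (i :: l) = f i ⋆ₗ[μ] listConv μ f l := by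
  cases l with
  | nil => exact absurd rfl hl
  | cons j l => rfl

theorem listConv_congr (h : ∀ i ∈ l, f i = g i) : listConv μ f l = listConv μ g l := by
  induction l with
  | nil => rfl
  | cons i l ih =>
    rw [List.forall_mem_cons] at h
    rcases eq_or_ne l [] with rfl | hl
    · exact h.1
    · rw [listConv_cons hl, listConv_cons hl, h.1, ih h.2]

theorem listConv_le_pow_mul {c : ℝ≥0∞} (hc : c ≠ ∞) (h : ∀ i ∈ l, ∀ x, f i x ≤ c * g i x) (x : G) :
    listConv μ f l x ≤ c ^ l.length * listConv μ g l x := by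
  induction l generalizing x with
  | nil => exact zero_le
  | cons i l ih =>
    rw [List.forall_mem_cons] at h
    rcases eq_or_ne l [] with rfl | hl
    · simpa [listConv] using h.1 x
    calc listConv μ f (i :: l) x = ∫⁻ y, f i y * listConv μ f l (-y + x) ∂μ := by
          rw [listConv_cons hl, lconvolution_def]
      _ ≤ ∫⁻ y, c * g i y * (c ^ l.length * listConv μ g l (-y + x)) ∂μ := by
          gcongr with y
          exacts [h.1 y, ih h.2 _]
      _ = ∫⁻ y, c ^ (l.length + 1) * (g i y * listConv μ g l (-y + x)) ∂μ := by
          congr with y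
          ring
      _ = c ^ (l.length + 1) * listConv μ g (i :: l) x := by
          rw [lintegral_const_mul' _ _ (pow_ne_top hc), listConv_cons hl, lconvolution_def]

theorem exists_sum_eq_of_listConv_ne_zero {x : G} (hl : l.Nodup) (hx : listConv μ f l x ≠ 0) :
    ∃ y : ι → G, (∀ i ∈ l, f i (y i) ≠ 0) ∧ (l.map y).sum = x := by
  classical
  induction l generalizing x with
  | nil => exact absurd rfl hx
  | cons i l ih =>
    obtain ⟨hi, hl⟩ := List.nodup_cons.1 hl
    rcases eq_or_ne l [] with rfl | hne
    · exact ⟨fun _ => x, by simpa [listConv] using hx, by simp⟩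
    rw [listConv_cons hne, lconvolution_def] at hx
    obtain ⟨z, hz⟩ : ∃ z, f i z * listConv μ f l (-z + x) ≠ 0 := by
      by_contra! h
      exact hx (by simp [h])
    obtain ⟨y, hy, hsum⟩ := ih hl (right_ne_zero_of_mul hz)
    have hupdate : ∀ j ∈ l, Function.update y i z j = y j := fun j hj =>
      Function.update_of_ne (ne_of_mem_of_not_mem hj hi) _ _
    refine ⟨Function.update y i z, List.forall_mem_cons.2 ⟨?_, fun j hj => ?_⟩, ?_⟩
    · rw [Function.update_self]
      exact left_ne_zero_of_mul hz
    · rw [hupdate j hj]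
      exact hy j hj
    · rw [List.map_cons, List.sum_cons, Function.update_self, List.map_congr_left hupdate, hsum,
        add_neg_cancel_left]

variable [MeasurableAdd₂ G] [MeasurableNeg G]

theorem lconvolution_le_lconvolution_add [μ.IsAddLeftInvariant] {f g : G → ℝ≥0∞} {B : NNReal}
    (hf : Measurable f) (hg : Measurable g) (hB : ∀ x, g x ≤ B) (s t : G) :
    (f ⋆ₗ[μ] g) t ≤ (f ⋆ₗ[μ] g) s + B * ∫⁻ y, (f y - f (y + (s - t))) ∂μ := by
  have hshift : (f ⋆ₗ[μ] g) s = ∫⁻ y, f (y + (s - t)) * g (-y + t) ∂μ := by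
    rw [lconvolution_def, ← lintegral_add_right_eq_self _ (s - t)]
    congr with y
    rw [show -(y + (s - t)) + s = -y + t by abel]
  rw [hshift, lconvolution_def, ← lintegral_const_mul _ (by fun_prop),
    ← lintegral_add_left (by fun_prop)]
  gcongr with y
  calc f y * g (-y + t) ≤ (f (y + (s - t)) + (f y - f (y + (s - t)))) * g (-y + t) := by
        gcongr
        exact le_add_tsub
    _ ≤ f (y + (s - t)) * g (-y + t) + B * (f y - f (y + (s - t))) := by
        rw [add_mul, mul_comm (B : ℝ≥0∞)]
        gcongr
        exact hB _

variable [SFinite μ]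

theorem measurable_listConv (hf : ∀ i, Measurable (f i)) : Measurable (listConv μ f l) := by
  induction l with
  | nil => exact measurable_const
  | cons i l ih =>
    rcases eq_or_ne l [] with rfl | hl
    · exact hf i
    · rw [listConv_cons hl]
      exact measurable_lconvolution μ (hf i) ih

variable [μ.IsAddLeftInvariant]

theorem lintegral_lconvolution {f g : G → ℝ≥0∞} (hf : Measurable f) (hg : Measurable g) :
    ∫⁻ x, (f ⋆ₗ[μ] g) x ∂μ = (∫⁻ x, f x ∂μ) * ∫⁻ x, g x ∂μ := by
  have htranslate : ∀ y, ∫⁻ x, f y * g (-y + x) ∂μ = f y * ∫⁻ x, g x ∂μ := fun y => by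
    rw [lintegral_const_mul _ (by fun_prop), lintegral_add_left_eq_self g (-y)]
  simp only [lconvolution_def]
  rw [lintegral_lintegral_swap (by fun_prop)]
  simp only [htranslate]
  exact lintegral_mul_const _ hf

theorem lintegral_listConv (hf : ∀ i, Measurable (f i)) (hl : l ≠ []) :
    ∫⁻ x, listConv μ f l x ∂μ = (l.map fun i => ∫⁻ x, f i x ∂μ).prod := by
  induction l, hl using List.recNeNil with
  | singleton i => simp [listConv]
  | cons i l hl ih =>
    rw [listConv_cons hl, lintegral_lconvolution (hf i) (measurable_listConv hf), ih,
      List.map_cons, List.prod_cons]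

variable [μ.IsNegInvariant]

theorem listConv_perm (hf : ∀ i, Measurable (f i)) (h : l.Perm l') :
    listConv μ f l = listConv μ f l' := by
  induction h with
  | nil => rfl
  | @cons i l₁ l₂ h ih =>
    rcases eq_or_ne l₁ [] with rfl | hl
    · rw [List.nil_perm.1 h]
    · rw [listConv_cons hl, listConv_cons (mt (fun h₂ => (h₂ ▸ h).eq_nil) hl), ih]
  | swap i j l =>
    rcases eq_or_ne l [] with rfl | hl
    · exact lconvolution_comm
    have hmeas : Measurable (listConv μ f l) := measurable_listConv hf
    rw [listConv_cons (List.cons_ne_nil _ _), listConv_cons (List.cons_ne_nil _ _),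
      listConv_cons hl, listConv_cons hl, lconvolution_assoc (hf j) (hf i) hmeas,
      lconvolution_assoc (hf i) (hf j) hmeas, lconvolution_comm (f := f j)]
  | trans _ _ ih₁ ih₂ => exact ih₁.trans ih₂

theorem exists_forall_listConv_le (hf : ∀ i, Measurable (f i))
    (hbdd : ∀ i, ∃ B : NNReal, ∀ x, f i x ≤ B) (hint : ∀ i, ∫⁻ x, f i x ∂μ ≠ ∞) (l : List ι) :
    ∃ B : NNReal, ∀ x, listConv μ f l x ≤ B := by
  cases l with
  | nil => exact ⟨0, fun _ => zero_le⟩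
  | cons i l =>
    rcases eq_or_ne l [] with rfl | hl
    · exact hbdd i
    obtain ⟨B, hB⟩ := hbdd i
    have hmass : ∫⁻ x, listConv μ f l x ∂μ ≠ ∞ := by
      rw [lintegral_listConv hf hl]
      exact List.prod_induction (· ≠ ∞) (fun _ _ => mul_ne_top) one_ne_top
        (by simpa using fun i _ => hint i)
    refine ⟨(B * ∫⁻ x, listConv μ f l x ∂μ).toNNReal, fun x => ?_⟩
    rw [coe_toNNReal (by finiteness), listConv_cons hl, lconvolution_comm, lconvolution_def]
    calc ∫⁻ y, listConv μ f l y * f i (-y + x) ∂μ ≤ ∫⁻ y, B * listConv μ f l y ∂μ := by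
          simp only [mul_comm (B : ℝ≥0∞)]
          gcongr
          exact hB _
      _ = _ := lintegral_const_mul _ (measurable_listConv hf)

end ListConvolution

section ScaledDensity

variable {M n : ℕ} {p c : ℝ} {ω : Perc1 M}

theorem ofReal_inv_le_natCast (hp : 1 < p * M) : ENNReal.ofReal p⁻¹ ≤ M := by
  have hp0 : 0 < p := pos_of_mul_pos_left (zero_lt_one.trans hp) (Nat.cast_nonneg M)
  rw [← ENNReal.ofReal_natCast]
  exact ofReal_le_ofReal ((inv_le_iff_one_le_mul₀' hp0).2 hp.le)

theorem lintegral_comp_div {f : ℝ → ℝ≥0∞} (hf : Measurable f) (hc : c ≠ 0) :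
    ∫⁻ y, f (y / c) = ENNReal.ofReal |c| * ∫⁻ x, f x := by
  have hmap := Real.map_volume_mul_right (inv_ne_zero hc)
  rw [inv_inv] at hmap
  simp only [div_eq_mul_inv]
  rw [← lintegral_map hf (measurable_mul_const _), hmap, lintegral_smul_measure, smul_eq_mul]

/-- The density of the `n`-th stage of the percolation dilated by `c`, up to the factor `|c|⁻¹`. -/
def scaledDensity (p c : ℝ) (ω : Perc1 M) (n : ℕ) (y : ℝ) : ℝ≥0∞ := density p ω n (y / c)

theorem measurable_scaledDensity : Measurable (scaledDensity p c ω n) :=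
  measurable_density.comp (measurable_id.div_const c)

theorem lintegral_scaledDensity (hp : 0 ≤ p) (hc : c ≠ 0) :
    ∫⁻ y, scaledDensity p c ω n y = ENNReal.ofReal (|c| * normPopulation p ω n) := by
  rw [ENNReal.ofReal_mul (abs_nonneg c), ← lintegral_density hp]
  exact lintegral_comp_div measurable_density hc

theorem lconvolution_scaledDensity {f : ℝ → ℝ≥0∞} (hf : Measurable f) (hc : c ≠ 0) (t : ℝ) :
    (scaledDensity p c ω n ⋆ₗ f) t =
      ∫⁻ x, density p ω n x * (ENNReal.ofReal |c| * f (t - c * x)) := by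
  have hmeas : Measurable fun x => density p ω n x * f (t - c * x) :=
    measurable_density.mul (hf.comp (by fun_prop))
  simp only [mul_left_comm _ (ENNReal.ofReal |c|)]
  rw [lintegral_const_mul _ hmeas, ← lintegral_comp_div hmeas hc, lconvolution_def]
  congr with y
  rw [scaledDensity, mul_div_cancel₀ y hc, neg_add_eq_sub]

theorem lintegral_scaledDensity_sub_le (hc : c ≠ 0) (h : ℝ) :
    ∫⁻ y, (scaledDensity p c ω n y - scaledDensity p c ω n (y + h)) ≤
      (ENNReal.ofReal p⁻¹ * M) ^ n * ENNReal.ofReal |h| := by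
  have hmeas : Measurable fun x => density p ω n x - density p ω n (x + h / c) :=
    measurable_density.sub (measurable_density.comp (measurable_add_const _))
  calc ∫⁻ y, (scaledDensity p c ω n y - scaledDensity p c ω n (y + h))
      = ENNReal.ofReal |c| * ∫⁻ x, (density p ω n x - density p ω n (x + h / c)) := by
        rw [← lintegral_comp_div hmeas hc]
        simp only [scaledDensity, add_div]
    _ ≤ ENNReal.ofReal |c| * ((ENNReal.ofReal p⁻¹ * M) ^ n * ENNReal.ofReal |h / c|) := by
        gcongr
        exact lintegral_density_sub_le p ω n _
    _ = (ENNReal.ofReal p⁻¹ * M) ^ n * ENNReal.ofReal |h| := by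
        rw [mul_left_comm, ← ENNReal.ofReal_mul (abs_nonneg c), abs_div,
          mul_div_cancel₀ _ (abs_ne_zero.2 hc)]

theorem mem_Icc_of_density_ne_zero [NeZero M] {x : ℝ} (h : density p ω n x ≠ 0) :
    x ∈ Icc (0 : ℝ) 1 := by
  obtain ⟨w, ⟨hw, -⟩, hx⟩ := mem_iUnion₂.1 <|
    approx1_antitone (Nat.zero_le n) (mem_approx1_of_density_ne_zero h)
  obtain rfl := List.length_eq_zero_iff.1 hw
  simpa [interval1, base1] using hx

end ScaledDensity

section SumDensity

variable {ι : Type*} {M n : ℕ} {p : ι → unitInterval} {a : ι → ℝ} {ω : ι × Word1 M → Bool}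
  {lev : ι → ℕ} {i : ι} {l : List ι} {t : ℝ}

/-- The density of `∑ i ∈ l, a i * X i`, up to the factor `∏ i ∈ l, |a i|⁻¹`, where the `X i` are
distributed independently according to the densities of stage `lev i` of the percolations. -/
def sumDensity (p : ι → unitInterval) (a : ι → ℝ) (ω : ι × Word1 M → Bool) (lev : ι → ℕ)
    (l : List ι) : ℝ → ℝ≥0∞ :=
  listConv volume (fun i => scaledDensity (p i) (a i) (Function.curry ω i) (lev i)) l

theorem measurable_sumDensity : Measurable (sumDensity p a ω lev l) :=
  measurable_listConv fun _ => measurable_scaledDensity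

theorem lintegral_sumDensity (ha : ∀ i, a i ≠ 0) (hl : l ≠ []) :
    ∫⁻ t, sumDensity p a ω lev l t =
      (l.map fun i => ENNReal.ofReal
        (|a i| * normPopulation (p i) (Function.curry ω i) (lev i))).prod := by
  rw [sumDensity, lintegral_listConv (fun _ => measurable_scaledDensity) hl]
  simp only [lintegral_scaledDensity (p _).2.1 (ha _)]

theorem sumDensity_perm {l' : List ι} (h : l.Perm l') :
    sumDensity p a ω lev l = sumDensity p a ω lev l' :=
  listConv_perm (fun _ => measurable_scaledDensity) h

theorem sumDensity_congr_lev {lev' : ι → ℕ} (h : ∀ i ∈ l, lev i = lev' i) :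
    sumDensity p a ω lev l = sumDensity p a ω lev' l :=
  listConv_congr fun i hi => by rw [h i hi]

theorem dependsOn_sumDensity :
    DependsOn (fun ω : ι × Word1 M → Bool => sumDensity p a ω lev l)
      {q | q.1 ∈ l ∧ q.2.1.length ≤ lev q.1} := fun ω ω' h =>
  listConv_congr fun i hi => by
    have hdensity := density_congr (p := p i) fun v (hv : v.1.length ≤ lev i) => h (i, v) ⟨hi, hv⟩
    exact funext fun y => congrFun hdensity (y / a i)

theorem sumDensity_cons (ha : a i ≠ 0) (hl : l ≠ []) :
    sumDensity p a ω lev (i :: l) t = ∫⁻ x, density (p i) (Function.curry ω i) (lev i) x *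
      (ENNReal.ofReal |a i| * sumDensity p a ω lev l (t - a i * x)) := by
  rw [sumDensity, listConv_cons hl]
  exact lconvolution_scaledDensity measurable_sumDensity ha t

theorem abs_sum_map_mul_le (a : ι → ℝ) {x : ι → ℝ} (hx : ∀ i ∈ l, x i ∈ Icc (0 : ℝ) 1) :
    |(l.map fun i => a i * x i).sum| ≤ (l.map fun i => |a i|).sum := by
  induction l with
  | nil => simp
  | cons i l ih =>
    obtain ⟨hi, hl⟩ := List.forall_mem_cons.1 hx
    simp only [List.map_cons, List.sum_cons]
    refine (abs_add_le _ _).trans (add_le_add ?_ (ih hl))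
    rw [abs_mul, abs_of_nonneg hi.1]
    exact mul_le_of_le_one_right (abs_nonneg _) hi.2

theorem exists_sum_eq_of_sumDensity_ne_zero (ha : ∀ i, a i ≠ 0) (hl : l.Nodup)
    (h : sumDensity p a ω lev l t ≠ 0) :
    ∃ x : ι → ℝ, (∀ i ∈ l, density (p i) (Function.curry ω i) (lev i) (x i) ≠ 0) ∧
      (l.map fun i => a i * x i).sum = t := by
  obtain ⟨y, hy, hsum⟩ := exists_sum_eq_of_listConv_ne_zero hl h
  refine ⟨fun i => y i / a i, hy, ?_⟩
  simpa only [mul_div_cancel₀ _ (ha _)] using hsum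

/-- The supremum of `sumDensity` when all percolations are at stage `n`. -/
def supDensity (p : ι → unitInterval) (a : ι → ℝ) (ω : ι × Word1 M → Bool) (n : ℕ)
    (l : List ι) : ℝ :=
  (⨆ t, sumDensity p a ω (fun _ => n) l t).toReal

theorem supDensity_nonneg : 0 ≤ supDensity p a ω n l := toReal_nonneg

theorem supDensity_le {C : ℝ} (hC : 0 ≤ C)
    (h : ∀ t, sumDensity p a ω (fun _ => n) l t ≤ ENNReal.ofReal C) : supDensity p a ω n l ≤ C :=
  toReal_le_of_le_ofReal hC (iSup_le h)

variable [NeZero M]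

theorem abs_le_of_sumDensity_ne_zero (ha : ∀ i, a i ≠ 0) (hl : l.Nodup)
    (h : sumDensity p a ω lev l t ≠ 0) : |t| ≤ (l.map fun i => |a i|).sum := by
  obtain ⟨x, hx, rfl⟩ := exists_sum_eq_of_sumDensity_ne_zero ha hl h
  exact abs_sum_map_mul_le a fun i hi => mem_Icc_of_density_ne_zero (hx i hi)

theorem exists_forall_sumDensity_le (ha : ∀ i, a i ≠ 0) (p : ι → unitInterval)
    (ω : ι × Word1 M → Bool) (lev : ι → ℕ) (l : List ι) :
    ∃ B : NNReal, ∀ t, sumDensity p a ω lev l t ≤ B := by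
  refine exists_forall_listConv_le (fun _ => measurable_scaledDensity) (fun i => ?_) (fun i => ?_) l
  · refine ⟨(ENNReal.ofReal (p i : ℝ)⁻¹ ^ lev i).toNNReal, fun y => ?_⟩
    rw [ENNReal.coe_toNNReal (by finiteness)]
    exact density_le _ _ _ _
  · rw [lintegral_scaledDensity (p i).2.1 (ha i)]
    exact ofReal_ne_top

theorem sumDensity_le_supDensity (ha : ∀ i, a i ≠ 0) :
    sumDensity p a ω (fun _ => n) l t ≤ ENNReal.ofReal (supDensity p a ω n l) := by
  obtain ⟨B, hB⟩ := exists_forall_sumDensity_le ha p ω (fun _ => n) l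
  rw [supDensity, ofReal_toReal (ne_top_of_le_ne_top coe_ne_top (iSup_le hB))]
  exact le_iSup (sumDensity p a ω (fun _ => n) l) t

theorem abs_sumDensity_cons_sub_le (ha : ∀ i, a i ≠ 0) (hp : 1 < p i * (M : ℝ)) (hl : l ≠ [])
    {B : NNReal} (hB : ∀ t, sumDensity p a ω lev l t ≤ B) (s t : ℝ) :
    |(sumDensity p a ω lev (i :: l) s).toReal - (sumDensity p a ω lev (i :: l) t).toReal| ≤
      B * ((M ^ 2) ^ lev i * |s - t|) := by
  have hfin : ∀ t, sumDensity p a ω lev (i :: l) t ≠ ∞ := fun t =>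
    (exists_forall_sumDensity_le ha p ω lev (i :: l)).elim fun B hB =>
      ne_top_of_le_ne_top coe_ne_top (hB t)
  have hone : ∀ s t, (sumDensity p a ω lev (i :: l) t).toReal ≤
      (sumDensity p a ω lev (i :: l) s).toReal + B * ((M ^ 2) ^ lev i * |s - t|) := fun s t => by
    have hconv : sumDensity p a ω lev (i :: l) t ≤ sumDensity p a ω lev (i :: l) s +
        B * ((M ^ 2) ^ lev i * ENNReal.ofReal |s - t|) :=
      calc sumDensity p a ω lev (i :: l) t ≤ sumDensity p a ω lev (i :: l) s + B *
            ((ENNReal.ofReal (p i : ℝ)⁻¹ * M) ^ lev i * ENNReal.ofReal |s - t|) := by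
            rw [sumDensity, listConv_cons hl]
            refine (lconvolution_le_lconvolution_add measurable_scaledDensity measurable_sumDensity
              hB s t).trans ?_
            gcongr
            exacts [le_rfl, lintegral_scaledDensity_sub_le (ha i) (s - t)]
        _ ≤ _ := by
            rw [sq]
            gcongr
            exact ofReal_inv_le_natCast hp
    have := toReal_mono (by finiteness [hfin s]) hconv
    rwa [toReal_add (hfin s) (by finiteness), toReal_mul, toReal_mul, toReal_pow, toReal_pow,
      toReal_ofReal (abs_nonneg _), coe_toReal, toReal_natCast] at this
  rw [abs_sub_le_iff, sub_le_iff_le_add', sub_le_iff_le_add']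
  exact ⟨by simpa only [abs_sub_comm] using hone t s, hone s t⟩

end SumDensity

section Increments

variable {ι : Type*} [DecidableEq ι] {M n : ℕ} {p : ι → unitInterval} {a : ι → ℝ} {i : ι}
  {l : List ι} {U : Finset ι}

/-- Stage `n + 1` for the percolations in `U` and stage `n` for the others. The passage from stage
`n` to stage `n + 1` is made one percolation at a time. -/
def mixedLevel (U : Finset ι) (n : ℕ) (i : ι) : ℕ := if i ∈ U then n + 1 else n

theorem mixedLevel_le : mixedLevel U n i ≤ n + 1 := by
  unfold mixedLevel
  split_ifs <;> omega

theorem sumDensity_mixedLevel_le [NeZero M] (ha : ∀ i, a i ≠ 0) (hp : ∀ i, 1 < p i * (M : ℝ))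
    {ω : ι × Word1 M → Bool} (t : ℝ) :
    sumDensity p a ω (mixedLevel U n) l t ≤
      ENNReal.ofReal (M ^ l.length * supDensity p a ω n l) := by
  have hlevel : ∀ i ∈ l, ∀ y,
      scaledDensity (p i) (a i) (Function.curry ω i) (mixedLevel U n i) y ≤
        M * scaledDensity (p i) (a i) (Function.curry ω i) n y := fun i _ y => by
    unfold mixedLevel
    split_ifs
    · exact density_succ_le.trans (by gcongr; exacts [ofReal_inv_le_natCast (hp i), le_rfl])
    · exact le_mul_of_one_le_left' (Nat.one_le_cast.2 (NeZero.one_le))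
  calc sumDensity p a ω (mixedLevel U n) l t ≤ M ^ l.length * sumDensity p a ω (fun _ => n) l t :=
        listConv_le_pow_mul (natCast_ne_top M) hlevel t
    _ ≤ M ^ l.length * ENNReal.ofReal (supDensity p a ω n l) := by
        gcongr
        exact sumDensity_le_supDensity ha
    _ = ENNReal.ofReal (M ^ l.length * supDensity p a ω n l) := by
        rw [ENNReal.ofReal_mul (by positivity), ENNReal.ofReal_pow (by positivity),
          ENNReal.ofReal_natCast]

theorem sumDensity_mixedLevel_cons {m : ℕ} (hl : l ≠ []) (hai : a i ≠ 0)
    {V : Finset ι} (hV : mixedLevel V n i = m) (hUV : ∀ j ∈ l, j ∈ V ↔ j ∈ U)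
    {ω : ι × Word1 M → Bool} {t : ℝ} :
    sumDensity p a ω (mixedLevel V n) (i :: l) t = ∫⁻ x, density (p i) (Function.curry ω i) m x *
      (ENNReal.ofReal |a i| * sumDensity p a ω (mixedLevel U n) l (t - a i * x)) := by
  have hlev : ∀ j ∈ l, mixedLevel V n j = mixedLevel U n j := fun j hj =>
    if_congr (hUV j hj) rfl rfl
  rw [sumDensity_cons hai hl, hV, sumDensity_congr_lev hlev]

theorem abs_sumDensity_mixedLevel_cons_sub_le (ha : ∀ i, a i ≠ 0)
    (hp : ∀ i, 1 < p i * (M : ℝ)) (hl : l ≠ []) (ω : ι × Word1 M → Bool) (s t : ℝ) :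
    |(sumDensity p a ω (mixedLevel U n) (i :: l) s).toReal -
        (sumDensity p a ω (mixedLevel U n) (i :: l) t).toReal| ≤
      M ^ l.length * supDensity p a ω n l * ((M ^ 2) ^ (n + 1) * |s - t|) := by
  have : NeZero M := neZero_of_one_lt_mul (hp i)
  have hsup : 0 ≤ supDensity p a ω n l := supDensity_nonneg
  refine (abs_sumDensity_cons_sub_le ha (hp i) hl (sumDensity_mixedLevel_le ha hp) s t).trans ?_
  rw [Real.coe_toNNReal _ (by positivity)]
  gcongr
  exacts [one_le_pow₀ (Nat.one_le_cast.2 NeZero.one_le), mixedLevel_le]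

theorem abs_sumDensity_mixedLevel_cons_sub_le_mul_pow (ha : ∀ i, a i ≠ 0)
    (hp : ∀ i, 1 < p i * (M : ℝ)) (hl : l ≠ []) {ω : ι × Word1 M → Bool} {D ρ r : ℝ} {κ : ℕ}
    (hD : 0 ≤ D) (hρ : 0 ≤ ρ) (hκ : 0 < κ) (hκ' : (M : ℝ) ^ 2 * (p i * M) / r ^ 2 ≤ κ)
    (hsup : supDensity p a ω n l ≤ D * (ρ * (p i * M) / r ^ 2) ^ n) {s t : ℝ}
    (hst : |s - t| ≤ ((κ : ℝ) ^ n)⁻¹) :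
    |(sumDensity p a ω (mixedLevel U n) (i :: l) s).toReal -
        (sumDensity p a ω (mixedLevel U n) (i :: l) t).toReal| ≤
      M ^ l.length * D * M ^ 2 * ρ ^ n := by
  have hpM : 0 < p i * (M : ℝ) := zero_lt_one.trans (hp i)
  calc _ ≤ M ^ l.length * supDensity p a ω n l * ((M ^ 2) ^ (n + 1) * |s - t|) :=
        abs_sumDensity_mixedLevel_cons_sub_le ha hp hl ω s t
    _ ≤ M ^ l.length * (D * (ρ * (p i * M) / r ^ 2) ^ n) *
        ((M ^ 2) ^ (n + 1) * ((κ : ℝ) ^ n)⁻¹) := by gcongr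
    _ = M ^ l.length * D * M ^ 2 * (ρ * (M ^ 2 * (p i * M) / r ^ 2 / κ)) ^ n := by
        rw [← inv_pow, pow_succ]
        simp only [div_eq_mul_inv, mul_pow]
        ring
    _ ≤ M ^ l.length * D * M ^ 2 * (ρ * 1) ^ n := by
        gcongr
        exact (div_le_one (Nat.cast_pos.2 hκ)).2 hκ'
    _ = M ^ l.length * D * M ^ 2 * ρ ^ n := by rw [mul_one]

theorem exists_mem_Icc_abs_sub_div_le {N κ : ℕ} (hκ : 0 < κ) {t : ℝ} (ht : |t| ≤ N) (n : ℕ) :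
    ∃ k ∈ Finset.Icc (-(N * κ ^ n : ℤ)) (N * κ ^ n),
      |t - k / (κ : ℝ) ^ n| ≤ ((κ : ℝ) ^ n)⁻¹ := by
  have hpos : 0 < (κ : ℝ) ^ n := by positivity
  obtain ⟨hlow, hhigh⟩ := abs_le.1 ht
  refine ⟨⌊t * κ ^ n⌋, Finset.mem_Icc.2 ⟨Int.le_floor.2 ?_, ?_⟩, ?_⟩
  · push_cast
    rw [← neg_mul]
    gcongr
  · exact_mod_cast (Int.floor_le (t * κ ^ n)).trans (by gcongr : t * (κ : ℝ) ^ n ≤ N * κ ^ n)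
  · have hfract : t - ⌊t * κ ^ n⌋ / (κ : ℝ) ^ n = Int.fract (t * κ ^ n) * ((κ : ℝ) ^ n)⁻¹ := by
      rw [Int.fract]
      field_simp
    rw [hfract, abs_of_nonneg (mul_nonneg (Int.fract_nonneg _) (inv_nonneg.2 hpos.le))]
    exact mul_le_of_le_one_left (inv_nonneg.2 hpos.le) (Int.fract_lt_one _).le

theorem abs_sub_le_of_forall_mem_Icc {N κ : ℕ} (hκ : 0 < κ) {f g : ℝ → ℝ} {b c : ℝ}
    (hzero : ∀ t : ℝ, N < |t| → f t = g t)
    (hf : ∀ s t, |s - t| ≤ ((κ : ℝ) ^ n)⁻¹ → |f s - f t| ≤ c)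
    (hg : ∀ s t, |s - t| ≤ ((κ : ℝ) ^ n)⁻¹ → |g s - g t| ≤ c)
    (hgrid : ∀ k ∈ Finset.Icc (-(N * κ ^ n : ℤ)) (N * κ ^ n),
      |f (k / (κ : ℝ) ^ n) - g (k / (κ : ℝ) ^ n)| ≤ b) (t : ℝ) :
    |f t - g t| ≤ b + 2 * c := by
  rcases le_or_gt |t| N with ht | ht
  · obtain ⟨k, hk, htk⟩ := exists_mem_Icc_abs_sub_div_le hκ ht n
    have hfk := abs_sub_le_iff.1 (hf _ _ htk)
    have hgk := abs_sub_le_iff.1 (hg _ _ htk)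
    have hk' := abs_sub_le_iff.1 (hgrid k hk)
    exact abs_sub_le_iff.2 ⟨by linarith, by linarith⟩
  · have hb : 0 ≤ b := (abs_nonneg _).trans <| hgrid 0 <|
      Finset.mem_Icc.2 ⟨neg_nonpos.2 (by positivity), by positivity⟩
    have hc : 0 ≤ c := (abs_nonneg _).trans (hf t t (by rw [sub_self, abs_zero]; positivity))
    rw [hzero t ht, sub_self, abs_zero]
    positivity

theorem card_Icc_neg_mul_pow_le {N κ : ℕ} (hκ : 0 < κ) (n : ℕ) :
    ((Finset.Icc (-(N * κ ^ n : ℤ)) (N * κ ^ n)).card : ℝ) ≤ (2 * N + 1) * κ ^ n := by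
  have hcard : (Finset.Icc (-(N * κ ^ n : ℤ)) (N * κ ^ n)).card = 2 * (N * κ ^ n) + 1 := by
    have hnonneg : (0 : ℤ) ≤ N * κ ^ n := by positivity
    rw [Int.card_Icc]
    zify
    omega
  have : (1 : ℝ) ≤ (κ : ℝ) ^ n := one_le_pow₀ (Nat.one_le_cast.2 hκ)
  rw [hcard]
  push_cast
  linarith

theorem dependsOn_sumDensity_mixedLevel (hi : i ∉ l) :
    DependsOn (fun ω => sumDensity p a ω (mixedLevel U n) l)
      {q : ι × Word1 M | q.1 ≠ i ∧ q.2.1.length ≤ n + 1} := fun _ _ h =>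
  dependsOn_sumDensity fun q hq => h q ⟨fun hqi => hi (hqi ▸ hq.1), hq.2.trans mixedLevel_le⟩

theorem div_pow_mul_div_sq_pow {r m : ℝ} (hr : r ≠ 0) (hm : m ≠ 0) (n : ℕ) :
    (r / m) ^ n * (m / r ^ 2) ^ n = r⁻¹ ^ n := by
  rw [← mul_pow]
  field_simp

variable [Finite ι]

theorem ae_exists_eventually_abs_sumDensity_sub_le (ha : ∀ i, a i ≠ 0)
    (hp : ∀ i, 1 < p i * (M : ℝ)) (hi : i ∉ l) (hl : l ≠ []) (hiU : i ∉ U) {κ' : Type*}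
    (J : ℕ → Finset κ') (s : ℕ → κ' → ℝ) {ρ r κ C : ℝ} (hρ : 0 < ρ) (hr : 1 < r) (hκ : 0 < κ)
    (hJ : ∀ n, ((J n).card : ℝ) ≤ C * κ ^ n) :
    ∀ᵐ ω ∂jointLaw M p,
      ∀ D : ℝ, (∀ n, supDensity p a ω n l ≤ D * (ρ * (p i * M) / r ^ 2) ^ n) →
        ∃ A ≥ 0, ∀ᶠ n in Filter.atTop, ∀ k ∈ J n,
          |(sumDensity p a ω (mixedLevel (insert i U) n) (i :: l) (s n k)).toReal -
              (sumDensity p a ω (mixedLevel U n) (i :: l) (s n k)).toReal| ≤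
            A * (r⁻¹ ^ n * supDensity p a ω n (i :: l)) + ρ ^ n := by
  have : NeZero M := neZero_of_one_lt_mul (hp i)
  have hpM : 0 < p i * (M : ℝ) := zero_lt_one.trans (hp i)
  filter_upwards [ae_eventually_abs_lintegral_density_succ_sub_le hp i J
    (H := fun n k ω x =>
      ENNReal.ofReal |a i| * sumDensity p a ω (mixedLevel U n) l (s n k - a i * x))
    (fun n k ω => (measurable_sumDensity.comp (by fun_prop)).const_mul _)
    (fun n k ω ω' h => by simp only [dependsOn_sumDensity_mixedLevel hi h]) hρ hr hκ hJ]
    with ω hω D hD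
  have hD0 : 0 ≤ D := by simpa using supDensity_nonneg.trans (hD 0)
  refine ⟨M ^ 2 / 8 * (|a i| * (M ^ l.length * D)) * M ^ (i :: l).length, by positivity,
    hω.mono fun n hn k hk => ?_⟩
  have hbound := hn k hk (|a i| * (M ^ l.length * (D * (ρ * (p i * M) / r ^ 2) ^ n))).toNNReal
    fun x => by
      change _ ≤ ENNReal.ofReal _
      rw [ENNReal.ofReal_mul (abs_nonneg _)]
      gcongr
      exact (sumDensity_mixedLevel_le ha hp _).trans (by gcongr; exact hD n)
  rw [← sumDensity_mixedLevel_cons hl (ha i) (V := insert i U) (by simp [mixedLevel])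
      fun j hj => by simp [ne_of_mem_of_not_mem hj hi],
    ← sumDensity_mixedLevel_cons hl (ha i) (by simp [mixedLevel, hiU]) fun _ _ => Iff.rfl,
    Real.coe_toNNReal _ (by positivity)] at hbound
  refine hbound.trans (add_le_add_left ?_ _)
  have hsup := toReal_le_of_le_ofReal (mul_nonneg (by positivity) supDensity_nonneg)
    (sumDensity_mixedLevel_le (U := U) (n := n) (l := i :: l) (ω := ω) ha hp (s n k))
  calc _ ≤ (r / (ρ * (p i * M))) ^ n * (M ^ 2 / 8 *
        (|a i| * (M ^ l.length * (D * (ρ * (p i * M) / r ^ 2) ^ n))) *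
        (M ^ (i :: l).length * supDensity p a ω n (i :: l))) := by gcongr
    _ = _ := by
      rw [← div_pow_mul_div_sq_pow (zero_lt_one.trans hr).ne' (mul_pos hρ hpM).ne']
      ring

theorem ae_exists_eventually_forall_abs_sumDensity_sub_le (ha : ∀ i, a i ≠ 0)
    (hp : ∀ i, 1 < p i * (M : ℝ)) (hil : (i :: l).Nodup) (hl : l ≠ []) (hiU : i ∉ U) {ρ r : ℝ}
    (hρ : 0 < ρ) (hr : 1 < r) :
    ∀ᵐ ω ∂jointLaw M p,
      ∀ D : ℝ, (∀ n, supDensity p a ω n l ≤ D * (ρ * (p i * M) / r ^ 2) ^ n) →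
        ∃ A ≥ 0, ∀ᶠ n in Filter.atTop, ∀ t,
          |(sumDensity p a ω (mixedLevel (insert i U) n) (i :: l) t).toReal -
              (sumDensity p a ω (mixedLevel U n) (i :: l) t).toReal| ≤
            A * (r⁻¹ ^ n * supDensity p a ω n (i :: l) + ρ ^ n) := by
  have : NeZero M := neZero_of_one_lt_mul (hp i)
  have hpM : 0 < p i * (M : ℝ) := zero_lt_one.trans (hp i)
  have : 0 < r := zero_lt_one.trans hr
  obtain ⟨N, hN⟩ := exists_nat_ge ((i :: l).map fun i => |a i|).sum
  obtain ⟨κ, hκ⟩ := exists_nat_gt ((M : ℝ) ^ 2 * (p i * M) / r ^ 2)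
  have hκ0 : 0 < κ := Nat.cast_pos.1 (lt_of_le_of_lt (by positivity) hκ)
  filter_upwards [ae_exists_eventually_abs_sumDensity_sub_le ha hp (List.nodup_cons.1 hil).1 hl hiU
    (fun n => Finset.Icc (-(N * κ ^ n : ℤ)) (N * κ ^ n)) (fun n k => k / (κ : ℝ) ^ n)
    hρ hr (Nat.cast_pos.2 hκ0) (card_Icc_neg_mul_pow_le hκ0)] with ω hω D hD
  obtain ⟨A, hA, hgrid⟩ := hω D hD
  have hD0 : 0 ≤ D := by simpa using supDensity_nonneg.trans (hD 0)
  have hlipschitz : ∀ V n (s t : ℝ), |s - t| ≤ ((κ : ℝ) ^ n)⁻¹ → _ := fun V n s t =>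
    abs_sumDensity_mixedLevel_cons_sub_le_mul_pow (U := V) ha hp hl hD0 hρ.le hκ0 hκ.le (hD n)
  have hzero : ∀ V n (t : ℝ), N < |t| → sumDensity p a ω (mixedLevel V n) (i :: l) t = 0 :=
    fun V n t ht => not_not.1 fun h =>
      ht.not_ge ((abs_le_of_sumDensity_ne_zero ha hil h).trans hN)
  set L : ℝ := M ^ l.length * D * M ^ 2
  have : 0 ≤ L := by positivity
  refine ⟨A + (1 + 2 * L), by positivity, hgrid.mono fun n hn t => ?_⟩
  have hsup : 0 ≤ supDensity p a ω n (i :: l) := supDensity_nonneg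
  calc _ ≤ A * (r⁻¹ ^ n * supDensity p a ω n (i :: l)) + ρ ^ n + 2 * (L * ρ ^ n) :=
        abs_sub_le_of_forall_mem_Icc hκ0
          (fun t ht => by rw [hzero _ n t ht, hzero _ n t ht])
          (hlipschitz _ n) (hlipschitz _ n) hn t
    _ = A * (r⁻¹ ^ n * supDensity p a ω n (i :: l)) + (1 + 2 * L) * ρ ^ n := by ring
    _ ≤ (A + (1 + 2 * L)) * (r⁻¹ ^ n * supDensity p a ω n (i :: l) + ρ ^ n) := by
        rw [mul_add]
        exact add_le_add
          (mul_le_mul_of_nonneg_right (le_add_of_nonneg_right (by positivity)) (by positivity))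
          (mul_le_mul_of_nonneg_right (le_add_of_nonneg_left hA) (by positivity))

end Increments

section Growth

variable {ι : Type*} {M n : ℕ} {p : ι → unitInterval} {a : ι → ℝ} {i : ι} {l : List ι}

theorem supDensity_perm {l' : List ι} (h : l.Perm l') {ω : ι × Word1 M → Bool} :
    supDensity p a ω n l = supDensity p a ω n l' := by
  rw [supDensity, supDensity, sumDensity_perm h]

theorem supDensity_succ_le [NeZero M] (ha : ∀ i, a i ≠ 0) {ω : ι × Word1 M → Bool} {b : ℝ}
    (h : ∀ t, |(sumDensity p a ω (fun _ => n + 1) l t).toReal -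
      (sumDensity p a ω (fun _ => n) l t).toReal| ≤ b) :
    supDensity p a ω (n + 1) l ≤ supDensity p a ω n l + b := by
  have hsup : 0 ≤ supDensity p a ω n l := supDensity_nonneg
  refine supDensity_le (add_nonneg hsup ((abs_nonneg _).trans (h 0))) fun t => ?_
  obtain ⟨B, hB⟩ := exists_forall_sumDensity_le ha p ω (fun _ => n + 1) l
  rw [← ofReal_toReal (ne_top_of_le_ne_top coe_ne_top (hB t))]
  have hn := toReal_le_of_le_ofReal hsup (sumDensity_le_supDensity (t := t) (p := p) (l := l) ha)
  exact ofReal_le_ofReal (by linarith [abs_sub_le_iff.1 (h t)])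

theorem supDensity_singleton_le [NeZero M] (p : ι → unitInterval) (a : ι → ℝ)
    (ω : ι × Word1 M → Bool) (i : ι) : supDensity p a ω n [i] ≤ (p i : ℝ)⁻¹ ^ n := by
  have hinv : 0 ≤ (p i : ℝ)⁻¹ := inv_nonneg.2 (p i).2.1
  refine supDensity_le (by positivity) fun t => ?_
  rw [ENNReal.ofReal_pow hinv]
  exact density_le _ _ _ _

variable [DecidableEq ι] [Finite ι]

theorem ae_exists_forall_abs_sumDensity_succ_sub_le (ha : ∀ i, a i ≠ 0)
    (hp : ∀ i, 1 < p i * (M : ℝ)) (hl : l.Nodup) (hl' : 1 < l.length) {ρ r : ℝ}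
    (hρ : 0 < ρ) (hr : 1 < r)
    (hgrowth : ∀ i ∈ l, ∀ᵐ ω ∂jointLaw M p,
      ∃ D, ∀ n, supDensity p a ω n (l.erase i) ≤ D * (ρ * (p i * M) / r ^ 2) ^ n) :
    ∀ᵐ ω ∂jointLaw M p, ∃ A ≥ 0, ∀ᶠ n in Filter.atTop, ∀ t,
      |(sumDensity p a ω (fun _ => n + 1) l t).toReal -
          (sumDensity p a ω (fun _ => n) l t).toReal| ≤
        A * (r⁻¹ ^ n * supDensity p a ω n l + ρ ^ n) := by
  have hpartial : ∀ U ⊆ l.toFinset, ∀ᵐ ω ∂jointLaw M p, ∃ A ≥ 0, ∀ᶠ n in Filter.atTop, ∀ t,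
      |(sumDensity p a ω (mixedLevel U n) l t).toReal -
          (sumDensity p a ω (mixedLevel ∅ n) l t).toReal| ≤
        A * (r⁻¹ ^ n * supDensity p a ω n l + ρ ^ n) := by
    intro U hU
    induction U using Finset.induction_on with
    | empty =>
      refine .of_forall fun ω => ⟨0, le_rfl, .of_forall fun n t => ?_⟩
      rw [sub_self, abs_zero, zero_mul]
    | insert i U hiU ih =>
      obtain ⟨hi, hU⟩ := Finset.insert_subset_iff.1 hU
      rw [List.mem_toFinset] at hi
      have hperm := List.perm_cons_erase hi
      have hne : l.erase i ≠ [] := by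
        rw [← List.length_pos_iff, List.length_erase_of_mem hi]
        omega
      filter_upwards [ih hU, hgrowth i hi, ae_exists_eventually_forall_abs_sumDensity_sub_le ha hp
        (hperm.nodup_iff.1 hl) hne hiU hρ hr] with ω ⟨A, hA, hind⟩ ⟨D, hD⟩ hω
      obtain ⟨B, hB, hstep⟩ := hω D hD
      refine ⟨B + A, add_nonneg hB hA, hind.mp (hstep.mono fun n hstep hind t => ?_)⟩
      rw [← sumDensity_perm hperm, ← sumDensity_perm hperm, ← supDensity_perm hperm] at hstep
      rw [add_mul]
      exact (abs_sub_le _ _ _).trans (add_le_add (hstep t) (hind t))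
  filter_upwards [hpartial l.toFinset subset_rfl] with ω ⟨A, hA, h⟩
  have hlast : ∀ n, sumDensity p a ω (mixedLevel l.toFinset n) l =
      sumDensity p a ω (fun _ => n + 1) l := fun n =>
    sumDensity_congr_lev fun i hi => if_pos (List.mem_toFinset.2 hi)
  have hfirst : ∀ n, sumDensity p a ω (mixedLevel ∅ n) l = sumDensity p a ω (fun _ => n) l :=
    fun n => sumDensity_congr_lev fun i _ => if_neg (Finset.notMem_empty i)
  simp only [hlast, hfirst] at h
  exact ⟨A, hA, h⟩

omit [Finite ι] in
theorem exists_one_lt_and_forall_lt_div_sq_mul_prod_erase {m : ι → ℝ} {ρ b : ℝ}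
    (hm : ∀ i ∈ l, 1 < ρ * m i) (hb : b < ρ * (l.map m).prod) :
    ∃ r > 1, ∀ i ∈ l, 1 < ρ * m i / r ^ 2 ∧ b < ρ * m i / r ^ 2 * ((l.erase i).map m).prod := by
  have hev : ∀ᶠ r : ℝ in nhds 1, ∀ i ∈ l.toFinset,
      1 < ρ * m i / r ^ 2 ∧ b < ρ * m i / r ^ 2 * ((l.erase i).map m).prod := by
    rw [Filter.eventually_all_finset]
    intro i hi
    rw [List.mem_toFinset] at hi
    have hcont : Filter.Tendsto (fun r : ℝ => ρ * m i / r ^ 2) (nhds 1) (nhds (ρ * m i)) := by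
      have : ContinuousAt (fun r : ℝ => ρ * m i / r ^ 2) 1 := by
        fun_prop (disch := norm_num)
      simpa [ContinuousAt] using this
    refine (hcont.eventually_const_lt (hm i hi)).and
      ((hcont.mul_const _).eventually_const_lt ?_)
    rwa [mul_assoc, List.prod_map_erase m hi]
  obtain ⟨r, hr, h⟩ :=
    ((eventually_mem_nhdsWithin (s := Ioi 1)).and (hev.filter_mono nhdsWithin_le_nhds)).exists
  exact ⟨r, hr, fun i hi => h i (List.mem_toFinset.2 hi)⟩

omit [DecidableEq ι] in
theorem ae_exists_forall_supDensity_le (ha : ∀ i, a i ≠ 0) (hp : ∀ i, 1 < p i * (M : ℝ))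
    (hl : l.Nodup) (hne : l ≠ []) {ρ : ℝ} (hρ : 1 < ρ)
    (hM : M < ρ * (l.map fun i => p i * (M : ℝ)).prod) :
    ∀ᵐ ω ∂jointLaw M p, ∃ C, ∀ n, supDensity p a ω n l ≤ C * ρ ^ n := by
  classical
  induction hlen : l.length using Nat.strong_induction_on generalizing l ρ with
  | _ k ih =>
    have hρ0 : 0 < ρ := zero_lt_one.trans hρ
    have : NeZero M := neZero_of_one_lt_mul (hp (l.head hne))
    rcases (Nat.one_le_iff_ne_zero.2 (List.length_eq_zero_iff.not.2 hne)).eq_or_lt with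
      hone | hlen'
    · obtain ⟨i, rfl⟩ := List.length_eq_one_iff.1 hone.symm
      rw [List.map_singleton, List.prod_singleton, ← mul_assoc] at hM
      have hpi : (p i : ℝ)⁻¹ ≤ ρ := (inv_le_iff_one_le_mul₀ <|
        pos_of_mul_pos_left (zero_lt_one.trans (hp i)) (Nat.cast_nonneg M)).2
        (one_le_of_le_mul_right₀ (Nat.cast_pos.2 (NeZero.pos M)) hM.le)
      refine .of_forall fun ω => ⟨1, fun n => (supDensity_singleton_le p a ω i).trans ?_⟩
      rw [one_mul]
      exact pow_le_pow_left₀ (inv_nonneg.2 (p i).2.1) hpi n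
    · obtain ⟨r, hr, hslack⟩ := exists_one_lt_and_forall_lt_div_sq_mul_prod_erase
        (fun i _ => one_lt_mul_of_lt_of_le hρ (hp i).le) hM
      have hlen_erase : ∀ i ∈ l, (l.erase i).length = l.length - 1 := fun i hi =>
        List.length_erase_of_mem hi
      filter_upwards [ae_exists_forall_abs_sumDensity_succ_sub_le ha hp hl hlen' hρ0 hr fun i hi =>
        ih _ (by rw [hlen_erase i hi]; omega) (hl.erase i)
          (List.length_pos_iff.1 (by rw [hlen_erase i hi]; omega))
          (hslack i hi).1 (hslack i hi).2 rfl] with ω ⟨A, hA, h⟩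
      exact exists_forall_le_mul_pow (fun n => supDensity_nonneg) hA
        ⟨inv_pos.2 (zero_lt_one.trans hr), inv_lt_one_of_one_lt₀ hr⟩ hρ
        (h.mono fun n hn => supDensity_succ_le ha hn)

omit [Finite ι] [DecidableEq ι] in
theorem exists_mem_Ioo_forall_lt_mul_of_lt_prod {m : ι → ℝ} {b : ℝ} (hm : ∀ i ∈ l, 1 < m i)
    (hb : b < (l.map m).prod) :
    ∃ ρ ∈ Ioo (0 : ℝ) 1, (∀ i ∈ l, 1 < ρ * m i) ∧ b < ρ * (l.map m).prod := by
  classical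
  have hcont : ∀ c : ℝ, Filter.Tendsto (fun ρ : ℝ => ρ * c) (nhds 1) (nhds c) := fun c => by
    simpa using (Filter.tendsto_id (x := nhds (1 : ℝ))).mul_const c
  have hev : ∀ᶠ ρ : ℝ in nhds 1, 0 < ρ ∧ (∀ i ∈ l.toFinset, 1 < ρ * m i) ∧
      b < ρ * (l.map m).prod := by
    refine (eventually_gt_nhds one_pos).and
      (((Filter.eventually_all_finset _).2 fun i hi => ?_).and ((hcont _).eventually_const_lt hb))
    exact (hcont _).eventually_const_lt (hm i (List.mem_toFinset.1 hi))
  obtain ⟨ρ, hρ1, hρ0, hρm, hρb⟩ :=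
    ((eventually_mem_nhdsWithin (s := Iio 1)).and (hev.filter_mono nhdsWithin_le_nhds)).exists
  exact ⟨ρ, ⟨hρ0, hρ1⟩, fun i hi => hρm i (List.mem_toFinset.2 hi), hρb⟩

omit [DecidableEq ι] in
theorem ae_exists_eventually_abs_sumDensity_succ_sub_le_geometric (ha : ∀ i, a i ≠ 0)
    (hp : ∀ i, 1 < p i * (M : ℝ)) (hl : l.Nodup) (hl' : 1 < l.length)
    (hM : M < (l.map fun i => p i * (M : ℝ)).prod) :
    ∀ᵐ ω ∂jointLaw M p, ∃ C, ∃ s ∈ Ioo (0 : ℝ) 1, ∀ᶠ n in Filter.atTop, ∀ t,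
      |(sumDensity p a ω (fun _ => n + 1) l t).toReal -
          (sumDensity p a ω (fun _ => n) l t).toReal| ≤ C * s ^ n := by
  classical
  have : NeZero M := neZero_of_one_lt_mul
    (hp (l.head (List.length_pos_iff.1 (zero_lt_one.trans hl'))))
  obtain ⟨ρ, hρ, hρm, hρM⟩ := exists_mem_Ioo_forall_lt_mul_of_lt_prod (fun i _ => hp i) hM
  obtain ⟨r, hr, hslack⟩ := exists_one_lt_and_forall_lt_div_sq_mul_prod_erase hρm hρM
  have hq : r⁻¹ ∈ Ioo 0 1 := ⟨inv_pos.2 (zero_lt_one.trans hr), inv_lt_one_of_one_lt₀ hr⟩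
  have hgrowth : ∀ i ∈ l, ∀ᵐ ω ∂jointLaw M p,
      ∃ D, ∀ n, supDensity p a ω n (l.erase i) ≤ D * (ρ * (p i * M) / r ^ 2) ^ n := fun i hi =>
    ae_exists_forall_supDensity_le ha hp (hl.erase i)
      (List.length_pos_iff.1 (by rw [List.length_erase_of_mem hi]; omega))
      (hslack i hi).1 (hslack i hi).2
  filter_upwards [ae_exists_forall_abs_sumDensity_succ_sub_le ha hp hl hl' hρ.1 hr hgrowth]
    with ω ⟨A, hA, h⟩
  obtain ⟨C, s, hs, hC⟩ := exists_forall_pow_mul_add_pow_le (x := fun n => supDensity p a ω n l)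
    (fun n => supDensity_nonneg) hA hq hρ (h.mono fun n hn => supDensity_succ_le ha hn)
  refine ⟨A * C, s, hs, h.mono fun n hn t => (hn t).trans ?_⟩
  rw [mul_assoc]
  exact mul_le_mul_of_nonneg_left (hC n) hA

end Growth

section LimitSet

theorem image_iInter_of_antitone {X Y : Type*} [TopologicalSpace X] [T2Space X]
    [TopologicalSpace Y] [T1Space Y] {f : X → Y} (hf : Continuous f) {K : ℕ → Set X}
    (hK : Antitone K) (hcompact : ∀ n, IsCompact (K n)) : f '' ⋂ n, K n = ⋂ n, f '' K n := by
  refine (image_iInter_subset K f).antisymm fun y hy => ?_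
  rw [mem_iInter] at hy
  have hfiber : IsClosed (f ⁻¹' {y}) := isClosed_singleton.preimage hf
  obtain ⟨x, hx⟩ := IsCompact.nonempty_iInter_of_sequence_nonempty_isCompact_isClosed
    (fun n => K n ∩ f ⁻¹' {y}) (fun n => inter_subset_inter_left _ (hK n.le_succ)) hy
    ((hcompact 0).inter_right hfiber) fun n => (hcompact n).isClosed.inter hfiber
  rw [← iInter_inter] at hx
  exact ⟨x, hx⟩

variable {ι : Type*} {M : ℕ}

theorem isCompact_approx1 (ω : Perc1 M) (n : ℕ) : IsCompact (approx1 M ω n) :=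
  ((alive ω n).finite_toSet.subset fun _ hw => mem_alive.2 hw).isCompact_biUnion
    fun _ _ => isCompact_Icc

variable [NeZero M]

theorem limit1_eq_iInter (ω : Perc1 M) : limit1 M ω = ⋂ n, approx1 M ω n :=
  (iInf_ge_eq_iInf_nat_add _ 1).trans (approx1_antitone.iInf_nat_add 1)

theorem limit1_nonempty_iff {ω : Perc1 M} :
    (limit1 M ω).Nonempty ↔ ∀ n, (alive ω n).Nonempty := by
  have halive : ∀ n, (approx1 M ω n).Nonempty ↔ (alive ω n).Nonempty := fun n => by
    have hinterval : ∀ w, (interval1 M w).Nonempty := fun w =>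
      nonempty_Icc.2 (le_add_of_nonneg_right (by positivity))
    simp only [approx1, nonempty_iUnion, hinterval, exists_prop, and_true, Finset.Nonempty,
      mem_alive, mem_ofPred_eq]
  rw [limit1_eq_iInter]
  simp only [← halive]
  refine ⟨fun h n => h.mono (iInter_subset _ n), fun h => ?_⟩
  exact IsCompact.nonempty_iInter_of_sequence_nonempty_isCompact_isClosed _
    (fun n => approx1_antitone n.le_succ) h (isCompact_approx1 ω 0)
    fun n => (isCompact_approx1 ω n).isClosed

theorem exists_sum_eq_of_forall_ge [Fintype ι] {a : ι → ℝ} {ω : ι → Perc1 M} {t : ℝ} {m : ℕ}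
    (h : ∀ n ≥ m, ∃ e : ι → ℝ, (∀ i, e i ∈ approx1 M (ω i) n) ∧ ∑ i, a i * e i = t) :
    ∃ e : ι → ℝ, (∀ i, e i ∈ limit1 M (ω i)) ∧ ∑ i, a i * e i = t := by
  set K : ℕ → Set (ι → ℝ) := fun n => univ.pi fun i => approx1 M (ω i) n
  have hK : Antitone K := fun m n hmn => pi_mono fun i _ => approx1_antitone hmn
  have ht : t ∈ (fun e : ι → ℝ => ∑ i, a i * e i) '' ⋂ n, K n := by
    rw [image_iInter_of_antitone (by fun_prop) hK fun n =>
      isCompact_univ_pi fun i => isCompact_approx1 (ω i) n]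
    refine mem_iInter.2 fun n => ?_
    obtain ⟨e, he, hsum⟩ := h (max m n) (le_max_left m n)
    exact ⟨e, hK (le_max_right m n) fun i _ => he i, hsum⟩
  obtain ⟨e, he, hsum⟩ := ht
  refine ⟨e, fun i => ?_, hsum⟩
  rw [limit1_eq_iInter]
  exact mem_iInter.2 fun n => mem_iInter.1 he n i trivial

theorem measurableSet_forall_limit1_nonempty [Countable ι] :
    MeasurableSet {ω : ι → Perc1 M | ∀ i, (limit1 M (ω i)).Nonempty} := by
  simp only [limit1_nonempty_iff, ofPred_forall]
  refine MeasurableSet.iInter fun i => MeasurableSet.iInter fun n => ?_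
  have hevent : MeasurableSet {ω : Perc1 M | (alive ω n).Nonempty} :=
    measurableSet_setOfPred.2 <| measurable_of_dependsOn (finite_length_le M n) fun ω ω' h => by
      simp only [alive_congr h]
  exact hevent.preimage (measurable_pi_apply i)

end LimitSet

section Interval

theorem exists_lt_of_mul_lt_lintegral {g : ℝ → ℝ≥0∞} {N : ℝ} {c : ℝ≥0∞}
    (hg : ∀ t, g t ≠ 0 → |t| ≤ N) (h : c * ENNReal.ofReal (2 * N) < ∫⁻ t, g t) :
    ∃ t, c < g t := by
  by_contra! hle
  have hbound : ∀ t, g t ≤ (Icc (-N) N).indicator (fun _ => c) t := fun t => by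
    by_cases ht : g t = 0
    · simp [ht]
    · have hmem : t ∈ Icc (-N) N := abs_le.1 (hg t ht)
      rw [indicator_of_mem hmem]
      exact hle t
  refine h.not_ge ((lintegral_mono hbound).trans_eq ?_)
  rw [lintegral_indicator_const measurableSet_Icc, Real.volume_Icc, sub_neg_eq_add, ← two_mul]

theorem exists_Ioo_forall_pos_of_geometric {f : ℕ → ℝ → ℝ} (hf : ∀ n, Continuous (f n))
    {C s δ : ℝ} (hs : s ∈ Ioo (0 : ℝ) 1) (hδ : 0 < δ)
    (hstep : ∀ᶠ n in Filter.atTop, ∀ t, |f (n + 1) t - f n t| ≤ C * s ^ n)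
    (hlarge : ∀ᶠ n in Filter.atTop, ∃ t, δ < f n t) :
    ∃ x y : ℝ, x < y ∧ ∃ m, ∀ t ∈ Ioo x y, ∀ n ≥ m, 0 < f n t := by
  have htail : ∀ᶠ n in Filter.atTop, C * (s ^ n / (1 - s)) < δ := by
    have hlim := ((tendsto_pow_atTop_nhds_zero_of_lt_one hs.1.le hs.2).div_const
      (1 - s)).const_mul C
    rw [zero_div, mul_zero] at hlim
    exact hlim.eventually_lt_const hδ
  obtain ⟨m, htail, ⟨t₀, ht₀⟩, hstep⟩ :=
    (htail.and (hlarge.and (Filter.eventually_forall_ge_atTop.2 hstep))).exists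
  obtain ⟨x, y, hxy, hsub⟩ := mem_nhds_iff_exists_Ioo_subset.1
    ((isOpen_lt continuous_const (hf m)).mem_nhds ht₀)
  refine ⟨x, y, hxy.1.trans hxy.2, m, fun t ht n hmn => ?_⟩
  have hC : 0 ≤ C := nonneg_of_mul_nonneg_left
    ((abs_nonneg _).trans (hstep m le_rfl t)) (pow_pos hs.1 m)
  have hdist : dist (f m t) (f n t) ≤ C * (s ^ m / (1 - s)) :=
    calc dist (f m t) (f n t) ≤ ∑ k ∈ Finset.Ico m n, C * s ^ k :=
          dist_le_Ico_sum_of_dist_le (f := fun k => f k t) hmn fun {k} hk _ => by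
            rw [dist_comm, Real.dist_eq]
            exact hstep k hk t
      _ ≤ C * (s ^ m / (1 - s)) := by
          rw [← Finset.mul_sum]
          gcongr
          exact geom_sum_Ico_le_of_lt_one hs.1.le hs.2
  have hm : δ < f m t := hsub ht
  linarith [le_of_abs_le hdist]

variable {ι : Type*} {M : ℕ} {p : ι → unitInterval} {a : ι → ℝ} {l : List ι}

theorem continuous_toReal_sumDensity [NeZero M] (ha : ∀ i, a i ≠ 0)
    (hp : ∀ i, 1 < p i * (M : ℝ)) (hl : 1 < l.length) (ω : ι × Word1 M → Bool) (lev : ι → ℕ) :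
    Continuous fun t => (sumDensity p a ω lev l t).toReal := by
  obtain ⟨i, l, rfl⟩ := List.exists_cons_of_length_pos (zero_lt_one.trans hl)
  have hne : l ≠ [] := by rintro rfl; simp at hl
  obtain ⟨B, hB⟩ := exists_forall_sumDensity_le ha p ω lev l
  refine (LipschitzWith.of_dist_le_mul (K := B * (M ^ 2) ^ lev i) fun s t => ?_).continuous
  simpa [Real.dist_eq, mul_assoc] using abs_sumDensity_cons_sub_le ha (hp i) hne hB s t

theorem exists_eventually_exists_lt_sumDensity [NeZero M] [Finite ι] (ha : ∀ i, a i ≠ 0)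
    (hl : l.Nodup) (hne : l ≠ []) {ω : ι × Word1 M → Bool}
    (hω : ∀ i, ∃ z > 0, Filter.Tendsto (normPopulation (p i) (Function.curry ω i))
      Filter.atTop (nhds z)) :
    ∃ δ > 0, ∀ᶠ n in Filter.atTop, ∃ t, δ < (sumDensity p a ω (fun _ => n) l t).toReal := by
  choose z hz hlim using hω
  set mass : ℝ≥0∞ := (l.map fun i => ENNReal.ofReal (|a i| * (z i / 2))).prod
  have hmass : mass ≠ 0 := List.prod_ne_zero <| by
    simp only [List.mem_map, not_exists, not_and]
    have hpos : ∀ i, 0 < |a i| * (z i / 2) := fun i =>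
      mul_pos (abs_pos.2 (ha i)) (half_pos (hz i))
    exact fun i _ => (ofReal_pos.2 (hpos i)).ne'
  obtain ⟨δ, hδ, hδmass⟩ := ENNReal.exists_nnreal_pos_mul_lt
    (ofReal_ne_top (r := 2 * (l.map fun i => |a i|).sum)) hmass
  have hlarge : ∀ᶠ n in Filter.atTop, ∀ i,
      z i / 2 < normPopulation (p i) (Function.curry ω i) n :=
    Filter.eventually_all.2 fun i => (hlim i).eventually_const_lt (half_lt_self (hz i))
  refine ⟨δ, hδ, hlarge.mono fun n hn => ?_⟩
  obtain ⟨B, hB⟩ := exists_forall_sumDensity_le ha p ω (fun _ => n) l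
  have hintegral : mass ≤ ∫⁻ t, sumDensity p a ω (fun _ => n) l t := by
    rw [lintegral_sumDensity ha hne]
    exact List.prod_map_le_prod_map₀ _ _ (fun _ _ => zero_le) fun i _ => by
      gcongr
      exact (hn i).le
  obtain ⟨t, ht⟩ := exists_lt_of_mul_lt_lintegral
    (fun t => abs_le_of_sumDensity_ne_zero ha hl) (hδmass.trans_le hintegral)
  exact ⟨t, (toReal_lt_toReal coe_ne_top (ne_top_of_le_ne_top coe_ne_top (hB t))).2 ht⟩

theorem ae_exists_Ioo_forall_sumDensity_ne_zero [Finite ι] (ha : ∀ i, a i ≠ 0)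
    (hp : ∀ i, 1 < p i * (M : ℝ)) (hl : l.Nodup) (hl' : 1 < l.length)
    (hM : M < (l.map fun i => p i * (M : ℝ)).prod) :
    ∀ᵐ ω ∂jointLaw M p, (∀ i n, (alive (Function.curry ω i) n).Nonempty) →
      ∃ x y : ℝ, x < y ∧ ∃ m, ∀ t ∈ Ioo x y, ∀ n ≥ m, sumDensity p a ω (fun _ => n) l t ≠ 0 := by
  have hne : l ≠ [] := List.ne_nil_of_length_pos (zero_lt_one.trans hl')
  have : NeZero M := neZero_of_one_lt_mul (hp (l.head hne))
  filter_upwards [ae_exists_eventually_abs_sumDensity_succ_sub_le_geometric ha hp hl hl' hM,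
    ae_all_iff.2 (ae_exists_pos_tendsto_normPopulation hp)] with ω ⟨C, s, hs, hstep⟩ hlim halive
  obtain ⟨δ, hδ, hlarge⟩ :=
    exists_eventually_exists_lt_sumDensity ha hl hne fun i => hlim i (halive i)
  obtain ⟨x, y, hxy, m, hpos⟩ := exists_Ioo_forall_pos_of_geometric
    (fun n => continuous_toReal_sumDensity ha hp hl' ω fun _ => n) hs hδ hstep hlarge
  exact ⟨x, y, hxy, m, fun t ht n hn => (toReal_pos_iff.1 (hpos t ht n hn)).1.ne'⟩

end Interval

section Transfer

theorem eq_infinitePi_of_finset_singleton {κ : Type*} {X : κ → Type*} [∀ q, MeasurableSpace (X q)]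
    [∀ q, Countable (X q)] [∀ q, MeasurableSingletonClass (X q)] {μ : ∀ q, Measure (X q)}
    [∀ q, IsProbabilityMeasure (μ q)] {ν : Measure (∀ q, X q)}
    (h : ∀ (S : Finset κ) (b : ∀ q, X q), ν ((S : Set κ).pi fun q => {b q}) = ∏ q ∈ S, μ q {b q}) :
    ν = Measure.infinitePi μ := by
  classical
  have hne : ∀ q, Nonempty (X q) := fun q => (μ q).nonempty_of_neZero
  refine IsProjectiveLimit.unique (P := fun S : Finset κ => Measure.pi fun q : S => μ q)
    (fun S => Measure.ext_of_singleton fun x => ?_) (Measure.isProjectiveLimit_infinitePi μ)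
  obtain ⟨b, rfl⟩ : ∃ b : ∀ q, X q, S.restrict b = x :=
    ⟨fun q => if hq : q ∈ S then x ⟨q, hq⟩ else Classical.arbitrary _, by ext q; simp⟩
  rw [Measure.map_apply (Finset.measurable_restrict S) (measurableSet_singleton _),
    Measure.pi_singleton]
  refine Eq.trans ?_ ((h S b).trans (Finset.prod_coe_sort S fun q => μ q {b q}).symm)
  congr 1
  ext ω
  simp [funext_iff]

variable {d M m : ℕ} {p : Fin d → unitInterval} {a : Fin d → ℝ} {t : ℝ}

theorem bernoulliMeasure_true_false_singleton (p : unitInterval) (b : Bool) :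
    bernoulliMeasure true false p {b} =
      if b then ENNReal.ofReal p else ENNReal.ofReal (1 - p) := by
  cases b <;> simp [bernoulliMeasure_def, coe_toNNReal_eq_ofReal]

theorem map_uncurry_eq_jointLaw {P : Measure (Fin d → Perc1 M)}
    (hP : IsIndepBernoulli1 d M (fun i => p i) P) :
    P.map Function.uncurry = jointLaw M p := by
  refine eq_infinitePi_of_finset_singleton fun S b => ?_
  rw [Measure.map_apply measurable_uncurry
    (.pi S.countable_toSet fun q _ => measurableSet_singleton _)]
  simp only [bernoulliMeasure_true_false_singleton, ← hP.2]
  rfl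

theorem exists_sum_eq_of_forall_ge_sumDensity_ne_zero [NeZero M] (ha : ∀ i, a i ≠ 0)
    {ω : Fin d → Perc1 M} (h : ∀ n ≥ m,
      sumDensity p a (Function.uncurry ω) (fun _ => n) (List.finRange d) t ≠ 0) :
    ∃ e : Fin d → ℝ, (∀ i, e i ∈ limit1 M (ω i)) ∧ t = ∑ i, a i * e i := by
  simp only [@eq_comm _ t]
  refine exists_sum_eq_of_forall_ge (m := m) fun n hn => ?_
  obtain ⟨x, hx, hsum⟩ := exists_sum_eq_of_sumDensity_ne_zero ha (List.nodup_finRange d) (h n hn)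
  refine ⟨x, fun i => mem_approx1_of_density_ne_zero (hx i (List.mem_finRange i)), ?_⟩
  rw [← hsum, ← List.ofFn_eq_map, List.sum_ofFn]

theorem lt_prod_map_finRange_mul {p : Fin d → ℝ} (hM : 0 < M)
    (h : (M : ℝ) ^ (1 - (d : ℤ)) < ∏ i, p i) :
    (M : ℝ) < ((List.finRange d).map fun i => p i * M).prod := by
  have hM' : (0 : ℝ) < M := Nat.cast_pos.2 hM
  rw [zpow_sub₀ hM'.ne', zpow_one, zpow_natCast, div_lt_iff₀ (pow_pos hM' d)] at h
  simpa [← List.ofFn_eq_map, List.prod_ofFn, Finset.prod_mul_distrib] using h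

end Transfer

end FractalPercolation

/-- if `pᵢ > M⁻¹` for all `i` and `p₁⋯p_d > M^{-(d-1)}`, then for
every vector `a` with nonzero coordinates, conditioned on all `E⁽ⁱ⁾` being
nonempty, almost surely the algebraic sum `a₁E⁽¹⁾ + ⋯ + a_dE⁽ᵈ⁾` contains a
nonempty open interval. -/
theorem weighted_sum_contains_interval
    (d M : ℕ) (hd : 2 ≤ d) (hM : 2 ≤ M)
    (p : Fin d → ℝ) (hp : ∀ i, ((M : ℝ))⁻¹ < p i) (hp1 : ∀ i, p i ≤ 1)
    (hprod : (M : ℝ) ^ (1 - (d : ℤ)) < ∏ i, p i)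
    (P : Measure (Fin d → Perc1 M)) (hP : IsIndepBernoulli1 d M p P)
    (a : Fin d → ℝ) (ha : ∀ i, a i ≠ 0) :
    ∀ᵐ ω ∂(ProbabilityTheory.cond P {ω | ∀ i, limit1 M (ω i) ≠ ∅}),
      ∃ x y : ℝ, x < y ∧ Set.Ioo x y ⊆
        {s | ∃ e : Fin d → ℝ, (∀ i, e i ∈ limit1 M (ω i)) ∧ s = ∑ i, a i * e i} := by
  have hM0 : 0 < (M : ℝ) := by positivity
  have : NeZero M := ⟨by omega⟩
  lift p to Fin d → unitInterval using fun i => ⟨(inv_pos.2 hM0).le.trans (hp i).le, hp1 i⟩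
  have hmean : ∀ i, 1 < (p i : ℝ) * M := fun i => (inv_lt_iff_one_lt_mul₀ hM0).1 (hp i)
  have hdensity := FractalPercolation.ae_exists_Ioo_forall_sumDensity_ne_zero ha hmean
    (List.nodup_finRange d) (hd.trans_eq List.length_finRange.symm)
    (FractalPercolation.lt_prod_map_finRange_mul (by omega) hprod)
  rw [← FractalPercolation.map_uncurry_eq_jointLaw hP] at hdensity
  have hcurry := ae_of_ae_map measurable_uncurry.aemeasurable hdensity
  simp only [← nonempty_iff_ne_empty]
  filter_upwards [cond_absolutelyContinuous.ae_le hcurry,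
    ae_cond_mem FractalPercolation.measurableSet_forall_limit1_nonempty] with ω hω hne
  obtain ⟨x, y, hxy, m, hpos⟩ :=
    hω fun i => FractalPercolation.limit1_nonempty_iff.1 (hne i)
  exact ⟨x, y, hxy, fun t ht =>
    FractalPercolation.exists_sum_eq_of_forall_ge_sumDensity_ne_zero ha (hpos t ht)⟩
end
end

section
/- Let d ≥ 2 and M ≥ 2 be integers and let p₁,…,p_d be real numbers with M^{-1} < p_i ≤ 1 for every i and ∏_{i=1}^d p_i > M^{-(d−1)}. Then there exist real numbers q₁,…,q_d such that: ∏_{i=1}^d q_i > M^{-(d−1)}; for every j ∈ {1,…,d}, ∏_{i≠j} q_i < M^{-(d−2)}; and M^{-1} < q_i ≤ p_i for every i. -/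
/-!
Move all the factors simultaneously along the segments from the lower bounds `M⁻¹` to the `pᵢ`. By
the intermediate value theorem the product equals `M^{-(d-1)}` at an interior time. There every
factor strictly exceeds `M⁻¹`, so dropping any one of them leaves a product strictly less than
`M^{-(d-2)}`. These `d` strict inequalities are open conditions and survive a slightly later time,
at which the full product has become strictly greater than `M^{-(d-1)}`.
-/

open AffineMap Filter Finset

theorem strictMonoOn_prod_lineMap {ι k : Type*} [CommRing k] [LinearOrder k] [IsStrictOrderedRing k]
    {s : Finset ι} (hs : s.Nonempty) {a p : ι → k} (ha : ∀ i ∈ s, 0 ≤ a i)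
    (hap : ∀ i ∈ s, a i < p i) :
    StrictMonoOn (fun t : k ↦ ∏ i ∈ s, lineMap (a i) (p i) t) (Set.Ioi 0) := fun _ ht _ _ htu ↦
  prod_lt_prod_of_nonempty
    (fun i hi ↦ (ha i hi).trans_lt ((left_lt_lineMap_iff_pos (hap i hi)).2 ht))
    (fun i hi ↦ (lineMap_lt_lineMap_iff_of_lt' (hap i hi)).2 htu) hs

theorem mul_prod_erase_lt_prod {ι R : Type*} [DecidableEq ι] [CommSemiring R] [PartialOrder R]
    [IsStrictOrderedRing R] {s : Finset ι} {q : ι → R} {j : ι} (hj : j ∈ s)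
    (hq : ∀ i ∈ s.erase j, 0 < q i) {x : R} (hx : x < q j) :
    x * ∏ i ∈ s.erase j, q i < ∏ i ∈ s, q i := by
  rw [← mul_prod_erase s q hj]
  exact mul_lt_mul_of_pos_right hx (prod_pos hq)

theorem exists_lt_prod_forall_mul_prod_erase_lt {ι : Type*} [DecidableEq ι] {s : Finset ι}
    {a p : ι → ℝ} {c : ℝ} (ha : ∀ i ∈ s, 0 ≤ a i) (hap : ∀ i ∈ s, a i < p i)
    (hac : ∏ i ∈ s, a i < c) (hcp : c < ∏ i ∈ s, p i) :
    ∃ q : ι → ℝ, c < ∏ i ∈ s, q i ∧ (∀ j ∈ s, a j * ∏ i ∈ s.erase j, q i < c) ∧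
      ∀ i ∈ s, a i < q i ∧ q i ≤ p i := by
  have hs : s.Nonempty := by
    rw [nonempty_iff_ne_empty]
    rintro rfl
    exact lt_asymm hac hcp
  let q (t : ℝ) (i : ι) : ℝ := lineMap (a i) (p i) t
  have continuous_prod (u : Finset ι) : Continuous fun t ↦ ∏ i ∈ u, q t i :=
    continuous_finsetProd u fun i _ ↦ lineMap_continuous
  have lt_q {t : ℝ} (ht : 0 < t) : ∀ i ∈ s, a i < q t i := fun i hi ↦
    (left_lt_lineMap_iff_lt ht).2 (hap i hi)
  have hc : c ∈ Set.Ioo (∏ i ∈ s, q 0 i) (∏ i ∈ s, q 1 i) := by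
    simpa only [q, lineMap_apply_zero, lineMap_apply_one] using Set.mem_Ioo.2 ⟨hac, hcp⟩
  obtain ⟨t, ⟨ht₀, ht₁⟩, hqt : ∏ i ∈ s, q t i = c⟩ :=
    intermediate_value_Ioo zero_le_one (continuous_prod s).continuousOn hc
  have q_pos : ∀ i ∈ s, 0 < q t i := fun i hi ↦ (ha i hi).trans_lt (lt_q ht₀ i hi)
  have erase_lt : ∀ j ∈ s, a j * ∏ i ∈ s.erase j, q t i < c := fun j hj ↦
    hqt ▸ mul_prod_erase_lt_prod hj (fun i hi ↦ q_pos i (mem_of_mem_erase hi)) (lt_q ht₀ j hj)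
  have eventually_erase_lt : ∀ᶠ u in nhds t, ∀ j ∈ s, a j * ∏ i ∈ s.erase j, q u i < c :=
    (eventually_all_finset s).2 fun j hj ↦
      ((continuous_prod _).const_mul (a j)).continuousAt.eventually_lt_const (erase_lt j hj)
  obtain ⟨u, hu, htu, hu₁⟩ :=
    ((eventually_erase_lt.filter_mono nhdsWithin_le_nhds).and (Ioo_mem_nhdsGT ht₁)).exists
  have hu₀ : 0 < u := ht₀.trans htu
  refine ⟨q u, ?_, hu, fun i hi ↦ ⟨lt_q hu₀ i hi, ?_⟩⟩
  · exact hqt ▸ strictMonoOn_prod_lineMap hs ha hap ht₀ hu₀ htu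
  · exact (lineMap_le_right_iff_le hu₁).2 (hap i hi).le

theorem adjusted_probabilities_exist_general {ι : Type*} [Fintype ι] [DecidableEq ι] {M : ℝ}
    (hM : 1 < M) {p : ι → ℝ} (hp : ∀ i, M⁻¹ < p i)
    (hprod : M ^ (1 - (Fintype.card ι : ℤ)) < ∏ i, p i) :
    ∃ q : ι → ℝ,
      M ^ (1 - (Fintype.card ι : ℤ)) < ∏ i, q i ∧
      (∀ j, ∏ i ∈ univ.erase j, q i < M ^ (2 - (Fintype.card ι : ℤ))) ∧
      ∀ i, M⁻¹ < q i ∧ q i ≤ p i := by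
  have hM₀ : 0 < M := zero_lt_one.trans hM
  have prod_inv_lt : ∏ _i : ι, M⁻¹ < M ^ (1 - (Fintype.card ι : ℤ)) := by
    rw [prod_const, card_univ, inv_pow, ← zpow_natCast, ← zpow_neg]
    exact zpow_lt_zpow_right₀ hM (by lia)
  have mul_zpow : M * M ^ (1 - (Fintype.card ι : ℤ)) = M ^ (2 - (Fintype.card ι : ℤ)) := by
    rw [← zpow_one_add₀ hM₀.ne']
    congr 1
    ring
  obtain ⟨q, lt_prod, mul_prod_erase_lt, hq⟩ := exists_lt_prod_forall_mul_prod_erase_lt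
    (fun _ _ ↦ (inv_pos.2 hM₀).le) (fun i _ ↦ hp i) prod_inv_lt hprod
  refine ⟨q, lt_prod, fun j ↦ ?_, fun i ↦ hq i (mem_univ i)⟩
  rw [← mul_zpow]
  exact (inv_mul_lt_iff₀ hM₀).1 (mul_prod_erase_lt j (mem_univ j))

/-- given `p₁,…,p_d ∈ (M⁻¹, 1]` with `∏ pᵢ > M^{-(d-1)}`, there
are `q₁,…,q_d` with `∏ qᵢ > M^{-(d-1)}`, `∏_{i≠j} qᵢ < M^{-(d-2)}` for every `j`,
and `M⁻¹ < qᵢ ≤ pᵢ` for every `i`. -/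
theorem adjusted_probabilities_exist
    (d M : ℕ) (hd : 2 ≤ d) (hM : 2 ≤ M)
    (p : Fin d → ℝ) (hp : ∀ i, ((M : ℝ))⁻¹ < p i) (hp1 : ∀ i, p i ≤ 1)
    (hprod : (M : ℝ) ^ (1 - (d : ℤ)) < ∏ i, p i) :
    ∃ q : Fin d → ℝ,
      (M : ℝ) ^ (1 - (d : ℤ)) < ∏ i, q i ∧
      (∀ j, ∏ i ∈ Finset.univ.erase j, q i < (M : ℝ) ^ (2 - (d : ℤ))) ∧
      (∀ i, ((M : ℝ))⁻¹ < q i ∧ q i ≤ p i) := by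
  simpa only [Fintype.card_fin] using
    adjusted_probabilities_exist_general (Nat.one_lt_cast.2 hM) hp (by rwa [Fintype.card_fin])
end

section
/- Let d ≥ 2 and let E⁽¹⁾,…,E⁽ᵈ⁾ be independent one-dimensional fractal percolations with common scale M ≥ 2 and probabilities p₁,…,p_d ∈ (0,1] satisfying ∏_{i=1}^d p_i > M^{-(d−1)} and, for every j, ∏_{i≠j} p_i < M^{-(d−2)}. Fix a unit vector a = (a₁,…,a_d) with all a_i > 0 and fix ε > 0. Then there exists a constant C such that, for almost every realization with all E⁽ⁱ⁾ nonempty, there is N such that for all n > N and every t ∈ ℝ: if the hyperplane H_t intersects a cube K_n(x₁,…,x_d) of Ẽ_n, then H_t intersects at most C·n^{(1+ε)(d−2)} other cubes K_n(y₁,…,y_d) of Ẽ_n for which x_i = y_i for some i ∈ {1,…,d}. -/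
open MeasureTheory Set ENNReal ProbabilityTheory Real

noncomputable section

/-- The hyperplane `H_t = {y : a ⬝ y = t}`. -/
def Hplane (d : ℕ) (a : Fin d → ℝ) (t : ℝ) : Set (EuclideanSpace ℝ (Fin d)) :=
  {y | ∑ i, a i * y i = t}

/-- The cube of `Ẽ_n` indexed by the `d`-tuple of words `w`. -/
def prodCube (d M : ℕ) (w : Fin d → List (Fin M)) : Set (EuclideanSpace ℝ (Fin d)) :=
  {x | ∀ i, x i ∈ interval1 M (w i)}

/-!
Scaled by `M ^ n`, the level-`n` cubes met by a hyperplane are unit lattice cubes in a slab of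
bounded width. Fix one of them and a coordinate `j`, and let `X` count the retained cubes of the
slab that share its `j`-th word. Given that fewer than `n` tuples of words are retained, a further
tuple `w` is retained with probability `∏ i ≠ j, p i ^ k i`, where `k i` is the number of nonempty
prefixes of `w i` that are not prefixes of the words already retained in coordinate `i`. At most
`n * M ^ k i` words `w i` have a given `k i`, and the slab determines the word with the largest
`k i` from the others up to boundedly many choices. As `1 ≤ M * p i` and
`M ^ (d - 2) * ∏ i ≠ j, p i < 1`, summing over `w` bounds the conditional expectation of `X` by
`K * n ^ (d - 2)`. Iterating, `X ^ n` has expectation at most `(K * n ^ (d - 2)) ^ n`, so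
by Markov's inequality `X` exceeds `K * n ^ (d - 2) * (2 * M ^ d)` with probability at most
`(2 * M ^ d)⁻¹ ^ n`. This beats the number `M ^ (d * n)` of cubes, and Borel–Cantelli applies.
-/

open scoped Finset

section Words

variable {α : Type*}

/-- The words of length `n` over the alphabet `α`, i.e. the vertices of level `n` of the
`|α|`-ary tree. -/
def wordsOfLength (α : Type*) [Fintype α] (n : ℕ) : Finset (List α) :=
  Finset.univ.map ⟨List.ofFn (n := n), List.ofFn_injective⟩

lemma mem_wordsOfLength [Fintype α] {n : ℕ} {w : List α} :
    w ∈ wordsOfLength α n ↔ w.length = n := by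
  simp only [wordsOfLength, Finset.mem_map, Finset.mem_univ, true_and, Function.Embedding.coeFn_mk]
  constructor
  · rintro ⟨f, rfl⟩
    exact List.length_ofFn
  · rintro rfl
    exact ⟨w.get, List.ofFn_get w⟩

lemma card_wordsOfLength [Fintype α] (n : ℕ) : #(wordsOfLength α n) = Fintype.card α ^ n := by
  simp [wordsOfLength]

variable [DecidableEq α]

/-- The nonempty prefixes of the words in `T`: the vertices other than the root of the subtree
spanned by `T`. -/
def nonemptyPrefixes (T : Finset (List α)) : Finset {w : List α // w ≠ []} :=
  (T.biUnion fun w => w.inits.toFinset).subtype (· ≠ [])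

lemma mem_nonemptyPrefixes {T : Finset (List α)} {u : {w : List α // w ≠ []}} :
    u ∈ nonemptyPrefixes T ↔ ∃ w ∈ T, u.1 <+: w := by
  simp [nonemptyPrefixes]

/-- The number of nonempty prefixes of `x` that are not prefixes of a word in `T`: given that the
words in `T` are retained, it is the number of further labels that decide whether `x` is. -/
def newPrefixCount (T : Finset (List α)) (x : List α) : ℕ :=
  #(nonemptyPrefixes {x} \ nonemptyPrefixes T)

lemma card_nonemptyPrefixes_insert (x : List α) (T : Finset (List α)) :
    #(nonemptyPrefixes (insert x T)) = newPrefixCount T x + #(nonemptyPrefixes T) := by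
  have hunion : nonemptyPrefixes (insert x T) = nonemptyPrefixes {x} ∪ nonemptyPrefixes T := by
    ext u
    simp [mem_nonemptyPrefixes]
  rw [hunion, newPrefixCount, Finset.card_sdiff_add_card]

lemma exists_take_prefix_of_newPrefixCount_le {T : Finset (List α)} {x : List α} {m : ℕ}
    (hx : newPrefixCount T x ≤ m) : ∃ v ∈ insert [] T, x.take (x.length - m) <+: v := by
  by_contra! hnot
  have hm : m < x.length := by
    by_contra! hle
    exact hnot [] (Finset.mem_insert_self _ _) (by simp [Nat.sub_eq_zero_of_le hle])
  have hlengths : Finset.Icc (x.length - m) x.length ⊆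
      (nonemptyPrefixes {x} \ nonemptyPrefixes T).image (·.1.length) := by
    intro k hk
    rw [Finset.mem_Icc] at hk
    have hlen : (x.take k).length = k := by rw [List.length_take]; omega
    have hne : x.take k ≠ [] := List.ne_nil_of_length_pos (by omega)
    refine Finset.mem_image.2 ⟨⟨x.take k, hne⟩, ?_, hlen⟩
    rw [Finset.mem_sdiff, mem_nonemptyPrefixes, mem_nonemptyPrefixes]
    refine ⟨⟨x, Finset.mem_singleton_self x, List.take_prefix k x⟩, ?_⟩
    rintro ⟨v, hv, hpre⟩
    exact hnot v (Finset.mem_insert_of_mem hv) ((List.take_prefix_take_left hk.1).trans hpre)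
  have hcard := (Finset.card_le_card hlengths).trans Finset.card_image_le
  rw [Nat.card_Icc] at hcard
  unfold newPrefixCount at hx
  omega

lemma card_filter_newPrefixCount_le [Fintype α] [Nonempty α] (T : Finset (List α)) (n m : ℕ) :
    #{x ∈ wordsOfLength α n | newPrefixCount T x ≤ m} ≤ (#T + 1) * Fintype.card α ^ m := by
  have hsub : {x ∈ wordsOfLength α n | newPrefixCount T x ≤ m} ⊆
      (insert [] T ×ˢ wordsOfLength α (n - (n - m))).image
        fun q => q.1.take (n - m) ++ q.2 := by
    intro x hx
    obtain ⟨hlen, hcount⟩ := Finset.mem_filter.1 hx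
    rw [mem_wordsOfLength] at hlen
    obtain ⟨v, hv, hpre⟩ := exists_take_prefix_of_newPrefixCount_le hcount
    refine Finset.mem_image.2 ⟨(v, x.drop (n - m)), Finset.mem_product.2 ⟨hv, ?_⟩, ?_⟩
    · rw [mem_wordsOfLength, List.length_drop, hlen]
    · have htake : x.take (n - m) = v.take (n - m) := by
        have h := List.prefix_iff_eq_take.1 hpre
        rwa [hlen, List.length_take_of_le (by omega)] at h
      rw [← htake, List.take_append_drop]
  calc #{x ∈ wordsOfLength α n | newPrefixCount T x ≤ m}
      ≤ #(insert [] T ×ˢ wordsOfLength α (n - (n - m))) :=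
        (Finset.card_le_card hsub).trans Finset.card_image_le
    _ = #(insert [] T) * Fintype.card α ^ (n - (n - m)) := by
        rw [Finset.card_product, card_wordsOfLength]
    _ ≤ (#T + 1) * Fintype.card α ^ m :=
        Nat.mul_le_mul (Finset.card_insert_le _ _)
          (Nat.pow_le_pow_right Fintype.card_pos (by omega))

end Words

section ProfileSums

variable {ι : Type*} {J : Finset ι}

lemma sum_le_of_profile_sum_le {σ : Type*} {W : Finset σ} {k : σ → ι → ℕ} {f : σ → ℝ} {C q : ℝ}
    (hC : 0 ≤ C) (hq0 : 0 ≤ q) (hq1 : q < 1)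
    (hf : ∀ v ∈ W, ∑ w ∈ W with ∀ i ∈ J, k w i = k v i, f w ≤ C * ∏ i ∈ J, q ^ k v i) :
    ∑ w ∈ W, f w ≤ C * ((1 - q)⁻¹) ^ #J := by
  classical
  let profile : σ → J → ℕ := fun w => J.restrict (k w)
  have himage : W.image profile ⊆ Fintype.piFinset fun i : J => W.image (k · i) :=
    Finset.image_subset_iff.2 fun w hw => Fintype.mem_piFinset.2 fun i =>
      Finset.mem_image_of_mem (k · i) hw
  have hgeom (S : Finset ℕ) : ∑ m ∈ S, q ^ m ≤ (1 - q)⁻¹ :=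
    ((summable_geometric_of_lt_one hq0 hq1).sum_le_tsum S fun m _ => pow_nonneg hq0 m).trans_eq
      (tsum_geometric_of_lt_one hq0 hq1)
  calc ∑ w ∈ W, f w
      = ∑ b ∈ W.image profile, ∑ w ∈ W with profile w = b, f w :=
        (Finset.sum_fiberwise_of_maps_to (fun _ hw => Finset.mem_image_of_mem profile hw) f).symm
    _ ≤ ∑ b ∈ W.image profile, C * ∏ i, q ^ b i := by
        refine Finset.sum_le_sum fun b hb => ?_
        obtain ⟨v, hv, rfl⟩ := Finset.mem_image.1 hb
        have hfv := hf v hv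
        rw [← Finset.prod_coe_sort J fun i => q ^ k v i] at hfv
        simpa only [profile, funext_iff, Subtype.forall, Finset.restrict] using hfv
    _ ≤ ∑ b ∈ Fintype.piFinset fun i : J => W.image (k · i), C * ∏ i, q ^ b i :=
        Finset.sum_le_sum_of_subset_of_nonneg himage fun b _ _ => by positivity
    _ = C * ∏ i : J, ∑ m ∈ W.image (k · i), q ^ m := by
        rw [← Finset.mul_sum, Finset.prod_univ_sum]
    _ ≤ C * ∏ _i : J, (1 - q)⁻¹ := by
        gcongr
        exact hgeom _
    _ = C * ((1 - q)⁻¹) ^ #J := by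
        rw [Finset.prod_const, Finset.card_univ, Fintype.card_coe]

lemma card_le_mul_prod_card {β : Type*} [DecidableEq β] {W : Finset (ι → β)} {S : ι → Finset β}
    {B : ℕ} (hS : ∀ w ∈ W, ∀ i ∈ J, w i ∈ S i)
    (hB : ∀ v ∈ W, #{w ∈ W | ∀ i ∈ J, w i = v i} ≤ B) :
    #W ≤ B * ∏ i ∈ J, #(S i) := by
  classical
  have himage : W.image J.restrict ⊆ Fintype.piFinset fun i : J => S i :=
    Finset.image_subset_iff.2 fun w hw => Fintype.mem_piFinset.2 fun i => hS w hw i i.2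
  calc #W ≤ B * #(W.image J.restrict) := by
        refine Finset.card_le_mul_card_image W B fun b hb => ?_
        obtain ⟨v, hv, rfl⟩ := Finset.mem_image.1 hb
        simpa only [funext_iff, Subtype.forall, Finset.restrict] using hB v hv
    _ ≤ B * #(Fintype.piFinset fun i : J => S i) := by gcongr
    _ = B * ∏ i ∈ J, #(S i) := by
        rw [Fintype.card_piFinset, Finset.prod_coe_sort J fun i => #(S i)]

variable {α : Type*} [Fintype α] [Nonempty α] [DecidableEq α]

lemma card_filter_forall_newPrefixCount_le {W : Finset (ι → List α)} {n B R : ℕ}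
    (hlen : ∀ w ∈ W, ∀ i ∈ J, (w i).length = n)
    (hB : ∀ v ∈ W, #{w ∈ W | ∀ i ∈ J, w i = v i} ≤ B)
    {T : ι → Finset (List α)} (hT : ∀ i ∈ J, #(T i) < R) (k : ι → ℕ) :
    #{w ∈ W | ∀ i ∈ J, newPrefixCount (T i) (w i) ≤ k i} ≤
      B * (R ^ #J * ∏ i ∈ J, Fintype.card α ^ k i) := by
  calc #{w ∈ W | ∀ i ∈ J, newPrefixCount (T i) (w i) ≤ k i}
      ≤ B * ∏ i ∈ J, #{x ∈ wordsOfLength α n | newPrefixCount (T i) x ≤ k i} := by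
        refine card_le_mul_prod_card (fun w hw i hi => ?_) fun v hv => ?_
        · obtain ⟨hwW, hwk⟩ := Finset.mem_filter.1 hw
          exact Finset.mem_filter.2 ⟨mem_wordsOfLength.2 (hlen w hwW i hi), hwk i hi⟩
        · exact (Finset.card_le_card (Finset.filter_subset_filter _
            (Finset.filter_subset _ _))).trans (hB v (Finset.mem_of_mem_filter v hv))
    _ ≤ B * ∏ i ∈ J, R * Fintype.card α ^ k i := by
        gcongr with i hi
        exact (card_filter_newPrefixCount_le (T i) n (k i)).trans
          (Nat.mul_le_mul_right _ (hT i hi))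
    _ = B * (R ^ #J * ∏ i ∈ J, Fintype.card α ^ k i) := by
        rw [Finset.prod_mul_distrib, Finset.prod_const]

variable [DecidableEq ι]

lemma prod_pow_mul_prod_pow_le {M q : ℝ} {p : ι → ℝ} (hM : 0 < M) (hp : ∀ i ∈ J, 1 ≤ M * p i)
    (hq0 : 0 ≤ q) (hq1 : q ≤ 1) (hq : M ^ (#J - 1) * ∏ i ∈ J, p i ≤ q ^ #J) {k : ι → ℕ} {i₀ : ι}
    (hi₀ : i₀ ∈ J) (hmax : ∀ i ∈ J, k i ≤ k i₀) :
    (∏ i ∈ J.erase i₀, M ^ k i) * ∏ i ∈ J, p i ^ k i ≤ ∏ i ∈ J, q ^ k i := by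
  have hp0 : ∀ i ∈ J, 0 < p i := fun i hi =>
    pos_of_mul_pos_right (zero_lt_one.trans_le (hp i hi)) hM.le
  calc (∏ i ∈ J.erase i₀, M ^ k i) * ∏ i ∈ J, p i ^ k i
      = p i₀ ^ k i₀ * ∏ i ∈ J.erase i₀, (M * p i) ^ k i := by
        rw [← Finset.mul_prod_erase J _ hi₀]
        simp only [mul_pow, Finset.prod_mul_distrib]
        ring
    _ ≤ p i₀ ^ k i₀ * ∏ i ∈ J.erase i₀, (M * p i) ^ k i₀ := by
        have := hp0 i₀ hi₀
        gcongr with i hi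
        · exact fun i hi =>
            pow_nonneg (zero_le_one.trans (hp i (Finset.mem_of_mem_erase hi))) _
        · exact hp i (Finset.mem_of_mem_erase hi)
        · exact hmax i (Finset.mem_of_mem_erase hi)
    _ = (M ^ (#J - 1) * ∏ i ∈ J, p i) ^ k i₀ := by
        rw [← Finset.mul_prod_erase J p hi₀, Finset.prod_pow, Finset.prod_mul_distrib,
          Finset.prod_const, Finset.card_erase_of_mem hi₀]
        ring
    _ ≤ (q ^ #J) ^ k i₀ := by
        have := Finset.prod_nonneg fun i hi => (hp0 i hi).le
        gcongr
    _ = ∏ _i ∈ J, q ^ k i₀ := by rw [Finset.prod_const, pow_right_comm]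
    _ ≤ ∏ i ∈ J, q ^ k i :=
        Finset.prod_le_prod (fun _ _ => pow_nonneg hq0 _) fun i hi =>
          pow_le_pow_of_le_one hq0 hq1 (hmax i hi)

lemma sum_prod_pow_newPrefixCount_le (hJ : J.Nonempty) {W : Finset (ι → List α)} {n B R : ℕ}
    (hlen : ∀ w ∈ W, ∀ i ∈ J, (w i).length = n)
    (hB : ∀ i₀ ∈ J, ∀ v ∈ W, #{w ∈ W | ∀ i ∈ J.erase i₀, w i = v i} ≤ B)
    {p : ι → ℝ} (hp : ∀ i ∈ J, 1 ≤ Fintype.card α * p i) {q : ℝ} (hq0 : 0 ≤ q) (hq1 : q < 1)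
    (hq : (Fintype.card α : ℝ) ^ (#J - 1) * ∏ i ∈ J, p i ≤ q ^ #J)
    {T : ι → Finset (List α)} (hT : ∀ i ∈ J, #(T i) < R) :
    ∑ w ∈ W, ∏ i ∈ J, p i ^ newPrefixCount (T i) (w i) ≤
      B * R ^ (#J - 1) * ((1 - q)⁻¹) ^ #J := by
  have hM : (0 : ℝ) < Fintype.card α := by exact_mod_cast Fintype.card_pos
  refine sum_le_of_profile_sum_le (k := fun w i => newPrefixCount (T i) (w i)) (by positivity)
    hq0 hq1 fun v _ => ?_
  set k : ι → ℕ := fun i => newPrefixCount (T i) (v i)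
  obtain ⟨i₀, hi₀, hmax⟩ := J.exists_max_image k hJ
  set V := {w ∈ W | ∀ i ∈ J, newPrefixCount (T i) (w i) = k i}
  have hsub : V ⊆ {w ∈ W | ∀ i ∈ J.erase i₀, newPrefixCount (T i) (w i) ≤ k i} :=
    Finset.monotone_filter_right W fun _ _ hw i hi => (hw i (Finset.mem_of_mem_erase hi)).le
  have hcard : (#V : ℝ) ≤ B * (R ^ (#J - 1) * ∏ i ∈ J.erase i₀, (Fintype.card α : ℝ) ^ k i) := by
    rw [← Finset.card_erase_of_mem hi₀]
    exact_mod_cast (Finset.card_le_card hsub).trans <| card_filter_forall_newPrefixCount_le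
      (fun w hw i hi => hlen w hw i (Finset.mem_of_mem_erase hi)) (hB i₀ hi₀)
      (fun i hi => hT i (Finset.mem_of_mem_erase hi)) k
  have hprod : 0 ≤ ∏ i ∈ J, p i ^ k i := Finset.prod_nonneg fun i hi =>
    pow_nonneg (pos_of_mul_pos_right (zero_lt_one.trans_le (hp i hi)) hM.le).le _
  calc ∑ w ∈ V, ∏ i ∈ J, p i ^ newPrefixCount (T i) (w i)
      = #V * ∏ i ∈ J, p i ^ k i := by
        rw [← nsmul_eq_mul, ← Finset.sum_const]
        refine Finset.sum_congr rfl fun w hw => Finset.prod_congr rfl fun i hi => ?_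
        rw [(Finset.mem_filter.1 hw).2 i hi]
    _ ≤ B * (R ^ (#J - 1) * ∏ i ∈ J.erase i₀, (Fintype.card α : ℝ) ^ k i) *
          ∏ i ∈ J, p i ^ k i := by gcongr
    _ = B * R ^ (#J - 1) *
          ((∏ i ∈ J.erase i₀, (Fintype.card α : ℝ) ^ k i) * ∏ i ∈ J, p i ^ k i) := by ring
    _ ≤ B * R ^ (#J - 1) * ∏ i ∈ J, q ^ k i := by
        gcongr
        exact prod_pow_mul_prod_pow_le hM hp hq0 hq1.le hq hi₀ hmax

end ProfileSums

section Slabs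

variable {M : ℕ}

/-- The position of the `M`-adic interval of the word `w` among all intervals of its level,
counted from the left and starting at `0`. -/
def wordIndex (w : List (Fin M)) : ℕ :=
  Nat.ofDigits M (w.reverse.map Fin.val)

lemma wordIndex_injOn (hM : 1 < M) (n : ℕ) : InjOn wordIndex {w : List (Fin M) | w.length = n} :=
  fun w hw v hv h => List.reverse_injective <| List.map_injective_iff.2 Fin.val_injective <|
    Nat.ofDigits_inj_of_len_eq hM (by simp [hw.out, hv.out]) (by simp) (by simp) h

lemma base1_cons (x : Fin M) (w : List (Fin M)) : base1 M (x :: w) = (x + base1 M w) / M := by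
  have hM : (M : ℝ) ≠ 0 := by exact_mod_cast x.pos.ne'
  unfold base1
  simp only [List.length_cons]
  rw [Fin.sum_univ_succ, add_div, Finset.sum_div]
  congr 1
  · simp [div_eq_mul_inv]
  · refine Finset.sum_congr rfl fun j _ => ?_
    simp only [List.get_eq_getElem, Fin.val_succ, List.getElem_cons_succ]
    rw [div_eq_mul_inv, mul_assoc, ← zpow_sub_one₀ hM]
    push_cast
    ring_nf

lemma base1_mul_pow_length (w : List (Fin M)) : base1 M w * (M : ℝ) ^ w.length = wordIndex w := by
  induction w with
  | nil => simp [base1, wordIndex]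
  | cons x w ih =>
    have hM : (M : ℝ) ≠ 0 := by exact_mod_cast x.pos.ne'
    have hindex : wordIndex (x :: w) = wordIndex w + M ^ w.length * x := by
      simp [wordIndex, Nat.ofDigits_append]
    rw [base1_cons, hindex, List.length_cons, pow_succ]
    push_cast
    rw [← ih]
    field_simp
    ring

lemma abs_wordIndex_sub_le_one (hM : M ≠ 0) {w : List (Fin M)} {y : ℝ} (hy : y ∈ interval1 M w) :
    |wordIndex w - y * (M : ℝ) ^ w.length| ≤ 1 := by
  have hpos : (0 : ℝ) < (M : ℝ) ^ w.length := by positivity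
  have hlower := mul_le_mul_of_nonneg_right hy.1 hpos.le
  have hupper := mul_le_mul_of_nonneg_right hy.2 hpos.le
  rw [add_mul, zpow_neg, zpow_natCast, inv_mul_cancel₀ hpos.ne'] at hupper
  rw [← base1_mul_pow_length, abs_le]
  constructor <;> linarith

lemma abs_sum_wordIndex_sub_le (hM : M ≠ 0) {d n : ℕ} {a : Fin d → ℝ} {t : ℝ}
    {w : Fin d → List (Fin M)} (hlen : ∀ i, (w i).length = n)
    (hw : (Hplane d a t ∩ prodCube d M w).Nonempty) :
    |∑ i, a i * wordIndex (w i) - t * (M : ℝ) ^ n| ≤ ∑ i, |a i| := by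
  obtain ⟨y, hyt, hyw⟩ := hw
  calc |∑ i, a i * wordIndex (w i) - t * (M : ℝ) ^ n|
      = |∑ i, a i * (wordIndex (w i) - y i * (M : ℝ) ^ n)| := by
        rw [← hyt.out, Finset.sum_mul, ← Finset.sum_sub_distrib]
        simp only [mul_sub, mul_assoc]
    _ ≤ ∑ i, |a i * (wordIndex (w i) - y i * (M : ℝ) ^ n)| := Finset.abs_sum_le_sum_abs _ _
    _ ≤ ∑ i, |a i| := by
        refine Finset.sum_le_sum fun i _ => ?_
        rw [abs_mul, ← hlen i]
        exact mul_le_of_le_one_right (abs_nonneg _) (abs_wordIndex_sub_le_one hM (hyw i))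

lemma card_le_of_forall_le_add {S : Finset ℕ} {D : ℕ} (h : ∀ x ∈ S, ∀ y ∈ S, x ≤ y + D) :
    #S ≤ D + 1 := by
  rcases S.eq_empty_or_nonempty with rfl | hS
  · simp
  have hsub : S ⊆ Finset.Icc (S.min' hS) (S.min' hS + D) := fun x hx =>
    Finset.mem_Icc.2 ⟨S.min'_le x hx, h x hx _ (S.min'_mem hS)⟩
  have hcard := Finset.card_le_card hsub
  rw [Nat.card_Icc] at hcard
  omega

lemma exists_nat_forall_le_abs_mul {ι : Type*} [Finite ι] {a : ι → ℝ} (ha : ∀ i, a i ≠ 0) (r : ℝ) :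
    ∃ D : ℕ, ∀ i, r ≤ |a i| * D := by
  obtain ⟨D, hD⟩ := Finite.exists_le fun i => ⌈r / |a i|⌉₊
  exact ⟨D, fun i => (div_le_iff₀' (abs_pos.2 (ha i))).1 (Nat.ceil_le.1 (hD i))⟩

variable {ι : Type*} [Fintype ι] [DecidableEq ι]

/-- The tuples of words of length `n` that agree with `v` outside `J` and index cubes close to the
hyperplane `∑ i, a i * y i = c`, in coordinates scaled so that level-`n` cubes have side `1`. -/
def slabSection (M n : ℕ) (a : ι → ℝ) (c r : ℝ) (J : Finset ι) (v : ι → List (Fin M)) :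
    Finset (ι → List (Fin M)) :=
  {w ∈ Fintype.piFinset fun _ => wordsOfLength (Fin M) n |
    |∑ i, a i * wordIndex (w i) - c| ≤ r ∧ ∀ i ∉ J, w i = v i}

lemma mem_slabSection {n : ℕ} {a : ι → ℝ} {c r : ℝ} {J : Finset ι} {v w : ι → List (Fin M)} :
    w ∈ slabSection M n a c r J v ↔
      (∀ i, (w i).length = n) ∧ |∑ i, a i * wordIndex (w i) - c| ≤ r ∧ ∀ i ∉ J, w i = v i := by
  simp only [slabSection, Finset.mem_filter, Fintype.mem_piFinset, mem_wordsOfLength]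

lemma card_slabSection_singleton_le (hM : 1 < M) {n D : ℕ} {a : ι → ℝ} {c r : ℝ} {i₀ : ι}
    (ha : a i₀ ≠ 0) (hD : 2 * r ≤ |a i₀| * D) (v : ι → List (Fin M)) :
    #(slabSection M n a c r {i₀} v) ≤ D + 1 := by
  set F := slabSection M n a c r {i₀} v
  have hmem {w} (hw : w ∈ F) : (∀ i, (w i).length = n) ∧
      |∑ i, a i * wordIndex (w i) - c| ≤ r ∧ ∀ i ≠ i₀, w i = v i := by
    simpa only [F, mem_slabSection, Finset.mem_singleton] using hw
  have hinj : InjOn (fun w : ι → List (Fin M) => wordIndex (w i₀)) F := by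
    intro w hw u hu h
    funext i
    rcases eq_or_ne i i₀ with rfl | hi
    · exact wordIndex_injOn hM n ((hmem hw).1 i) ((hmem hu).1 i) h
    · rw [(hmem hw).2.2 i hi, (hmem hu).2.2 i hi]
  rw [← Finset.card_image_of_injOn hinj]
  refine card_le_of_forall_le_add ?_
  simp only [Finset.forall_mem_image]
  intro w hw u hu
  have hdiff : ∑ i, a i * (wordIndex (w i) : ℝ) - ∑ i, a i * (wordIndex (u i) : ℝ) =
      a i₀ * ((wordIndex (w i₀) : ℝ) - wordIndex (u i₀)) := by
    rw [← Finset.sum_sub_distrib, Fintype.sum_eq_single i₀ fun i hi => ?_, mul_sub]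
    rw [(hmem hw).2.2 i hi, (hmem hu).2.2 i hi, sub_self]
  have hscaled : |a i₀| * |(wordIndex (w i₀) : ℝ) - wordIndex (u i₀)| ≤ |a i₀| * D := by
    rw [← abs_mul, ← hdiff, abs_le]
    have hw' := abs_le.1 (hmem hw).2.1
    have hu' := abs_le.1 (hmem hu).2.1
    constructor <;> linarith [hw'.1, hw'.2, hu'.1, hu'.2]
  have hle : (wordIndex (w i₀) : ℝ) - wordIndex (u i₀) ≤ D :=
    (le_abs_self _).trans (le_of_mul_le_mul_left hscaled (abs_pos.2 ha))
  exact_mod_cast sub_le_iff_le_add'.1 hle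

lemma card_filter_slabSection_le (hM : 1 < M) {n D : ℕ} {a : ι → ℝ} {c r : ℝ} {i₀ : ι}
    (ha : a i₀ ≠ 0) (hD : 2 * r ≤ |a i₀| * D) {J : Finset ι} {v u : ι → List (Fin M)}
    (hu : u ∈ slabSection M n a c r J v) :
    #{w ∈ slabSection M n a c r J v | ∀ i ∈ J.erase i₀, w i = u i} ≤ D + 1 := by
  refine (Finset.card_le_card fun w hw => ?_).trans
    (card_slabSection_singleton_le (n := n) (c := c) hM ha hD u)
  rw [Finset.mem_filter, mem_slabSection] at hw
  refine mem_slabSection.2 ⟨hw.1.1, hw.1.2.1, fun i hi => ?_⟩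
  by_cases hiJ : i ∈ J
  · exact hw.2 i (Finset.mem_erase.2 ⟨Finset.notMem_singleton.1 hi, hiJ⟩)
  · rw [hw.1.2.2 i hiJ, (mem_slabSection.1 hu).2.2 i hiJ]

lemma exists_sum_slabSection_prod_pow_newPrefixCount_le (hM : 2 ≤ M) {p a : ι → ℝ}
    {J : Finset ι} (hJ : J.Nonempty) (hMp : ∀ i ∈ J, 1 ≤ M * p i)
    (hprod : (M : ℝ) ^ (#J - 1) * ∏ i ∈ J, p i < 1) (ha : ∀ i, a i ≠ 0) (r : ℝ) :
    ∃ K > 0, ∀ n c, ∀ v : ι → List (Fin M), ∀ T : ι → Finset (List (Fin M)),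
      (∀ i ∈ J, #(T i) < n) →
      ∑ w ∈ slabSection M n a c r J v, ∏ i ∈ J, p i ^ newPrefixCount (T i) (w i) ≤
        K * n ^ (#J - 1) := by
  have : Nonempty (Fin M) := ⟨⟨0, by omega⟩⟩
  set Q : ℝ := (M : ℝ) ^ (#J - 1) * ∏ i ∈ J, p i
  have hQ : 0 ≤ Q := mul_nonneg (by positivity) <| Finset.prod_nonneg fun i hi =>
    (pos_of_mul_pos_right (zero_lt_one.trans_le (hMp i hi)) M.cast_nonneg).le
  set q : ℝ := Q ^ ((#J : ℝ)⁻¹)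
  have hq0 : 0 ≤ q := Real.rpow_nonneg hQ _
  have hq1 : q < 1 := Real.rpow_lt_one hQ hprod (by simpa using hJ.card_pos)
  have hqQ : q ^ #J = Q := Real.rpow_inv_natCast_pow hQ hJ.card_pos.ne'
  obtain ⟨D, hD⟩ := exists_nat_forall_le_abs_mul ha (2 * r)
  refine ⟨(D + 1) * ((1 - q)⁻¹) ^ #J, by have := sub_pos.2 hq1; positivity,
    fun n c v T hT => ?_⟩
  have hbound := sum_prod_pow_newPrefixCount_le (W := slabSection M n a c r J v) (B := D + 1) hJ
    (fun w hw i _ => (mem_slabSection.1 hw).1 i)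
    (fun i₀ _ u hu => by convert card_filter_slabSection_le hM (ha i₀) (hD i₀) hu)
    (by simpa only [Fintype.card_fin] using hMp) hq0 hq1
    (by rw [Fintype.card_fin, hqQ]) hT
  exact hbound.trans_eq (by push_cast; ring)

end Slabs

section Moments

variable {Ω ι : Type*} [MeasurableSpace Ω] {μ : Measure Ω} [DecidableEq ι] {A : ι → Set Ω}
  {W : Finset ι} {R : ℕ} {K : ℝ≥0∞}

lemma setLIntegral_sum_indicator_pow_le (hA : ∀ i, MeasurableSet (A i))
    (hK : ∀ s : Finset ι, #s < R → ∑ i ∈ W, μ (⋂ v ∈ insert i s, A v) ≤ K * μ (⋂ v ∈ s, A v))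
    (r : ℕ) (s : Finset ι) (hs : #s + r ≤ R) :
    ∫⁻ ω in ⋂ v ∈ s, A v, (∑ i ∈ W, (A i).indicator 1 ω) ^ r ∂μ ≤ K ^ r * μ (⋂ v ∈ s, A v) := by
  induction r generalizing s with
  | zero => simp
  | succ r ih =>
    have hmeas : Measurable fun ω => ∑ i ∈ W, (A i).indicator (1 : Ω → ℝ≥0∞) ω :=
      Finset.measurable_fun_sum W fun i _ => measurable_one.indicator (hA i)
    calc ∫⁻ ω in ⋂ v ∈ s, A v, (∑ i ∈ W, (A i).indicator 1 ω) ^ (r + 1) ∂μ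
        = ∑ i ∈ W, ∫⁻ ω in ⋂ v ∈ s, A v,
            (A i).indicator (fun ω => (∑ i ∈ W, (A i).indicator 1 ω) ^ r) ω ∂μ := by
          rw [← lintegral_finsetSum W fun i _ => (hmeas.pow_const r).indicator (hA i)]
          refine lintegral_congr fun ω => ?_
          rw [pow_succ, Finset.mul_sum]
          refine Finset.sum_congr rfl fun i _ => ?_
          by_cases hi : ω ∈ A i <;> simp [hi]
      _ = ∑ i ∈ W, ∫⁻ ω in ⋂ v ∈ insert i s, A v, (∑ i ∈ W, (A i).indicator 1 ω) ^ r ∂μ := by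
          refine Finset.sum_congr rfl fun i _ => ?_
          rw [lintegral_indicator (hA i), Measure.restrict_restrict (hA i),
            Finset.set_biInter_insert]
      _ ≤ ∑ i ∈ W, K ^ r * μ (⋂ v ∈ insert i s, A v) :=
          Finset.sum_le_sum fun i _ => ih _ (by have := Finset.card_insert_le i s; omega)
      _ ≤ K ^ r * (K * μ (⋂ v ∈ s, A v)) := by
          rw [← Finset.mul_sum]
          gcongr
          exact hK s (by omega)
      _ = K ^ (r + 1) * μ (⋂ v ∈ s, A v) := by rw [pow_succ, mul_assoc]

open Classical in
lemma pow_mul_measure_mul_le_card_le (hA : ∀ i, MeasurableSet (A i))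
    (hK : ∀ s : Finset ι, #s < R → ∑ i ∈ W, μ (⋂ v ∈ insert i s, A v) ≤ K * μ (⋂ v ∈ s, A v))
    (hK0 : K ≠ 0) (hKtop : K ≠ ∞) (b : ℝ≥0∞) :
    b ^ R * μ {ω | K * b ≤ #{i ∈ W | ω ∈ A i}} ≤ μ univ := by
  have hmeas : Measurable fun ω => ∑ i ∈ W, (A i).indicator (1 : Ω → ℝ≥0∞) ω :=
    Finset.measurable_fun_sum W fun i _ => measurable_one.indicator (hA i)
  have hcard (ω : Ω) : (#{i ∈ W | ω ∈ A i} : ℝ≥0∞) = ∑ i ∈ W, (A i).indicator 1 ω := by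
    simp [indicator_apply]
  have hmoment := setLIntegral_sum_indicator_pow_le hA hK R ∅ (by simp)
  simp only [Finset.notMem_empty, iInter_of_empty, iInter_univ, Measure.restrict_univ] at hmoment
  refine (ENNReal.mul_le_mul_iff_right (pow_ne_zero R hK0) (ENNReal.pow_ne_top hKtop)).1 ?_
  calc K ^ R * (b ^ R * μ {ω | K * b ≤ #{i ∈ W | ω ∈ A i}})
      ≤ (K * b) ^ R * μ {ω | (K * b) ^ R ≤ (∑ i ∈ W, (A i).indicator 1 ω) ^ R} := by
        rw [← mul_assoc, ← mul_pow]
        refine mul_le_mul_right (measure_mono fun ω hω => ?_) _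
        exact pow_le_pow_left' (hω.out.trans_eq (hcard ω)) R
    _ ≤ ∫⁻ ω, (∑ i ∈ W, (A i).indicator 1 ω) ^ R ∂μ :=
        mul_meas_ge_le_lintegral (hmeas.pow_const R) _
    _ ≤ K ^ R * μ univ := hmoment

end Moments

section Retention

variable {d M : ℕ} {J : Finset (Fin d)}

/-- The event that, for every `i ∈ J`, the interval of the word `w i` is retained in the `i`-th
percolation. -/
def retainedEvent (J : Finset (Fin d)) (w : Fin d → List (Fin M)) : Set (Fin d → Perc1 M) :=
  {ω | ∀ i ∈ J, Retained1 M (ω i) (w i)}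

lemma measurableSet_retainedEvent (w : Fin d → List (Fin M)) :
    MeasurableSet (retainedEvent J w) := by
  simp only [retainedEvent, Retained1, ofPred_forall]
  refine Finset.measurableSet_biInter J fun i _ => .iInter fun u => .iInter fun hu => .iInter
    fun _ => ?_
  have hlabel : Measurable fun ω : Fin d → Perc1 M => ω i ⟨u, hu⟩ :=
    (measurable_pi_apply _).comp (measurable_pi_apply i)
  exact hlabel (measurableSet_singleton true)

variable {p : Fin d → ℝ} {P : Measure (Fin d → Perc1 M)}

lemma measure_biInter_retainedEvent (hP : IsIndepBernoulli1 d M p P)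
    (s : Finset (Fin d → List (Fin M))) :
    P (⋂ w ∈ s, retainedEvent J w) =
      ∏ i ∈ J, ENNReal.ofReal (p i) ^ #(nonemptyPrefixes (s.image (· i))) := by
  let S : Finset (Fin d × Word1 M) :=
    (J.sigma fun i => nonemptyPrefixes (s.image (· i))).map
      (Equiv.sigmaEquivProd (Fin d) (Word1 M)).toEmbedding
  have hevent : ⋂ w ∈ s, retainedEvent J w = {ω | ∀ q ∈ S, ω q.1 q.2 = true} := by
    ext ω
    simp only [retainedEvent, Retained1, mem_iInter, mem_ofPred_eq, S, Finset.mem_map_equiv,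
      Finset.mem_sigma, mem_nonemptyPrefixes, Finset.mem_image]
    constructor
    · rintro h ⟨i, u, hu⟩ ⟨hi, _, ⟨w, hw, rfl⟩, hpre⟩
      exact h w hw i hi u hu hpre
    · exact fun h w hw i hi u hu hpre => h (i, ⟨u, hu⟩) ⟨hi, _, ⟨w, hw, rfl⟩, hpre⟩
  rw [hevent, hP.2 S fun _ => true, Finset.prod_map, Finset.prod_sigma]
  simp

lemma measure_biInter_insert_retainedEvent (hp : ∀ i ∈ J, 0 ≤ p i)
    (hP : IsIndepBernoulli1 d M p P) (w : Fin d → List (Fin M))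
    (s : Finset (Fin d → List (Fin M))) :
    P (⋂ v ∈ insert w s, retainedEvent J v) =
      ENNReal.ofReal (∏ i ∈ J, p i ^ newPrefixCount (s.image (· i)) (w i)) *
        P (⋂ v ∈ s, retainedEvent J v) := by
  rw [measure_biInter_retainedEvent hP, measure_biInter_retainedEvent hP,
    ENNReal.ofReal_prod_of_nonneg fun i hi => pow_nonneg (hp i hi) _, ← Finset.prod_mul_distrib]
  refine Finset.prod_congr rfl fun i hi => ?_
  rw [Finset.image_insert, card_nonemptyPrefixes_insert, pow_add, ENNReal.ofReal_pow (hp i hi)]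

open Classical in
lemma pow_mul_measure_mul_le_card_retained_le (hp : ∀ i ∈ J, 0 ≤ p i)
    (hP : IsIndepBernoulli1 d M p P) {W : Finset (Fin d → List (Fin M))} {R : ℕ} {K : ℝ}
    (hK0 : 0 < K)
    (hK : ∀ T : Fin d → Finset (List (Fin M)), (∀ i ∈ J, #(T i) < R) →
      ∑ w ∈ W, ∏ i ∈ J, p i ^ newPrefixCount (T i) (w i) ≤ K) (b : ℝ≥0∞) :
    b ^ R * P {ω | ENNReal.ofReal K * b ≤ #{w ∈ W | ω ∈ retainedEvent J w}} ≤ 1 := by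
  have := hP.1
  rw [← measure_univ (μ := P)]
  refine pow_mul_measure_mul_le_card_le measurableSet_retainedEvent (fun s hs => ?_)
    (ENNReal.ofReal_pos.2 hK0).ne' ENNReal.ofReal_ne_top b
  simp only [measure_biInter_insert_retainedEvent hp hP]
  rw [← Finset.sum_mul, ← ENNReal.ofReal_sum_of_nonneg fun w _ => Finset.prod_nonneg fun i hi =>
    pow_nonneg (hp i hi) _]
  gcongr
  exact hK _ fun i _ => Finset.card_image_le.trans_lt hs

open Classical in
lemma measure_exists_lt_card_retained_le (hM : M ≠ 0) (hp : ∀ i ∈ J, 0 ≤ p i)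
    (hP : IsIndepBernoulli1 d M p P)
    {W : (Fin d → List (Fin M)) → Finset (Fin d → List (Fin M))} {n : ℕ} {K : ℝ} (hK0 : 0 < K)
    (hK : ∀ v, ∀ T : Fin d → Finset (List (Fin M)), (∀ i ∈ J, #(T i) < n) →
      ∑ w ∈ W v, ∏ i ∈ J, p i ^ newPrefixCount (T i) (w i) ≤ K) :
    P {ω | ∃ v : Fin d → List (Fin M), (∀ i, (v i).length = n) ∧
      K * (2 * M ^ d) < #{w ∈ W v | ω ∈ retainedEvent J w}} ≤ 2⁻¹ ^ n := by
  set b : ℝ≥0∞ := 2 * M ^ d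
  set V : Finset (Fin d → List (Fin M)) := Fintype.piFinset fun _ => wordsOfLength (Fin M) n
  have hsub : {ω | ∃ v : Fin d → List (Fin M), (∀ i, (v i).length = n) ∧
      K * (2 * M ^ d) < #{w ∈ W v | ω ∈ retainedEvent J w}} ⊆
      ⋃ v ∈ V, {ω | ENNReal.ofReal K * b ≤ #{w ∈ W v | ω ∈ retainedEvent J w}} := by
    rintro ω ⟨v, hv, hlt⟩
    refine mem_biUnion (x := v) (Fintype.mem_piFinset.2 fun i => mem_wordsOfLength.2 (hv i)) ?_
    have hle := ENNReal.ofReal_le_ofReal hlt.le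
    rwa [ENNReal.ofReal_mul hK0.le, ENNReal.ofReal_mul zero_le_two, ENNReal.ofReal_natCast,
      ENNReal.ofReal_pow M.cast_nonneg, ENNReal.ofReal_natCast, ENNReal.ofReal_ofNat] at hle
  calc P _ ≤ ∑ v ∈ V, P {ω | ENNReal.ofReal K * b ≤ #{w ∈ W v | ω ∈ retainedEvent J w}} :=
        (measure_mono hsub).trans (measure_biUnion_finset_le V _)
    _ ≤ ∑ _v ∈ V, (b ^ n)⁻¹ := by
        gcongr with v _
        rw [ENNReal.le_inv_iff_mul_le, mul_comm]
        exact pow_mul_measure_mul_le_card_retained_le hp hP hK0 (hK v) b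
    _ = 2⁻¹ ^ n := by
        have hM0 : (M : ℝ≥0∞) ^ (d * n) ≠ 0 := pow_ne_zero _ (Nat.cast_ne_zero.2 hM)
        have hMtop : (M : ℝ≥0∞) ^ (d * n) ≠ ∞ := ENNReal.pow_ne_top (ENNReal.natCast_ne_top M)
        have hV : (#V : ℝ≥0∞) = M ^ (d * n) := by
          simp [V, card_wordsOfLength, pow_mul, pow_right_comm]
        rw [Finset.sum_const, nsmul_eq_mul, hV, mul_pow, ← pow_mul,
          ENNReal.mul_inv (.inr hMtop) (.inr hM0), mul_left_comm,
          ENNReal.mul_inv_cancel hM0 hMtop, mul_one, ENNReal.inv_pow]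

end Retention

section DependentCubes

variable {d M : ℕ} {p a : Fin d → ℝ} {P : Measure (Fin d → Perc1 M)}

open Classical in
lemma ae_eventually_card_retained_slabSection_le (hM : 2 ≤ M) {J : Finset (Fin d)} (hJ : J.Nonempty)
    (hMp : ∀ i ∈ J, 1 ≤ M * p i) (hprod : (M : ℝ) ^ (#J - 1) * ∏ i ∈ J, p i < 1)
    (hP : IsIndepBernoulli1 d M p P) (ha : ∀ i, a i ≠ 0) (r : ℝ) :
    ∃ C > 0, ∀ᵐ ω ∂P, ∀ᶠ n : ℕ in Filter.atTop, ∀ v : Fin d → List (Fin M),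
      (∀ i, (v i).length = n) →
      (#{w ∈ slabSection M n a (∑ i, a i * wordIndex (v i)) r J v |
        ω ∈ retainedEvent J w} : ℝ) ≤ C * n ^ (#J - 1) := by
  have := hP.1
  obtain ⟨K, hK0, hK⟩ := exists_sum_slabSection_prod_pow_newPrefixCount_le hM hJ hMp hprod ha r
  have hp : ∀ i ∈ J, 0 ≤ p i := fun i hi =>
    (pos_of_mul_pos_right (zero_lt_one.trans_le (hMp i hi)) M.cast_nonneg).le
  have hbad (n : ℕ) : P {ω | ∃ v : Fin d → List (Fin M), (∀ i, (v i).length = n) ∧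
      K * n ^ (#J - 1) * (2 * M ^ d) <
        #{w ∈ slabSection M n a (∑ i, a i * wordIndex (v i)) r J v |
          ω ∈ retainedEvent J w}} ≤ 2⁻¹ ^ n := by
    rcases n.eq_zero_or_pos with rfl | hn
    · exact prob_le_one.trans_eq (pow_zero _).symm
    · exact measure_exists_lt_card_retained_le (by omega) hp hP (by positivity)
        fun v => hK n _ v
  have hsummable : ∑' n : ℕ, (2⁻¹ : ℝ≥0∞) ^ n ≠ ∞ := by simp [ENNReal.tsum_geometric]
  refine ⟨K * (2 * M ^ d), by positivity, ?_⟩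
  filter_upwards [ae_eventually_notMem (ne_top_of_le_ne_top hsummable (ENNReal.tsum_le_tsum hbad))]
    with ω hω
  filter_upwards [hω] with n hn v hv
  rw [mul_right_comm]
  exact not_lt.1 fun hlt => hn ⟨v, hv, hlt⟩

lemma mem_slabSection_of_nonempty_inter (hM : M ≠ 0) {n : ℕ} {t : ℝ} {v w : Fin d → List (Fin M)}
    (hv : ∀ i, (v i).length = n) (hvt : (Hplane d a t ∩ prodCube d M v).Nonempty)
    (hw : ∀ i, (w i).length = n) (hwt : (Hplane d a t ∩ prodCube d M w).Nonempty) {j : Fin d}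
    (hj : w j = v j) :
    w ∈ slabSection M n a (∑ i, a i * wordIndex (v i)) (2 * ∑ i, |a i|) (Finset.univ.erase j)
      v := by
  refine mem_slabSection.2 ⟨hw, ?_, fun i hi => ?_⟩
  · have hw' := abs_sum_wordIndex_sub_le hM hw hwt
    have hv' := abs_sum_wordIndex_sub_le hM hv hvt
    rw [abs_sub_comm] at hv'
    exact (abs_sub_le _ (t * (M : ℝ) ^ n) _).trans (by linarith)
  · obtain rfl : i = j := by simpa using hi
    exact hj

theorem dependent_cube_count_general (hd : 2 ≤ d) (hM : 2 ≤ M) (hMp : ∀ i, 1 ≤ M * p i)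
    (hprod : ∀ j, ∏ i ∈ Finset.univ.erase j, p i < (M : ℝ) ^ (2 - (d : ℤ)))
    (hP : IsIndepBernoulli1 d M p P) (ha : ∀ i, a i ≠ 0) :
    ∃ C > 0, ∀ᵐ ω ∂P, ∃ N : ℕ, ∀ n > N, ∀ t : ℝ, ∀ w : Fin d → List (Fin M),
      (∀ i, (w i).length = n) → (Hplane d a t ∩ prodCube d M w).Nonempty →
      ({w' : Fin d → List (Fin M) |
          (∀ i, (w' i).length = n ∧ Retained1 M (ω i) (w' i)) ∧ w' ≠ w ∧
          (Hplane d a t ∩ prodCube d M w').Nonempty ∧ ∃ i, w' i = w i}.ncard : ℝ) ≤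
        C * (n : ℝ) ^ (d - 2) := by
  classical
  have : Nonempty (Fin d) := ⟨⟨0, by omega⟩⟩
  have hcard (j : Fin d) : #(Finset.univ.erase j) = d - 1 := by simp
  have hsubcritical (j : Fin d) : (M : ℝ) ^ (d - 1 - 1) * ∏ i ∈ Finset.univ.erase j, p i < 1 := by
    have hexp : 2 - (d : ℤ) = -((d - 1 - 1 : ℕ) : ℤ) := by omega
    rw [← lt_inv_mul_iff₀ (by positivity), mul_one, ← zpow_natCast, ← zpow_neg, ← hexp]
    exact hprod j
  choose C hC hsection using fun j => ae_eventually_card_retained_slabSection_le hM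
    (Finset.card_pos.1 (by rw [hcard j]; omega)) (fun i _ => hMp i)
    (by rw [hcard]; exact hsubcritical j) hP ha (2 * ∑ i, |a i|)
  refine ⟨∑ j, C j, Finset.sum_pos (fun j _ => hC j) Finset.univ_nonempty, ?_⟩
  filter_upwards [ae_all_iff.2 hsection] with ω hω
  obtain ⟨N, hN⟩ := Filter.eventually_atTop.1 (Filter.eventually_all.2 hω)
  refine ⟨N, fun n hn t w hw hwt => ?_⟩
  set F : Fin d → Finset (Fin d → List (Fin M)) := fun j =>
    {w' ∈ slabSection M n a (∑ i, a i * wordIndex (w i)) (2 * ∑ i, |a i|) (Finset.univ.erase j) w |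
      ω ∈ retainedEvent (Finset.univ.erase j) w'}
  calc (Set.ncard _ : ℝ) ≤ #(Finset.univ.biUnion F) := by
        rw [← Set.ncard_coe_finset]
        refine Nat.cast_le.2 (Set.ncard_le_ncard ?_)
        rintro w' ⟨hw', -, hwt', j, hj⟩
        exact Finset.mem_biUnion.2 ⟨j, Finset.mem_univ j, Finset.mem_filter.2
          ⟨mem_slabSection_of_nonempty_inter (by omega) hw hwt (fun i => (hw' i).1) hwt' hj,
            fun i _ => (hw' i).2⟩⟩
    _ ≤ ∑ j, (#(F j) : ℝ) := by exact_mod_cast Finset.card_biUnion_le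
    _ ≤ ∑ j, C j * (n : ℝ) ^ (d - 2) := Finset.sum_le_sum fun j _ => by
        simpa only [hcard, Nat.sub_sub] using hN n hn.le j w hw
    _ = (∑ j, C j) * (n : ℝ) ^ (d - 2) := (Finset.sum_mul _ _ _).symm

lemma one_lt_mul_of_zpow_lt_prod (hM : 0 < M) (hp : ∀ i, 0 < p i)
    (hprod : (M : ℝ) ^ (1 - (d : ℤ)) < ∏ i, p i) {j : Fin d}
    (hj : ∏ i ∈ Finset.univ.erase j, p i < (M : ℝ) ^ (2 - (d : ℤ))) : 1 < M * p j := by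
  have hM' : (0 : ℝ) < M := Nat.cast_pos.2 hM
  have hz : (0 : ℝ) < (M : ℝ) ^ (1 - (d : ℤ)) := zpow_pos hM' _
  refine lt_of_mul_lt_mul_right ?_ hz.le
  calc 1 * (M : ℝ) ^ (1 - (d : ℤ)) < p j * ∏ i ∈ Finset.univ.erase j, p i := by
        rwa [one_mul, Finset.mul_prod_erase _ _ (Finset.mem_univ j)]
    _ < p j * (M : ℝ) ^ (2 - (d : ℤ)) := mul_lt_mul_of_pos_left hj (hp j)
    _ = M * p j * (M : ℝ) ^ (1 - (d : ℤ)) := by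
        rw [show 2 - (d : ℤ) = 1 - d + 1 by ring, zpow_add_one₀ hM'.ne']
        ring

lemma natCast_pow_sub_two_le_rpow {n : ℕ} (hd : 2 ≤ d) (hn : 1 ≤ n) {ε : ℝ} (hε : 0 ≤ ε) :
    (n : ℝ) ^ (d - 2) ≤ (n : ℝ) ^ ((1 + ε) * ((d : ℝ) - 2)) := by
  rw [← Real.rpow_natCast, Nat.cast_sub hd, Nat.cast_ofNat]
  have hd' : (0 : ℝ) ≤ d - 2 := sub_nonneg.2 (by exact_mod_cast hd)
  exact Real.rpow_le_rpow_of_exponent_le (by exact_mod_cast hn) (by nlinarith)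

end DependentCubes

/-- under `∏ pᵢ > M^{-(d-1)}` and `∏_{i≠j} pᵢ < M^{-(d-2)}`, there
is a constant `C` such that almost surely (given all `E⁽ⁱ⁾ ≠ ∅`), for all large
`n`, each cube of `Ẽ_n` met by a hyperplane `H_t` shares a coordinate word with
at most `C n^{(1+ε)(d-2)}` other cubes of `Ẽ_n` met by `H_t`. -/
theorem dependent_cube_count
    (d M : ℕ) (hd : 2 ≤ d) (hM : 2 ≤ M)
    (p : Fin d → ℝ) (hp0 : ∀ i, 0 < p i) (hp1 : ∀ i, p i ≤ 1)
    (hprod : (M : ℝ) ^ (1 - (d : ℤ)) < ∏ i, p i)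
    (hprod2 : ∀ j, ∏ i ∈ Finset.univ.erase j, p i < (M : ℝ) ^ (2 - (d : ℤ)))
    (P : Measure (Fin d → Perc1 M)) (hP : IsIndepBernoulli1 d M p P)
    (a : Fin d → ℝ) (ha : ∀ i, 0 < a i) (hnorm : ∑ i, a i ^ 2 = 1)
    (ε : ℝ) (hε : 0 < ε) :
    ∃ C : ℝ, ∀ᵐ ω ∂(ProbabilityTheory.cond P {ω | ∀ i, limit1 M (ω i) ≠ ∅}),
      ∃ N : ℕ, ∀ n > N, ∀ t : ℝ, ∀ w : Fin d → List (Fin M),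
        (∀ i, (w i).length = n ∧ Retained1 M (ω i) (w i)) →
        (Hplane d a t ∩ prodCube d M w).Nonempty →
        (({w' : Fin d → List (Fin M) |
            (∀ i, (w' i).length = n ∧ Retained1 M (ω i) (w' i)) ∧ w' ≠ w ∧
            (Hplane d a t ∩ prodCube d M w').Nonempty ∧ ∃ i, w' i = w i}.ncard : ℝ)) ≤
          C * (n : ℝ) ^ ((1 + ε) * ((d : ℝ) - 2)) := by
  obtain ⟨C, hC, hcount⟩ := dependent_cube_count_general hd hM
    (fun i => (one_lt_mul_of_zpow_lt_prod (by omega) hp0 hprod (hprod2 i)).le) hprod2 hP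
    fun i => (ha i).ne'
  refine ⟨C, cond_absolutelyContinuous.ae_le (hcount.mono fun ω ⟨N, hN⟩ => ⟨N, ?_⟩)⟩
  refine fun n hn t w hw hwt => (hN n hn t w (fun i => (hw i).1) hwt).trans ?_
  gcongr
  exact natCast_pow_sub_two_le_rpow hd (by omega) hε.le
end
end
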